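/- Let a ∈ X, let f, g : 𝔹 → ℂ be holomorphic, F(x) = a + f(x)·x and G(x) = a + g(x)·x for x ∈ 𝔹. Assume F is biholomorphic on 𝔹 and G is subordinate to F. Let m, N ∈ ℕ (m, N ≥ 1), let V : 𝔹 → 𝔹 be a Schwarz mapping such that 0 is a zero of order m of V, and let P_s(x) = (1/s!)·DˢG(0)(x,…,x) for s ≥ 1. If r ∈ (0,1) satisfies 4r^m/(1−r^m)² + 4r^N·(N(1−r)+r)/(1−r)² ≤ 1, then for every x with ‖x‖ = r, ‖G(V(x))‖ + Σ_{s≥N} ‖P_s(x)‖ ≤ ‖F(0)‖ + dist(F(0), ∂F(𝔹)), where dist(F(0), ∂F(𝔹)) is the distance from F(0) to the boundary of the image F(𝔹). -/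

import Mathlib

/-!
For a unit vector `u` we have `F (ζu) = a + f(ζu) ζ • u`, so on the line `ℂu` the map `F` is a
univalent function `φ` of the disc with `φ'(0) = f 0`. The Schwarz mapping of the subordination
preserves each such line, so on `ℂu` the map `G` is a function subordinate to `φ`. By the growth
theorem and `‖V x‖ ≤ r ^ m`, by Rogosinski's bound `s |φ'(0)|` for the `s`-th coefficient of a
function subordinate to `φ`, and by the Koebe quarter theorem,
`‖G (V x)‖ ≤ ‖a‖ + ‖f 0‖ r ^ m / (1 - r ^ m) ^ 2`, `‖P_s x‖ ≤ ‖f 0‖ s r ^ s` and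
`‖f 0‖ / 4 ≤ dist (F 0, ∂F(𝔹))`; the condition on `r` is exactly what makes these three fit.

Rogosinski's bound contains de Branges' theorem. Write `φ(z) = φ'(0) z B(z) ^ 2`. By the
Lebedev–Milin inequality, Milin's inequality for the logarithmic coefficients of `φ` bounds the
partial sums of the squared coefficients of `B`; a Bessel argument carries these bounds over to
`B ∘ w` for a Schwarz function `w`, and Cauchy–Schwarz gives the coefficients of `φ ∘ w`.

Milin's inequality is proved by de Branges' method without the Loewner differential equation:
Koebe's square-root construction factors a bounded univalent function `z exp (-q z)` into finitely
many maps of the same form with `q 0` arbitrarily small, and composing with such a factor does not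
increase the weighted Milin functional, up to an error quadratic in `q 0`. The sign condition on
the weights holds because their generating polynomial `Xⁿ Uₙ(1 - y + y cos θ)`, `X = exp (iθ)`, is a
trace `tr Symⁿ(A D Aᵀ D')` with `A` a rotation and `D`, `D'` diagonal; this has nonnegative
coefficients.
-/

open Metric Set

noncomputable section

/-- A holomorphic map is biholomorphic on an open set `s` if it is holomorphic and injective
on `s` and admits a holomorphic inverse on the image `f '' s`. -/
def IsBiholoOn {E₁ E₂ : Type*} [NormedAddCommGroup E₁] [NormedSpace ℂ E₁]
    [NormedAddCommGroup E₂] [NormedSpace ℂ E₂] (f : E₁ → E₂) (s : Set E₁) : Prop :=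
  DifferentiableOn ℂ f s ∧ Set.InjOn f s ∧
    ∃ g : E₂ → E₁, DifferentiableOn ℂ g (f '' s) ∧ ∀ x ∈ s, g (f x) = x

/-- `G` is subordinate to `F` on the unit ball if `G = F ∘ W` for some Schwarz mapping `W`,
i.e. a holomorphic self-map of the ball fixing the origin. -/
def Subordinate {X : Type*} [NormedAddCommGroup X] [NormedSpace ℂ X]
    (G F : X → X) : Prop :=
  ∃ W : X → X, DifferentiableOn ℂ W (ball (0 : X) 1) ∧
    Set.MapsTo W (ball (0 : X) 1) (ball (0 : X) 1) ∧ W 0 = 0 ∧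
    ∀ x ∈ ball (0 : X) 1, G x = F (W x)

namespace BohrRogosinski

/-! ### Positivity of Weinstein's weights -/

section SymPow

open Polynomial Matrix

variable {R S : Type*} [CommRing R] [CommRing S]

/-- The `n`-th symmetric power of a `2 × 2` matrix: row `i` lists the coefficients of
`(aX + b)ⁱ(cX + d)ⁿ⁻ⁱ`, that is, of the image of the `i`-th monomial of a binary form of degree `n`
(dehomogenized) under the substitution given by the matrix. -/
def symPow (n : ℕ) (M : Matrix (Fin 2) (Fin 2) R) : Matrix (Fin (n + 1)) (Fin (n + 1)) R :=
  of fun i j =>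
    ((C (M 0 0) * X + C (M 0 1)) ^ (i : ℕ) * (C (M 1 0) * X + C (M 1 1)) ^ (n - i : ℕ)).coeff j

lemma symPow_map (f : R →+* S) (n : ℕ) (M : Matrix (Fin 2) (Fin 2) R) :
    symPow n (M.map f) = (symPow n M).map f := by
  ext i j
  simp only [symPow, of_apply, map_apply, ← coeff_map]
  simp

lemma sum_coeff_linear_mul_linear (a b c d x y : R) {n i : ℕ} (hi : i ≤ n) :
    ∑ j ∈ Finset.range (n + 1),
        ((C a * X + C b) ^ i * (C c * X + C d) ^ (n - i)).coeff j * x ^ j * y ^ (n - j) =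
      (a * x + b * y) ^ i * (c * x + d * y) ^ (n - i) := by
  have eval_homogenize (p : R[X]) (m : ℕ) : MvPolynomial.eval ![x, y] (p.homogenize m) =
      ∑ j ∈ Finset.range (m + 1), p.coeff j * x ^ j * y ^ (m - j) := by
    simp [homogenize, Finset.Nat.sum_antidiagonal_eq_sum_range_succ_mk, MvPolynomial.eval_monomial,
      Finsupp.prod_fintype, mul_assoc]
  have homogenize_pow (a b : R) (k : ℕ) : ((C a * X + C b) ^ k).homogenize k =
      (MvPolynomial.C a * MvPolynomial.X 0 + MvPolynomial.C b * MvPolynomial.X 1) ^ k := by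
    have h := homogenize_finsetProd (s := Finset.range k) (p := fun _ => C a * X + C b)
      (n := fun _ => 1) fun _ _ => natDegree_linear_le
    simpa using h
  have hdeg (a b : R) (k : ℕ) : ((C a * X + C b) ^ k).natDegree ≤ k := by compute_degree
  have hmul := homogenize_mul _ _ (hdeg a b i) (hdeg c d (n - i))
  rw [Nat.add_sub_cancel' hi] at hmul
  rw [← eval_homogenize, hmul, homogenize_pow, homogenize_pow]
  simp

lemma sum_symPow_mul (n : ℕ) (M : Matrix (Fin 2) (Fin 2) R) (x y : R) (i : Fin (n + 1)) :
    ∑ j, symPow n M i j * x ^ (j : ℕ) * y ^ (n - j : ℕ) =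
      (M 0 0 * x + M 0 1 * y) ^ (i : ℕ) * (M 1 0 * x + M 1 1 * y) ^ (n - i : ℕ) := by
  rw [← sum_coeff_linear_mul_linear _ _ _ _ _ _ i.is_le, Finset.sum_range]
  rfl

lemma symPow_mul (n : ℕ) (A B : Matrix (Fin 2) (Fin 2) R) :
    symPow n (A * B) = symPow n A * symPow n B := by
  ext i k
  have h := sum_symPow_mul n (A.map C) (C (B 0 0) * X + C (B 0 1)) (C (B 1 0) * X + C (B 1 1)) i
  have hlin (l : Fin 2) : C (A l 0) * (C (B 0 0) * X + C (B 0 1)) +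
      C (A l 1) * (C (B 1 0) * X + C (B 1 1)) = C ((A * B) l 0) * X + C ((A * B) l 1) := by
    simp only [mul_apply, Fin.sum_univ_two, map_add, map_mul]
    ring
  simp only [symPow_map, map_apply, hlin] at h
  rw [symPow, of_apply, ← h, finsetSum_coeff, mul_apply]
  simp only [mul_assoc, coeff_C_mul]
  rfl

lemma symPow_diagonal (n : ℕ) (a b : R) :
    symPow n (diagonal ![a, b]) =
      diagonal fun i : Fin (n + 1) => a ^ (i : ℕ) * b ^ (n - i : ℕ) := by
  ext i j
  have h : (C a * X) ^ (i : ℕ) * C b ^ (n - i : ℕ) =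
      C (a ^ (i : ℕ) * b ^ (n - i : ℕ)) * X ^ (i : ℕ) := by
    simp only [mul_pow, map_mul, map_pow]
    ring
  have hentry : symPow n (diagonal ![a, b]) i j =
      ((C a * X) ^ (i : ℕ) * C b ^ (n - i : ℕ)).coeff j := by
    simp [symPow]
  rw [hentry, h, coeff_C_mul, coeff_X_pow, diagonal_apply]
  simp only [mul_ite, mul_one, mul_zero, Fin.ext_iff, eq_comm]

lemma choose_mul_symPow_transpose (n : ℕ) (M : Matrix (Fin 2) (Fin 2) R) (i j : Fin (n + 1)) :
    (n.choose i : R) * symPow n M i j = n.choose j * symPow n Mᵀ j i := by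
  -- Both sides are the coefficient of `xʲuⁱ` in `(u(ax + b) + (cx + d))ⁿ`.
  let form : R[X][X] := C (C (M 0 0) * X + C (M 1 0)) * X + C (C (M 0 1) * X + C (M 1 1))
  have expand_rows : form ^ n = ∑ m ∈ Finset.range (n + 1), C (X ^ m * (n.choose m : R[X])) *
      ((C (M 0 0) * X + C (M 0 1)) ^ m * (C (M 1 0) * X + C (M 1 1)) ^ (n - m)).map C := by
    have hform : form =
        C X * (C (C (M 0 0)) * X + C (C (M 0 1))) + (C (C (M 1 0)) * X + C (C (M 1 1))) := by
      simp only [form, map_add, map_mul]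
      ring
    rw [hform, add_pow]
    refine Finset.sum_congr rfl fun m _ => ?_
    simp only [mul_pow, Polynomial.map_mul, Polynomial.map_pow, Polynomial.map_add, map_C, map_X,
      map_mul, map_pow, map_natCast]
    ring
  have expand_cols : form ^ n = ∑ m ∈ Finset.range (n + 1), C ((n.choose m : R[X]) *
      ((C (M 0 0) * X + C (M 1 0)) ^ m * (C (M 0 1) * X + C (M 1 1)) ^ (n - m))) * X ^ m := by
    rw [add_pow]
    refine Finset.sum_congr rfl fun m _ => ?_
    simp only [map_mul, map_pow, map_natCast, mul_pow]
    ring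
  have hcoeff := congrArg (fun p => (coeff p j).coeff i) (expand_rows.symm.trans expand_cols)
  have hrow (m : ℕ) (p : R[X]) : ((C (X ^ m * (n.choose m : R[X])) * p.map C).coeff j).coeff i =
      if (i : ℕ) = m then (n.choose m : R) * p.coeff j else 0 := by
    rw [coeff_C_mul, coeff_map, coeff_mul_C, mul_comm (X ^ m), ← C_eq_natCast, coeff_C_mul,
      coeff_X_pow]
    split_ifs <;> simp
  have hcol (m : ℕ) (p : R[X]) : ((C ((n.choose m : R[X]) * p) * X ^ m).coeff j).coeff i =
      if (j : ℕ) = m then (n.choose m : R) * p.coeff i else 0 := by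
    rw [coeff_C_mul, coeff_X_pow]
    split_ifs
    · rw [mul_one, ← C_eq_natCast, coeff_C_mul]
    · simp
  simpa only [finsetSum_coeff, hrow, hcol, Finset.sum_ite_eq, Finset.mem_range, Fin.is_lt,
    if_true, symPow, of_apply, transpose_apply] using hcoeff

lemma trace_symPow_zero (M : Matrix (Fin 2) (Fin 2) R) : (symPow 0 M).trace = 1 := by
  simp [symPow, trace]

lemma symPow_apply_zero_zero (n : ℕ) (M : Matrix (Fin 2) (Fin 2) R) :
    symPow n M 0 0 = M 1 1 ^ n := by
  simp [symPow, coeff_zero_eq_eval_zero]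

lemma symPow_apply_last_last (n : ℕ) (M : Matrix (Fin 2) (Fin 2) R) :
    symPow n M (Fin.last n) (Fin.last n) = M 0 0 ^ n := by
  have h := coeff_pow_of_natDegree_le (natDegree_linear_le (a := M 0 0) (b := M 0 1)) (m := n)
  simpa [symPow] using h

lemma trace_symPow_one (M : Matrix (Fin 2) (Fin 2) R) : (symPow 1 M).trace = M.trace := by
  rw [trace, Fin.sum_univ_two, trace_fin_two, add_comm]
  exact congrArg₂ (· + ·) (by simpa using symPow_apply_last_last 1 M)
    (by simpa using symPow_apply_zero_zero 1 M)

lemma symPow_succ_succ_apply (n : ℕ) (M : Matrix (Fin 2) (Fin 2) R) (i : Fin (n + 1)) :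
    symPow (n + 2) M i.succ.castSucc i.succ.castSucc =
      M 0 0 * symPow (n + 1) M i.castSucc i.castSucc + M 1 1 * symPow (n + 1) M i.succ i.succ -
        M.det * symPow n M i i := by
  obtain ⟨k, hk⟩ : ∃ k, n = i + k := Nat.exists_eq_add_of_le i.is_le
  have h₁ : n - i = k := by omega
  have h₂ : n + 1 - i = k + 1 := by omega
  have h₃ : n + 1 - (i + 1) = k := by omega
  have h₄ : n + 2 - (i + 1) = k + 1 := by omega
  simp only [symPow, of_apply, Fin.val_castSucc, Fin.val_succ, h₁, h₂, h₃, h₄, det_fin_two]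
  set P := (C (M 0 0) * X + C (M 0 1)) ^ (i : ℕ) * (C (M 1 0) * X + C (M 1 1)) ^ k with hP
  have expand₁ : (C (M 0 0) * X + C (M 0 1)) ^ (i + 1 : ℕ) * (C (M 1 0) * X + C (M 1 1)) ^ (k + 1) =
      C (M 0 0 * M 1 0) * (P * X * X) + C (M 0 0 * M 1 1 + M 0 1 * M 1 0) * (P * X) +
        C (M 0 1 * M 1 1) * P := by
    rw [hP]
    simp only [map_mul, map_add]
    ring
  have expand₂ : (C (M 0 0) * X + C (M 0 1)) ^ (i : ℕ) * (C (M 1 0) * X + C (M 1 1)) ^ (k + 1) =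
      C (M 1 0) * (P * X) + C (M 1 1) * P := by
    rw [hP]
    ring
  have expand₃ : (C (M 0 0) * X + C (M 0 1)) ^ (i + 1 : ℕ) * (C (M 1 0) * X + C (M 1 1)) ^ k =
      C (M 0 0) * (P * X) + C (M 0 1) * P := by
    rw [hP]
    ring
  rw [expand₁, expand₂, expand₃]
  simp only [coeff_add, coeff_C_mul, coeff_mul_X]
  ring

lemma trace_symPow_add_two (n : ℕ) (M : Matrix (Fin 2) (Fin 2) R) :
    (symPow (n + 2) M).trace =
      M.trace * (symPow (n + 1) M).trace - M.det * (symPow n M).trace := by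
  have split₁ : (symPow (n + 2) M).trace = M 1 1 ^ (n + 2) +
      ∑ i : Fin (n + 1), symPow (n + 2) M i.succ.castSucc i.succ.castSucc + M 0 0 ^ (n + 2) := by
    rw [trace, Fin.sum_univ_castSucc, Fin.sum_univ_succ]
    simp only [diag_apply, symPow_apply_last_last, Fin.castSucc_zero, symPow_apply_zero_zero]
  have split₂ : (symPow (n + 1) M).trace =
      ∑ i : Fin (n + 1), symPow (n + 1) M i.castSucc i.castSucc + M 0 0 ^ (n + 1) := by
    rw [trace, Fin.sum_univ_castSucc]
    simp only [diag_apply, symPow_apply_last_last]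
  have split₃ : (symPow (n + 1) M).trace =
      M 1 1 ^ (n + 1) + ∑ i : Fin (n + 1), symPow (n + 1) M i.succ i.succ := by
    rw [trace, Fin.sum_univ_succ]
    simp only [diag_apply, symPow_apply_zero_zero]
  have hsum : ∑ i : Fin (n + 1), symPow (n + 2) M i.succ.castSucc i.succ.castSucc =
      M 0 0 * ∑ i : Fin (n + 1), symPow (n + 1) M i.castSucc i.castSucc +
        M 1 1 * ∑ i : Fin (n + 1), symPow (n + 1) M i.succ i.succ -
          M.det * (symPow n M).trace := by
    simp only [symPow_succ_succ_apply, Finset.sum_sub_distrib, Finset.sum_add_distrib,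
      Finset.mul_sum, trace, diag_apply]
  rw [split₁, hsum, trace_fin_two, add_mul]
  nth_rewrite 1 [split₂]
  rw [split₃]
  ring

end SymPow

section WeinsteinPoly

open Polynomial Matrix

variable {R : Type*} [CommRing R]

/-- The homogenized Chebyshev polynomial of the second kind `xⁿ Uₙ(1 + u / (2x))`, expanded in
powers of `u`. -/
def chebyshevForm (u x : R) (n : ℕ) : R :=
  ∑ j ∈ Finset.range (n + 1), ((n + 1 + j).choose (2 * j + 1) : R) * u ^ j * x ^ (n - j)

lemma chebyshevForm_zero (u x : R) : chebyshevForm u x 0 = 1 := by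
  simp [chebyshevForm]

lemma chebyshevForm_one (u x : R) : chebyshevForm u x 1 = 2 * x + u := by
  simp [chebyshevForm, Finset.sum_range_succ]

lemma pow_mul_chebyshevForm (u x : R) (n d : ℕ) :
    x ^ d * chebyshevForm u x n = ∑ j ∈ Finset.range (n + d + 1),
      ((n + 1 + j).choose (2 * j + 1) : R) * u ^ j * x ^ (n + d - j) := by
  rw [chebyshevForm, Finset.mul_sum,
    ← Finset.sum_subset (Finset.range_mono (by omega : n + 1 ≤ n + d + 1))]
  · refine Finset.sum_congr rfl fun j hj => ?_
    have hexp : n + d - j = d + (n - j) := by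
      rw [Finset.mem_range] at hj
      omega
    rw [hexp, pow_add]
    ring
  · intro j _ hj
    rw [Finset.mem_range] at hj
    rw [Nat.choose_eq_zero_of_lt (by omega), Nat.cast_zero, zero_mul, zero_mul]

lemma choose_second_difference (n j : ℕ) :
    (n + 2).choose (j + 2) + n.choose (j + 2) = 2 * (n + 1).choose (j + 2) + n.choose j := by
  have h₁ := Nat.choose_succ_succ (n + 1) (j + 1)
  have h₂ := Nat.choose_succ_succ n (j + 1)
  have h₃ := Nat.choose_succ_succ n j
  simp only [Nat.succ_eq_add_one, add_assoc, Nat.reduceAdd] at *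
  omega

lemma chebyshevForm_add_two (u x : R) (n : ℕ) :
    chebyshevForm u x (n + 2) =
      (2 * x + u) * chebyshevForm u x (n + 1) - x ^ 2 * chebyshevForm u x n := by
  have h₀ := pow_mul_chebyshevForm u x n 2
  have h₁ := pow_mul_chebyshevForm u x (n + 1) 1
  have h₂ : u * chebyshevForm u x (n + 1) = ∑ j ∈ Finset.range (n + 2),
      ((n + 2 + j).choose (2 * j + 1) : R) * u ^ (j + 1) * x ^ (n + 2 - (j + 1)) := by
    rw [chebyshevForm, Finset.mul_sum]
    refine Finset.sum_congr rfl fun j _ => ?_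
    rw [Nat.add_sub_add_right (n + 1) 1 j]
    ring
  have h₃ : chebyshevForm u x (n + 2) = ∑ j ∈ Finset.range (n + 2 + 1),
      ((n + 2 + 1 + j).choose (2 * j + 1) : R) * u ^ j * x ^ (n + 2 - j) := rfl
  rw [Finset.sum_range_succ'] at h₀ h₁ h₃
  have hchoose (j : ℕ) : ((n + 2 + 1 + (j + 1)).choose (2 * (j + 1) + 1) : R) +
      (n + 1 + (j + 1)).choose (2 * (j + 1) + 1) =
        2 * (n + 1 + 1 + (j + 1)).choose (2 * (j + 1) + 1) + (n + 2 + j).choose (2 * j + 1) := by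
    have h := choose_second_difference (n + 1 + (j + 1)) (2 * j + 1)
    rw [show n + 2 + 1 + (j + 1) = n + 1 + (j + 1) + 2 by ring,
      show n + 1 + 1 + (j + 1) = n + 1 + (j + 1) + 1 by ring,
      show n + 2 + j = n + 1 + (j + 1) by ring]
    rw [show 2 * (j + 1) + 1 = 2 * j + 1 + 2 by ring]
    exact mod_cast congrArg (Nat.cast : ℕ → R) h
  have hsum : chebyshevForm u x (n + 2) + x ^ 2 * chebyshevForm u x n =
      2 * (x ^ 1 * chebyshevForm u x (n + 1)) + u * chebyshevForm u x (n + 1) := by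
    rw [h₀, h₁, h₂, h₃, add_add_add_comm, ← Finset.sum_add_distrib, mul_add, add_right_comm (2 * _),
      Finset.mul_sum, ← Finset.sum_add_distrib]
    congr 1
    · refine Finset.sum_congr rfl fun j _ => ?_
      linear_combination (u ^ (j + 1) * x ^ (n + 2 - (j + 1))) * hchoose j
    · simp only [add_zero, mul_zero, zero_add, Nat.choose_one_right, Nat.cast_add, Nat.cast_ofNat,
        Nat.cast_one, pow_zero, mul_one, tsub_zero]
      ring
  linear_combination hsum

/-- The generating polynomial of Weinstein's weights: `weinsteinPoly n y` is
`Xⁿ Uₙ((1 - y) + y cos θ)` with `X = e^{iθ}`. -/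
def weinsteinPoly (n : ℕ) (y : ℝ) : ℝ[X] := chebyshevForm (C y * (X - 1) ^ 2) X n

lemma weinsteinPoly_eq_trace (n : ℕ) {c s : ℝ} (h : c ^ 2 + s ^ 2 = 1) :
    weinsteinPoly n (s ^ 2) = (symPow n (!![C c, C s; -C s, C c] * diagonal ![X, 1] *
      (!![C c, C s; -C s, C c]ᵀ * diagonal ![1, X]))).trace := by
  set M : Matrix (Fin 2) (Fin 2) ℝ[X] := !![C c, C s; -C s, C c] * diagonal ![X, 1] *
    (!![C c, C s; -C s, C c]ᵀ * diagonal ![1, X]) with hMdef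
  have hM : M = !![C c ^ 2 * X + C s ^ 2, (C c * C s - C c * C s * X) * X;
      C c * C s - C c * C s * X, (C s ^ 2 * X + C c ^ 2) * X] := by
    have htranspose : !![C c, C s; -C s, C c]ᵀ = !![C c, -C s; C s, C c] := by
      ext i j : 1
      fin_cases i <;> fin_cases j <;> rfl
    rw [hMdef, htranspose, diagonal_vec2, diagonal_vec2, mul_fin_two, mul_fin_two,
      mul_fin_two]
    ext i j : 1
    fin_cases i <;> fin_cases j <;> simp <;> ring
  have hC : C c ^ 2 + C s ^ 2 = (1 : ℝ[X]) := by
    rw [← map_pow, ← map_pow, ← map_add, h, map_one]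
  have htrace : M.trace = 2 * X + C (s ^ 2) * (X - 1) ^ 2 := by
    rw [hM, trace_fin_two_of, map_pow]
    linear_combination (2 * X) * hC
  have hdet : M.det = X ^ 2 := by
    rw [hM, det_fin_two_of]
    linear_combination X ^ 2 * (C c ^ 2 + C s ^ 2 + 1) * hC
  unfold weinsteinPoly
  induction n using Nat.twoStepInduction with
  | zero => rw [chebyshevForm_zero, trace_symPow_zero]
  | one => rw [chebyshevForm_one, trace_symPow_one, htrace]
  | more n ih₁ ih₂ => rw [chebyshevForm_add_two, trace_symPow_add_two, ih₁, ih₂, htrace, hdet]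

lemma weinsteinPoly_eq_sum (n : ℕ) {c s : ℝ} (h : c ^ 2 + s ^ 2 = 1) :
    weinsteinPoly n (s ^ 2) = ∑ i : Fin (n + 1), ∑ j : Fin (n + 1),
      C ((n.choose i : ℝ) / n.choose j * symPow n !![c, s; -s, c] i j ^ 2) *
        X ^ (j + (n - i) : ℕ) := by
  have hrot : (!![C c, C s; -C s, C c] : Matrix (Fin 2) (Fin 2) ℝ[X]) =
      !![c, s; -s, c].map (C : ℝ →+* ℝ[X]) := by
    ext i j
    fin_cases i <;> fin_cases j <;> simp
  rw [weinsteinPoly_eq_trace n h, hrot]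
  simp only [← transpose_map, symPow_mul, symPow_map, symPow_diagonal, trace, diag_apply]
  refine Finset.sum_congr rfl fun i _ => ?_
  rw [mul_apply]
  refine Finset.sum_congr rfl fun j _ => ?_
  have hchoose : (n.choose j : ℝ) ≠ 0 := by exact_mod_cast (Nat.choose_pos j.is_le).ne'
  have htranspose : symPow n !![c, s; -s, c]ᵀ j i =
      (n.choose i : ℝ) / n.choose j * symPow n !![c, s; -s, c] i j := by
    rw [div_mul_eq_mul_div, choose_mul_symPow_transpose, mul_div_cancel_left₀ _ hchoose]
  simp only [mul_diagonal, map_apply, htranspose, map_mul, map_pow, one_pow]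
  ring

lemma coeff_weinsteinPoly_nonneg (n k : ℕ) {y : ℝ} (hy : y ∈ Icc 0 1) :
    0 ≤ (weinsteinPoly n y).coeff k := by
  have h : √(1 - y) ^ 2 + √y ^ 2 = 1 := by
    rw [Real.sq_sqrt hy.1, Real.sq_sqrt (sub_nonneg.2 hy.2), sub_add_cancel]
  rw [← Real.sq_sqrt hy.1, weinsteinPoly_eq_sum n h]
  simp only [finsetSum_coeff, coeff_C_mul, coeff_X_pow]
  refine Finset.sum_nonneg fun i _ => Finset.sum_nonneg fun j _ => ?_
  split_ifs <;> positivity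

lemma weinsteinPoly_one_mul (n : ℕ) :
    weinsteinPoly n 1 * (X + 1) = ∑ i ∈ Finset.range (2 * n + 2), X ^ i := by
  unfold weinsteinPoly
  induction n using Nat.twoStepInduction with
  | zero => simp [chebyshevForm_zero, Finset.sum_range_succ, add_comm]
  | one =>
    simp only [chebyshevForm_one, map_one, Finset.sum_range_succ, Finset.sum_range_zero]
    ring
  | more n ih₁ ih₂ =>
    have h : (2 * X + C 1 * (X - 1) ^ 2 : ℝ[X]) = X ^ 2 + 1 := by
      rw [map_one]
      ring
    rw [chebyshevForm_add_two, h, sub_mul, mul_assoc, mul_assoc, ih₁, ih₂]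
    simp only [mul_add, mul_one, Nat.reduceMul, Finset.sum_range_succ]
    ring

lemma coeff_weinsteinPoly_one_add {n k : ℕ} (hk : k ≤ n) :
    (weinsteinPoly n 1).coeff (n + k) + (weinsteinPoly n 1).coeff (n + (k + 1)) = 1 := by
  have h := congrArg (fun p => p.coeff (n + k + 1)) (weinsteinPoly_one_mul n)
  simp only [mul_add, mul_one, coeff_add, coeff_mul_X, finsetSum_coeff, coeff_X_pow,
    Finset.sum_ite_eq, Finset.mem_range] at h
  rw [if_pos (by omega)] at h
  exact h

end WeinsteinPoly

section Weights

open Polynomial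

/-- The coefficient `(-1)^{j+k} (2j choose j+k)` of `X^{j+k}` in `(X - 1)^{2j}`. -/
def signedChoose (j k : ℕ) : ℝ := (-1) ^ (j + k) * (2 * j).choose (j + k)

lemma signedChoose_of_lt {j k : ℕ} (h : j < k) : signedChoose j k = 0 := by
  rw [signedChoose, Nat.choose_eq_zero_of_lt (by omega), Nat.cast_zero, mul_zero]

lemma mul_signedChoose_add_succ (j k : ℕ) :
    j * (signedChoose j k + signedChoose j (k + 1)) =
      k * signedChoose j k - (k + 1) * signedChoose j (k + 1) := by
  rcases lt_or_ge j k with h | h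
  · simp [signedChoose_of_lt h, signedChoose_of_lt (h.trans k.lt_succ_self)]
  · have hchoose := congrArg (Nat.cast : ℕ → ℝ) (Nat.choose_succ_right_eq (2 * j) (j + k))
    rw [show 2 * j - (j + k) = j - k by omega] at hchoose
    push_cast [h] at hchoose
    rw [signedChoose, signedChoose, ← add_assoc, pow_succ]
    linear_combination (-1 : ℝ) ^ (j + k) * -hchoose

/-- Weinstein's weight `Λⁿ_k` at time `t`, as a polynomial in `y = e⁻ᵗ`. -/
def weinsteinWeight (n k : ℕ) (y : ℝ) : ℝ :=
  ∑ j ∈ Finset.range (n + 1), (n + 1 + j).choose (2 * j + 1) * signedChoose j k * y ^ j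

/-- De Branges' weight `τⁿ_k` at time `t`, as a polynomial in `y = e⁻ᵗ`; it solves
`dτⁿ_k/dt = -k Λⁿ_k`. The term `j = 0` vanishes for `k ≠ 0`, whatever the value of `k / 0`. -/
def deBrangesWeight (n k : ℕ) (y : ℝ) : ℝ :=
  ∑ j ∈ Finset.range (n + 1), (n + 1 + j).choose (2 * j + 1) * (k / j * signedChoose j k) * y ^ j

lemma weinsteinWeight_eq_coeff (n k : ℕ) (y : ℝ) :
    weinsteinWeight n k y = (weinsteinPoly n y).coeff (n + k) := by
  rw [weinsteinWeight, weinsteinPoly, chebyshevForm, finsetSum_coeff]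
  refine Finset.sum_congr rfl fun j hj => ?_
  have hjn : j ≤ n := Finset.mem_range_succ_iff.1 hj
  have hterm : ((n + 1 + j).choose (2 * j + 1) : ℝ[X]) * (C y * (X - 1) ^ 2) ^ j * X ^ (n - j) =
      C ((n + 1 + j).choose (2 * j + 1) * y ^ j : ℝ) * ((X + C (-1)) ^ (2 * j) * X ^ (n - j)) := by
    simp only [map_mul, map_natCast, map_pow, mul_pow, ← pow_mul, map_neg, map_one]
    ring
  rw [hterm, coeff_C_mul, show n + k = j + k + (n - j) by omega, coeff_mul_X_pow,
    coeff_X_add_C_pow, signedChoose]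
  rcases lt_or_ge j k with h | h
  · simp [Nat.choose_eq_zero_of_lt (by omega : 2 * j < j + k)]
  · have hsign : (-1 : ℝ) ^ (2 * j - (j + k)) = (-1) ^ (j + k) := by
      rw [show j + k = 2 * j - (j + k) + 2 * k by omega, pow_add, pow_mul, neg_one_sq, one_pow,
        mul_one]
      congr 1
      omega
    rw [hsign]
    ring

lemma weinsteinWeight_nonneg (n k : ℕ) {y : ℝ} (hy : y ∈ Icc 0 1) : 0 ≤ weinsteinWeight n k y :=
  weinsteinWeight_eq_coeff n k y ▸ coeff_weinsteinPoly_nonneg n _ hy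

lemma weinsteinWeight_of_lt {n k : ℕ} (h : n < k) (y : ℝ) : weinsteinWeight n k y = 0 := by
  refine Finset.sum_eq_zero fun j hj => ?_
  rw [signedChoose_of_lt ((Finset.mem_range_succ_iff.1 hj).trans_lt h), mul_zero, zero_mul]

lemma deBrangesWeight_of_lt {n k : ℕ} (h : n < k) (y : ℝ) : deBrangesWeight n k y = 0 := by
  refine Finset.sum_eq_zero fun j hj => ?_
  rw [signedChoose_of_lt ((Finset.mem_range_succ_iff.1 hj).trans_lt h), mul_zero, mul_zero,
    zero_mul]

lemma deBrangesWeight_sub_succ (n : ℕ) {k : ℕ} (hk : 1 ≤ k) (y : ℝ) :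
    deBrangesWeight n k y - deBrangesWeight n (k + 1) y =
      weinsteinWeight n k y + weinsteinWeight n (k + 1) y := by
  simp only [deBrangesWeight, weinsteinWeight, ← Finset.sum_sub_distrib, ← Finset.sum_add_distrib]
  refine Finset.sum_congr rfl fun j _ => ?_
  rcases j.eq_zero_or_pos with rfl | hj
  · simp [signedChoose_of_lt hk, signedChoose_of_lt k.succ_pos]
  · have hdiv : (k : ℝ) / j * signedChoose j k - (k + 1 : ℕ) / j * signedChoose j (k + 1) =
        signedChoose j k + signedChoose j (k + 1) := by
      push_cast
      field_simp
      linarith [mul_signedChoose_add_succ j k]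
    linear_combination ((n + 1 + j).choose (2 * j + 1) * y ^ j) * hdiv

lemma deBrangesWeight_eq_sum {n k : ℕ} (hk : 1 ≤ k) (hkn : k ≤ n) (y : ℝ) :
    deBrangesWeight n k y =
      ∑ i ∈ Finset.Ico k (n + 1), (weinsteinWeight n i y + weinsteinWeight n (i + 1) y) := by
  have htel := Finset.sum_Ico_sub (deBrangesWeight n · y) (hkn.trans n.le_succ)
  rw [deBrangesWeight_of_lt n.lt_succ_self, zero_sub, ← neg_eq_iff_eq_neg] at htel
  rw [← htel, ← Finset.sum_neg_distrib]
  refine Finset.sum_congr rfl fun i hi => ?_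
  rw [neg_sub, deBrangesWeight_sub_succ n (hk.trans (Finset.mem_Ico.1 hi).1)]

lemma deBrangesWeight_one {n k : ℕ} (hk : 1 ≤ k) (hkn : k ≤ n) :
    deBrangesWeight n k 1 = n + 1 - k := by
  rw [deBrangesWeight_eq_sum hk hkn, Finset.sum_congr rfl fun i hi => ?_, Finset.sum_const,
    Nat.card_Ico, nsmul_eq_mul, mul_one, Nat.cast_sub (by omega), Nat.cast_succ]
  rw [weinsteinWeight_eq_coeff, weinsteinWeight_eq_coeff,
    coeff_weinsteinPoly_one_add (Nat.lt_succ_iff.1 (Finset.mem_Ico.1 hi).2)]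

lemma deBrangesWeight_nonneg (n : ℕ) {k : ℕ} (hk : 1 ≤ k) {y : ℝ} (hy : y ∈ Icc 0 1) :
    0 ≤ deBrangesWeight n k y := by
  rcases lt_or_ge n k with hkn | hkn
  · rw [deBrangesWeight_of_lt hkn]
  · rw [deBrangesWeight_eq_sum hk hkn]
    exact Finset.sum_nonneg fun i _ =>
      add_nonneg (weinsteinWeight_nonneg n i hy) (weinsteinWeight_nonneg n (i + 1) hy)

lemma exists_abs_deBrangesWeight_le (n k : ℕ) :
    ∃ K, ∀ y ∈ Icc (0 : ℝ) 1, |deBrangesWeight n k y| ≤ K :=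
  have hcont : Continuous (deBrangesWeight n k) := by
    unfold deBrangesWeight
    fun_prop
  isCompact_Icc.exists_bound_of_continuousOn hcont.continuousOn

lemma abs_exp_neg_sub_one_add_le {x : ℝ} (hx : 0 ≤ x) : |Real.exp (-x) - 1 + x| ≤ x ^ 2 := by
  rw [abs_of_nonneg (by linarith [Real.add_one_le_exp (-x)])]
  rcases le_or_gt x 1 with hx1 | hx1
  · have h := Real.abs_exp_sub_one_sub_id_le (x := -x) (by rwa [abs_neg, abs_of_nonneg hx])
    linarith [(abs_le.1 h).2]
  · nlinarith [Real.exp_le_one_iff.2 (neg_nonpos.2 hx)]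

lemma deBrangesWeight_exp_add (n : ℕ) {k : ℕ} (hk : 1 ≤ k) (t h : ℝ) :
    deBrangesWeight n k (Real.exp (-(t + h))) - deBrangesWeight n k (Real.exp (-t)) +
        h * (k * weinsteinWeight n k (Real.exp (-t))) =
      ∑ j ∈ Finset.range (n + 1), (n + 1 + j).choose (2 * j + 1) * (k / j * signedChoose j k) *
        (Real.exp (-t) ^ j * (Real.exp (-(j * h)) - 1 + j * h)) := by
  simp only [deBrangesWeight, weinsteinWeight]
  rw [← Finset.sum_sub_distrib, Finset.mul_sum, Finset.mul_sum, ← Finset.sum_add_distrib]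
  refine Finset.sum_congr rfl fun j _ => ?_
  have hexp : Real.exp (-(t + h)) ^ j = Real.exp (-t) ^ j * Real.exp (-(j * h)) := by
    rw [← Real.exp_nat_mul, ← Real.exp_nat_mul, ← Real.exp_add]
    congr 1
    ring
  rw [hexp]
  rcases j.eq_zero_or_pos with rfl | hj
  · simp [signedChoose_of_lt hk]
  · field_simp

/-- A quantitative form of `dτⁿ_k/dt = -k Λⁿ_k`. -/
lemma exists_abs_deBrangesWeight_exp_add_le (n : ℕ) {k : ℕ} (hk : 1 ≤ k) :
    ∃ K, ∀ t h : ℝ, 0 ≤ t → 0 ≤ h →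
      |deBrangesWeight n k (Real.exp (-(t + h))) - deBrangesWeight n k (Real.exp (-t)) +
        h * (k * weinsteinWeight n k (Real.exp (-t)))| ≤ K * h ^ 2 := by
  refine ⟨∑ j ∈ Finset.range (n + 1),
    |(n + 1 + j).choose (2 * j + 1) * (k / j * signedChoose j k)| * j ^ 2, fun t h ht hh => ?_⟩
  rw [deBrangesWeight_exp_add n hk, Finset.sum_mul]
  refine (Finset.abs_sum_le_sum_abs _ _).trans (Finset.sum_le_sum fun j _ => ?_)
  have hpow : |Real.exp (-t) ^ j| ≤ 1 := by
    rw [abs_of_nonneg (by positivity)]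
    exact pow_le_one₀ (by positivity) (Real.exp_le_one_iff.2 (neg_nonpos.2 ht))
  have hrem : |Real.exp (-(j * h)) - 1 + j * h| ≤ j ^ 2 * h ^ 2 := by
    rw [← mul_pow]
    exact abs_exp_neg_sub_one_add_le (by positivity)
  rw [abs_mul, abs_mul (_ ^ _), mul_assoc]
  refine mul_le_mul_of_nonneg_left ?_ (abs_nonneg _)
  exact (mul_le_of_le_one_left (abs_nonneg _) hpow).trans hrem

end Weights

/-! ### Taylor coefficients and Carathéodory functions -/

section TaylorCoeff

/-- The `k`-th Taylor coefficient of `f` at the origin. -/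
def taylorCoeff (k : ℕ) (f : ℂ → ℂ) : ℂ := iteratedDeriv k f 0 / k.factorial

@[simp] lemma taylorCoeff_zero (f : ℂ → ℂ) : taylorCoeff 0 f = f 0 := by simp [taylorCoeff]

lemma taylorCoeff_one (f : ℂ → ℂ) : taylorCoeff 1 f = deriv f 0 := by simp [taylorCoeff]

lemma taylorCoeff_const_of_pos {k : ℕ} (hk : 0 < k) (c : ℂ) : taylorCoeff k (fun _ => c) = 0 := by
  simp [taylorCoeff, iteratedDeriv_const, hk.ne']

lemma taylorCoeff_id (k : ℕ) : taylorCoeff k (fun z => z) = if k = 1 then 1 else 0 := by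
  rcases k with _ | k
  · simp
  · have hderiv : deriv (fun z : ℂ => z) = fun _ => 1 := deriv_id'
    rw [taylorCoeff, iteratedDeriv_succ', hderiv, iteratedDeriv_const]
    rcases k with _ | k <;> simp

variable {f g : ℂ → ℂ} {R r : ℝ}

lemma taylorCoeff_congr (hR : 0 < R) (h : EqOn f g (ball 0 R)) (k : ℕ) :
    taylorCoeff k f = taylorCoeff k g := by
  have hfg : f =ᶠ[nhds 0] g := Filter.eventually_of_mem (ball_mem_nhds _ hR) h
  rw [taylorCoeff, taylorCoeff, hfg.iteratedDeriv_eq k]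

lemma taylorCoeff_add (hf : AnalyticAt ℂ f 0) (hg : AnalyticAt ℂ g 0) (k : ℕ) :
    taylorCoeff k (fun z => f z + g z) = taylorCoeff k f + taylorCoeff k g := by
  simp only [taylorCoeff, iteratedDeriv_fun_add hf.contDiffAt hg.contDiffAt, add_div]

lemma taylorCoeff_sub (hf : AnalyticAt ℂ f 0) (hg : AnalyticAt ℂ g 0) (k : ℕ) :
    taylorCoeff k (fun z => f z - g z) = taylorCoeff k f - taylorCoeff k g := by
  simp only [taylorCoeff, iteratedDeriv_fun_sub hf.contDiffAt hg.contDiffAt, sub_div]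

lemma taylorCoeff_const_mul (c : ℂ) (f : ℂ → ℂ) (k : ℕ) :
    taylorCoeff k (fun z => c * f z) = c * taylorCoeff k f := by
  rw [taylorCoeff, iteratedDeriv_const_mul_field, mul_div_assoc, taylorCoeff]

lemma taylorCoeff_mul (hf : AnalyticAt ℂ f 0) (hg : AnalyticAt ℂ g 0) (k : ℕ) :
    taylorCoeff k (fun z => f z * g z) =
      ∑ i ∈ Finset.range (k + 1), taylorCoeff i f * taylorCoeff (k - i) g := by
  rw [taylorCoeff, iteratedDeriv_fun_mul hf.contDiffAt hg.contDiffAt, Finset.sum_div]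
  refine Finset.sum_congr rfl fun i hi => ?_
  have hik : i ≤ k := Finset.mem_range_succ_iff.1 hi
  rw [taylorCoeff, taylorCoeff, Nat.cast_choose ℂ hik]
  have : (k.factorial : ℂ) ≠ 0 := Nat.cast_ne_zero.2 k.factorial_ne_zero
  field_simp

lemma taylorCoeff_succ_id_mul (hf : AnalyticAt ℂ f 0) (k : ℕ) :
    taylorCoeff (k + 1) (fun z => z * f z) = taylorCoeff k f := by
  rw [taylorCoeff_mul (f := fun z => z) analyticAt_id hf, Finset.sum_eq_single 1]
  · simp [taylorCoeff_id]
  · intro i _ hi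
    simp [taylorCoeff_id, hi]
  · simp

lemma taylorCoeff_deriv (f : ℂ → ℂ) (k : ℕ) :
    taylorCoeff k (deriv f) = (k + 1) * taylorCoeff (k + 1) f := by
  have : (k + 1 : ℂ) ≠ 0 := Nat.cast_add_one_ne_zero k
  rw [taylorCoeff, taylorCoeff, iteratedDeriv_succ', Nat.factorial_succ]
  push_cast
  field_simp

lemma taylorCoeff_id_mul_deriv (hf : AnalyticAt ℂ f 0) (k : ℕ) :
    taylorCoeff k (fun z => z * deriv f z) = k * taylorCoeff k f := by
  rcases k with _ | k
  · simp
  · rw [taylorCoeff_succ_id_mul hf.deriv, taylorCoeff_deriv]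
    push_cast
    ring

lemma taylorCoeff_comp_const_mul (c : ℂ) (f : ℂ → ℂ) (k : ℕ) :
    taylorCoeff k (fun z => f (c * z)) = c ^ k * taylorCoeff k f := by
  have hiter : ∀ (k : ℕ) (f : ℂ → ℂ) (z : ℂ),
      iteratedDeriv k (fun z => f (c * z)) z = c ^ k * iteratedDeriv k f (c * z) := by
    intro k
    induction k with
    | zero => simp
    | succ k ih =>
      intro f z
      have hderiv : deriv (fun z => f (c * z)) = fun z => c * deriv f (c * z) :=
        funext fun z => deriv_comp_mul_left c f z
      rw [iteratedDeriv_succ', iteratedDeriv_succ', hderiv, iteratedDeriv_const_mul_field, ih,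
        pow_succ']
      ring
  rw [taylorCoeff, taylorCoeff, hiter, mul_zero, mul_div_assoc]

lemma hasSum_taylorCoeff_mul_pow (hf : DifferentiableOn ℂ f (ball 0 R)) {z : ℂ}
    (hz : z ∈ ball (0 : ℂ) R) : HasSum (fun k => taylorCoeff k f * z ^ k) (f z) := by
  refine (Complex.hasSum_taylorSeries_on_ball hf hz).congr_fun fun k => ?_
  simp only [taylorCoeff, smul_eq_mul, sub_zero]
  ring

lemma diffContOnCl_of_lt (hf : DifferentiableOn ℂ f (ball 0 R)) (hr : r < R) :
    DiffContOnCl ℂ f (ball 0 r) :=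
  (hf.mono (closure_ball_subset_closedBall.trans (closedBall_subset_ball hr))).diffContOnCl

lemma norm_taylorCoeff_le {M : ℝ} (hr0 : 0 < r) (hf : DiffContOnCl ℂ f (ball 0 r))
    (hM : ∀ z ∈ sphere (0 : ℂ) r, ‖f z‖ ≤ M) (k : ℕ) : ‖taylorCoeff k f‖ ≤ M / r ^ k := by
  rw [taylorCoeff, norm_div, Complex.norm_natCast, div_le_iff₀ (by positivity)]
  refine (Complex.norm_iteratedDeriv_le_of_forall_mem_sphere_norm_le k hr0 hf hM).trans_eq ?_
  ring

lemma circleAverage_mul_inv_pow (hf : DifferentiableOn ℂ f (ball 0 R)) (hr0 : 0 < r) (hr : r < R)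
    (k : ℕ) : Real.circleAverage (fun z => f z * z⁻¹ ^ k) 0 r = taylorCoeff k f := by
  have hcauchy := (diffContOnCl_of_lt hf hr).circleIntegral_one_div_sub_center_pow_smul hr0 k
  have hintegrand : (∮ z in C(0, r), (z - 0)⁻¹ • (f z * z⁻¹ ^ k)) =
      ∮ z in C(0, r), (1 / (z - 0) ^ (k + 1)) • f z := by
    congr 1
    ext z
    simp only [smul_eq_mul, sub_zero, pow_succ, one_div, mul_inv, inv_pow]
    ring
  rw [Real.circleAverage_eq_circleIntegral hr0.ne', hintegrand, hcauchy, taylorCoeff, smul_smul,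
    mul_div_assoc', inv_mul_cancel₀ Complex.two_pi_I_ne_zero, smul_eq_mul]
  ring

lemma circleAverage_mul_pow_of_pos {k : ℕ} (hf : DifferentiableOn ℂ f (ball 0 R)) (hr0 : 0 < r)
    (hr : r < R) (hk : 0 < k) : Real.circleAverage (fun z => f z * z ^ k) 0 r = 0 := by
  have hdiff : DiffContOnCl ℂ (fun z => f z * z ^ k) (ball 0 |r|) := by
    rw [abs_of_pos hr0]
    exact diffContOnCl_of_lt (R := R) (by fun_prop) hr
  rw [hdiff.circleAverage, zero_pow hk.ne', mul_zero]

end TaylorCoeff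

section Herglotz

/-- `q` is a Carathéodory function on the unit disc with value `T` at the origin. -/
structure IsHerglotz (q : ℂ → ℂ) (T : ℝ) : Prop where
  differentiableOn : DifferentiableOn ℂ q (ball 0 1)
  re_nonneg : ∀ z ∈ ball (0 : ℂ) 1, 0 ≤ (q z).re
  apply_zero : q 0 = T

/-- The `k`-th Taylor coefficient of the extreme Carathéodory function `(1 + κz) / (1 - κz)`. -/
def herglotzCoeff (k : ℕ) (κ : ℂ) : ℂ := if k = 0 then 1 else 2 * κ ^ k

lemma continuousOn_herglotzCoeff_div (k : ℕ) {r : ℝ} (hr0 : 0 < r) :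
    ContinuousOn (fun z : ℂ => herglotzCoeff k (r / z)) (sphere 0 r) := by
  have hdiv : ContinuousOn (fun z : ℂ => (r : ℂ) / z) (sphere 0 r) :=
    continuousOn_const.div continuousOn_id fun z hz => ne_zero_of_mem_sphere hr0.ne' ⟨z, hz⟩
  unfold herglotzCoeff
  split_ifs
  · exact continuousOn_const
  · exact continuousOn_const.mul (hdiv.pow k)

namespace IsHerglotz

variable {q : ℂ → ℂ} {T r : ℝ}

lemma analyticAt (hq : IsHerglotz q T) : AnalyticAt ℂ q 0 :=
  hq.differentiableOn.analyticAt (ball_mem_nhds _ one_pos)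

lemma nonneg (hq : IsHerglotz q T) : 0 ≤ T := by
  simpa [hq.apply_zero] using hq.re_nonneg 0 (by simp)

lemma continuousOn_sphere (hq : IsHerglotz q T) (hr : r < 1) : ContinuousOn q (sphere 0 r) :=
  hq.differentiableOn.continuousOn.mono (sphere_subset_closedBall.trans (closedBall_subset_ball hr))

lemma circleAverage_re (hq : IsHerglotz q T) (hr0 : 0 < r) (hr : r < 1) :
    Real.circleAverage (fun z => ((q z).re : ℂ)) 0 r = T := by
  have hint : CircleIntegrable q 0 r := (hq.continuousOn_sphere hr).circleIntegrable hr0.le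
  have hmean : Real.circleAverage q 0 r = T := by
    simpa [hq.apply_zero] using circleAverage_mul_inv_pow hq.differentiableOn hr0 hr 0
  have hcomm := (Complex.ofRealCLM.comp Complex.reCLM).circleAverage_comp_comm hint
  rw [hmean] at hcomm
  simpa [Function.comp_def] using hcomm

/-- On the circle `z⁻¹ = z̄ / r²`, so that the average of `q̄ z⁻ᵏ` vanishes for `k > 0`. -/
lemma circleAverage_re_mul_herglotzCoeff (hq : IsHerglotz q T) (hr0 : 0 < r) (hr : r < 1) (k : ℕ) :
    Real.circleAverage (fun z => (q z).re * herglotzCoeff k (r / z)) 0 r =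
      r ^ k * taylorCoeff k q := by
  rcases k.eq_zero_or_pos with rfl | hk
  · simpa [herglotzCoeff, hq.apply_zero] using hq.circleAverage_re hr0 hr
  have hcont := hq.continuousOn_sphere hr
  have hinv : ContinuousOn (fun z : ℂ => z⁻¹) (sphere 0 r) :=
    continuousOn_inv₀.mono fun z hz => ne_zero_of_mem_sphere hr0.ne' ⟨z, hz⟩
  have hint : CircleIntegrable (fun z => (r : ℂ) ^ k • (q z * z⁻¹ ^ k)) 0 r :=
    ContinuousOn.circleIntegrable hr0.le (by fun_prop)
  have hint' : CircleIntegrable (fun z => q z * z ^ k) 0 r :=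
    (hcont.mul (by fun_prop)).circleIntegrable hr0.le
  have hcont_conj : ContinuousOn (fun z => (starRingEnd ℂ) (q z * z ^ k)) (sphere 0 r) :=
    Complex.continuous_conj.comp_continuousOn (by fun_prop)
  have hint_conj : CircleIntegrable
      (fun z => ((r : ℂ) ^ k)⁻¹ • (starRingEnd ℂ) (q z * z ^ k)) 0 r :=
    ContinuousOn.circleIntegrable hr0.le (by fun_prop)
  have hconj : Real.circleAverage (fun z => (starRingEnd ℂ) (q z * z ^ k)) 0 r = 0 := by
    refine (Complex.conjCLE.toContinuousLinearMap.circleAverage_comp_comm hint').trans ?_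
    rw [circleAverage_mul_pow_of_pos hq.differentiableOn hr0 hr hk, map_zero]
  have hpoint : EqOn (fun z => (q z).re * herglotzCoeff k (r / z))
      (fun z => (r : ℂ) ^ k • (q z * z⁻¹ ^ k) + ((r : ℂ) ^ k)⁻¹ • (starRingEnd ℂ) (q z * z ^ k))
      (sphere 0 |r|) := by
    intro z hz
    have hz0 : z ≠ 0 := ne_zero_of_mem_sphere (abs_pos.2 hr0.ne').ne' ⟨z, hz⟩
    have hr' : (r : ℂ) ≠ 0 := Complex.ofReal_ne_zero.2 hr0.ne'
    have hnorm : z * (starRingEnd ℂ) z = r ^ 2 := by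
      rw [Complex.mul_conj', mem_sphere_zero_iff_norm.1 hz, abs_of_pos hr0]
    have hconj_z : (starRingEnd ℂ) z = r ^ 2 / z := by
      rw [← hnorm, mul_div_cancel_left₀ _ hz0]
    simp only [herglotzCoeff, hk.ne', if_false, smul_eq_mul, map_mul, map_pow, hconj_z]
    rw [Complex.re_eq_add_conj, div_pow, div_pow, inv_pow]
    field_simp
    ring
  rw [Real.circleAverage_congr_sphere hpoint, Real.circleAverage_fun_add hint hint_conj,
    Real.circleAverage_fun_smul, Real.circleAverage_fun_smul, hconj,
    circleAverage_mul_inv_pow hq.differentiableOn hr0 hr, smul_zero, add_zero, smul_eq_mul]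

lemma re_sum_mul_pow_mul_taylorCoeff_nonneg (hq : IsHerglotz q T) {n : ℕ} {w : ℕ → ℂ}
    (hpos : ∀ κ : ℂ, ‖κ‖ = 1 → 0 ≤ (∑ k ∈ Finset.range n, w k * herglotzCoeff k κ).re)
    (hr0 : 0 < r) (hr : r < 1) :
    0 ≤ (∑ k ∈ Finset.range n, w k * (r ^ k * taylorCoeff k q)).re := by
  have hre : ContinuousOn (fun z => ((q z).re : ℂ)) (sphere 0 r) :=
    Complex.continuous_ofReal.comp_continuousOn
      (Complex.continuous_re.comp_continuousOn (hq.continuousOn_sphere hr))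
  have hint : ∀ k ∈ Finset.range n,
      CircleIntegrable (fun z => w k • ((q z).re * herglotzCoeff k (r / z))) 0 r := by
    intro k _
    have := continuousOn_herglotzCoeff_div k hr0
    exact ContinuousOn.circleIntegrable hr0.le (by fun_prop)
  have hsum : Real.circleAverage
      (fun z => ∑ k ∈ Finset.range n, w k • ((q z).re * herglotzCoeff k (r / z))) 0 r =
        ∑ k ∈ Finset.range n, w k * (r ^ k * taylorCoeff k q) := by
    rw [Real.circleAverage_fun_sum hint]
    refine Finset.sum_congr rfl fun k _ => ?_
    rw [Real.circleAverage_fun_smul, hq.circleAverage_re_mul_herglotzCoeff hr0 hr, smul_eq_mul]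
  rw [← hsum, ← Complex.reCLM_apply, ← Complex.reCLM.circleAverage_comp_comm
    (CircleIntegrable.fun_sum _ hint)]
  refine Real.circleAverage_nonneg_of_nonneg fun z hz => ?_
  rw [abs_of_pos hr0, mem_sphere_zero_iff_norm] at hz
  have hκ : ‖(r / z : ℂ)‖ = 1 := by
    rw [norm_div, hz, Complex.norm_of_nonneg hr0.le, div_self hr0.ne']
  have hz1 : z ∈ ball (0 : ℂ) 1 := by rwa [mem_ball_zero_iff, hz]
  have hfactor : ∑ k ∈ Finset.range n, w k • ((q z).re * herglotzCoeff k (r / z)) =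
      (q z).re * ∑ k ∈ Finset.range n, w k * herglotzCoeff k (r / z) := by
    rw [Finset.mul_sum]
    exact Finset.sum_congr rfl fun k _ => by rw [smul_eq_mul]; ring
  rw [Function.comp_apply, hfactor, Complex.reCLM_apply, Complex.re_ofReal_mul]
  exact mul_nonneg (hq.re_nonneg z hz1) (hpos _ hκ)

lemma re_sum_mul_taylorCoeff_nonneg (hq : IsHerglotz q T) {n : ℕ} {w : ℕ → ℂ}
    (hpos : ∀ κ : ℂ, ‖κ‖ = 1 → 0 ≤ (∑ k ∈ Finset.range n, w k * herglotzCoeff k κ).re) :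
    0 ≤ (∑ k ∈ Finset.range n, w k * taylorCoeff k q).re := by
  have hcont : Continuous fun r : ℝ =>
      (∑ k ∈ Finset.range n, w k * ((r : ℂ) ^ k * taylorCoeff k q)).re := by fun_prop
  have hlim := (hcont.tendsto 1).mono_left (nhdsWithin_le_nhds (s := Iio 1))
  simp only [Complex.ofReal_one, one_pow, one_mul] at hlim
  refine ge_of_tendsto hlim ?_
  filter_upwards [Ioo_mem_nhdsLT one_pos] with r hr
  exact hq.re_sum_mul_pow_mul_taylorCoeff_nonneg hpos hr.1 hr.2

lemma norm_taylorCoeff_le (hq : IsHerglotz q T) (k : ℕ) : ‖taylorCoeff k q‖ ≤ 2 * T := by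
  have hT := hq.nonneg
  rcases k.eq_zero_or_pos with rfl | hk
  · rw [taylorCoeff_zero, hq.apply_zero, Complex.norm_of_nonneg hT]
    linarith
  obtain ⟨u, hu, hua⟩ : ∃ u : ℂ, ‖u‖ = 1 ∧ ‖taylorCoeff k q‖ = u * taylorCoeff k q :=
    RCLike.exists_norm_eq_mul_self _
  set w : ℕ → ℂ := fun j => if j = 0 then 2 else if j = k then -u else 0 with hw
  have hsum : ∀ c : ℕ → ℂ, ∑ j ∈ Finset.range (k + 1), w j * c j = 2 * c 0 - u * c k := by
    intro c
    rw [Finset.sum_range_succ, Finset.sum_eq_single_of_mem 0 (Finset.mem_range.2 hk)]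
    · simp [hw, hk.ne', sub_eq_add_neg]
    · intro j hj hj0
      simp [hw, hj0, (Finset.mem_range.1 hj).ne]
  have hnonneg := hq.re_sum_mul_taylorCoeff_nonneg (n := k + 1) (w := w) fun κ hκ => by
    have hle : (u * (2 * κ ^ k)).re ≤ 2 := by
      simpa [hu, hκ] using Complex.re_le_norm (u * (2 * κ ^ k))
    rw [hsum fun j => herglotzCoeff j κ]
    simpa [herglotzCoeff, hk.ne'] using hle
  rw [hsum fun j => taylorCoeff j q, ← hua, taylorCoeff_zero, hq.apply_zero] at hnonneg
  simpa using hnonneg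

end IsHerglotz

end Herglotz

/-! ### De Branges' monotonicity -/

section MilinFunctional

lemma sum_weinsteinWeight_mul_sub_add_deBrangesWeight_mul (n : ℕ) (y : ℝ) {b : ℕ → ℂ}
    (hb : ‖b 0‖ = 1) (N : ℕ) :
    ∑ k ∈ Finset.Icc 1 N, (weinsteinWeight n k y * (4 - ‖b k - b (k - 1)‖ ^ 2) +
        2 * deBrangesWeight n k y * (‖b k‖ ^ 2 - ‖b (k - 1)‖ ^ 2)) =
      ∑ k ∈ Finset.Icc 1 N, weinsteinWeight n k y * ‖b k + b (k - 1)‖ ^ 2 +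
        2 * (deBrangesWeight n (N + 1) y + weinsteinWeight n (N + 1) y) * (‖b N‖ ^ 2 - 1) := by
  induction N with
  | zero => simp [hb]
  | succ N ih =>
    have hsub := deBrangesWeight_sub_succ n N.succ_pos y
    have hpar := parallelogram_law_with_norm ℝ (b (N + 1)) (b N)
    rw [Finset.sum_Icc_succ_top N.succ_pos, Finset.sum_Icc_succ_top N.succ_pos, ih,
      Nat.add_sub_cancel]
    rw [Nat.succ_eq_add_one] at hsub
    linear_combination 2 * (‖b (N + 1)‖ ^ 2 - 1) * hsub - weinsteinWeight n (N + 1) y * hpar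

lemma conj_sub_mul_add_re (a b : ℂ) :
    ((starRingEnd ℂ) (a - b) * (a + b)).re = ‖a‖ ^ 2 - ‖b‖ ^ 2 := by
  simp only [← Complex.normSq_eq_norm_sq, Complex.normSq_apply, Complex.mul_re, Complex.conj_re,
    Complex.conj_im, Complex.sub_re, Complex.sub_im, Complex.add_re, Complex.add_im]
  ring

lemma sum_herglotzCoeff_mul {κ : ℂ} (hκ : ‖κ‖ = 1) (u : ℕ → ℂ) (k : ℕ) :
    ∑ j ∈ Finset.range (k + 1), herglotzCoeff j κ * u (k - j) =
      κ ^ k * (∑ j ∈ Finset.range (k + 1), u j * (starRingEnd ℂ) κ ^ j +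
        ∑ j ∈ Finset.range k, u j * (starRingEnd ℂ) κ ^ j) := by
  have hpow (j : ℕ) : κ ^ j * (starRingEnd ℂ) κ ^ j = 1 := by
    rw [← mul_pow, Complex.mul_conj', hκ, Complex.ofReal_one, one_pow, one_pow]
  have hterm : ∀ j ∈ Finset.range k,
      herglotzCoeff (k - j) κ * u j = 2 * (κ ^ k * (u j * (starRingEnd ℂ) κ ^ j)) := by
    intro j hj
    have hjk := Finset.mem_range.1 hj
    rw [herglotzCoeff, if_neg (by omega), ← pow_sub_mul_pow κ hjk.le]
    linear_combination -(2 * κ ^ (k - j) * u j) * hpow j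
  rw [← Finset.sum_flip, Finset.sum_congr rfl fun j hj => by
    rw [Nat.sub_sub_self (Finset.mem_range_succ_iff.1 hj)],
    Finset.sum_range_succ, Finset.sum_congr rfl hterm, Finset.sum_range_succ, ← Finset.mul_sum,
    ← Finset.mul_sum, Nat.sub_self, herglotzCoeff, if_pos rfl]
  linear_combination -u k * hpow k

/-- The square in the de Branges–FitzGerald–Pommerenke inequality comes from the partial sums of
`∑ uⱼ κ̄ʲ`. -/
lemma sum_weinsteinWeight_add_re_herglotzCoeff_nonneg (n : ℕ) {y : ℝ} (hy : y ∈ Icc (0 : ℝ) 1)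
    {u : ℕ → ℂ} (hu : u 0 = 1) {κ : ℂ} (hκ : ‖κ‖ = 1) :
    0 ≤ ∑ k ∈ Finset.Icc 1 n, (weinsteinWeight n k y * (4 - ‖u k‖ ^ 2) +
      2 * deBrangesWeight n k y * ((starRingEnd ℂ) (u k) *
        ∑ j ∈ Finset.range (k + 1), herglotzCoeff j κ * u (k - j)).re) := by
  set b : ℕ → ℂ := fun k => ∑ j ∈ Finset.range (k + 1), u j * (starRingEnd ℂ) κ ^ j with hb
  have hb0 : ‖b 0‖ = 1 := by simp [hb, hu]
  have htel := sum_weinsteinWeight_mul_sub_add_deBrangesWeight_mul n y hb0 n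
  rw [deBrangesWeight_of_lt n.lt_succ_self, weinsteinWeight_of_lt n.lt_succ_self, add_zero,
    mul_zero, zero_mul, add_zero] at htel
  have hsq : 0 ≤ ∑ k ∈ Finset.Icc 1 n, weinsteinWeight n k y * ‖b k + b (k - 1)‖ ^ 2 :=
    Finset.sum_nonneg fun k _ => mul_nonneg (weinsteinWeight_nonneg n k hy) (sq_nonneg _)
  rw [← htel] at hsq
  refine hsq.trans_eq (Finset.sum_congr rfl fun k hk => ?_)
  obtain ⟨l, rfl⟩ := Nat.exists_eq_add_of_le' (Finset.mem_Icc.1 hk).1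
  have hdiff : b (l + 1) - b l = u (l + 1) * (starRingEnd ℂ) κ ^ (l + 1) := by
    simp only [hb, Finset.sum_range_succ _ (l + 1), add_sub_cancel_left]
  have hconv : ∑ j ∈ Finset.range (l + 1 + 1), herglotzCoeff j κ * u (l + 1 - j) =
      κ ^ (l + 1) * (b (l + 1) + b l) := sum_herglotzCoeff_mul hκ u (l + 1)
  rw [Nat.add_sub_cancel, ← conj_sub_mul_add_re, hdiff, hconv, norm_mul, norm_pow,
    RCLike.norm_conj, hκ, one_pow, mul_one, map_mul, map_pow, Complex.conj_conj,
    ← mul_assoc ((starRingEnd ℂ) _)]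

lemma sum_range_mul_sum_Icc_eq (n : ℕ) (α u c : ℕ → ℂ) :
    ∑ j ∈ Finset.range (n + 1), (∑ k ∈ Finset.Icc (max 1 j) n, α k * u (k - j)) * c j =
      ∑ k ∈ Finset.Icc 1 n, α k * ∑ j ∈ Finset.range (k + 1), c j * u (k - j) := by
  simp only [Finset.sum_mul, Finset.mul_sum]
  rw [Finset.sum_comm' (t' := Finset.Icc 1 n) (s' := fun k => Finset.range (k + 1))]
  · exact Finset.sum_congr rfl fun k _ => Finset.sum_congr rfl fun j _ => by ring
  · intro j k
    simp only [Finset.mem_range, Finset.mem_Icc]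
    omega

lemma IsHerglotz.sum_weinsteinWeight_add_re_taylorCoeff_nonneg {s : ℂ → ℂ} {h : ℝ}
    (hs : IsHerglotz s h) (n : ℕ) {y : ℝ} (hy : y ∈ Icc (0 : ℝ) 1) {u : ℕ → ℂ} (hu : u 0 = 1) :
    0 ≤ ∑ k ∈ Finset.Icc 1 n, (h * (weinsteinWeight n k y * (4 - ‖u k‖ ^ 2)) +
      2 * deBrangesWeight n k y * ((starRingEnd ℂ) (u k) *
        ∑ j ∈ Finset.range (k + 1), taylorCoeff j s * u (k - j)).re) := by
  set e : ℝ := ∑ k ∈ Finset.Icc 1 n, weinsteinWeight n k y * (4 - ‖u k‖ ^ 2) with he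
  set α : ℕ → ℂ := fun k => (2 * deBrangesWeight n k y : ℝ) * (starRingEnd ℂ) (u k) with hα
  have hre (c : ℕ → ℂ) :
      (∑ j ∈ Finset.range (n + 1), ((if j = 0 then (e : ℂ) else 0) +
          ∑ k ∈ Finset.Icc (max 1 j) n, α k * u (k - j)) * c j).re =
        ∑ k ∈ Finset.Icc 1 n, ((c 0).re * (weinsteinWeight n k y * (4 - ‖u k‖ ^ 2)) +
          2 * deBrangesWeight n k y * ((starRingEnd ℂ) (u k) *
            ∑ j ∈ Finset.range (k + 1), c j * u (k - j)).re) := by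
    simp only [add_mul, Finset.sum_add_distrib, ite_mul, zero_mul, Finset.sum_ite_eq',
      Finset.mem_range, n.succ_pos, if_true]
    rw [sum_range_mul_sum_Icc_eq, Complex.add_re, Complex.re_ofReal_mul, Complex.re_sum,
      ← Finset.mul_sum, mul_comm, he]
    simp only [hα, mul_assoc, Complex.re_ofReal_mul]
  have hnonneg := hs.re_sum_mul_taylorCoeff_nonneg (n := n + 1) (w := fun j =>
    (if j = 0 then (e : ℂ) else 0) + ∑ k ∈ Finset.Icc (max 1 j) n, α k * u (k - j)) fun κ hκ => by
    rw [hre fun j => herglotzCoeff j κ]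
    simpa [herglotzCoeff] using sum_weinsteinWeight_add_re_herglotzCoeff_nonneg n hy hu hκ
  rw [hre fun j => taylorCoeff j s] at hnonneg
  simpa [hs.apply_zero] using hnonneg

end MilinFunctional

section LoewnerStep

/-- The logarithmic coordinate of a composition: if `w z = z exp (-q z)` and
`v z = z exp (-s z)`, then `w (v z) = z exp (-logComp q s z)`. -/
def logComp (q s : ℂ → ℂ) (z : ℂ) : ℂ := s z + q (z * Complex.exp (-s z))

/-- The factor `1 - z q'(z)` of the Loewner equation `∂ₜ q = p (1 - z q')`, which is the
linearization of `logComp` in its second argument. -/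
def loewnerFactor (q : ℂ → ℂ) (z : ℂ) : ℂ := 1 - z * deriv q z

/-- The weighted Milin functional of `q`, with the de Branges weights at time `t`. -/
def milinFunctional (n : ℕ) (q : ℂ → ℂ) (t : ℝ) : ℝ :=
  ∑ k ∈ Finset.Icc 1 n,
    deBrangesWeight n k (Real.exp (-t)) * (k * ‖taylorCoeff k q‖ ^ 2 - 4 / k)

lemma mul_exp_neg_mem_ball {z w : ℂ} (hz : z ∈ ball (0 : ℂ) 1) (hw : 0 ≤ w.re) :
    z * Complex.exp (-w) ∈ ball (0 : ℂ) 1 := by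
  rw [mem_ball_zero_iff] at hz ⊢
  rw [norm_mul, Complex.norm_exp, Complex.neg_re]
  exact (mul_le_of_le_one_right (norm_nonneg z) (Real.exp_le_one_iff.2 (neg_nonpos.2 hw))).trans_lt
    hz

lemma norm_sub_sub_deriv_mul_le {f : ℂ → ℂ} {R M : ℝ} (hf : DifferentiableOn ℂ f (ball 0 R))
    (hM : ∀ z ∈ ball (0 : ℂ) R, ‖f z‖ ≤ M) {w : ℂ} (hw : w ∈ ball (0 : ℂ) R) :
    ‖f w - f 0 - deriv f 0 * w‖ ≤ 4 * M * (‖w‖ / R) ^ 2 := by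
  have hR : 0 < R := pos_of_mem_ball hw
  have h0 : (0 : ℂ) ∈ ball (0 : ℂ) R := mem_ball_self hR
  have hdist : ∀ z ∈ ball (0 : ℂ) R, ‖f z - f 0‖ ≤ 2 * M := fun z hz =>
    (norm_sub_le _ _).trans (by linarith [hM z hz, hM 0 h0])
  have hderiv : ‖deriv f 0‖ ≤ 2 * M / R :=
    Complex.norm_deriv_le_div_of_mapsTo_ball hf (fun z hz => mem_closedBall_iff_norm.2 (hdist z hz))
      hR
  set φ : ℂ → ℂ := fun z => f z - deriv f 0 * z with hφ
  have hφ0 : φ 0 = f 0 := by simp [hφ]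
  have hmaps : MapsTo φ (ball 0 R) (closedBall (φ 0) (4 * M)) := by
    intro z hz
    have hz' : ‖z‖ < R := mem_ball_zero_iff.1 hz
    have hlin : ‖deriv f 0 * z‖ ≤ 2 * M := by
      rw [norm_mul]
      exact (mul_le_mul hderiv hz'.le (norm_nonneg z) ((norm_nonneg _).trans hderiv)).trans_eq
        (div_mul_cancel₀ _ hR.ne')
    rw [mem_closedBall_iff_norm, hφ0, hφ, sub_right_comm]
    exact (norm_sub_le _ _).trans (by linarith [hdist z hz])
  have hlittle : (φ · - φ 0) =o[nhds 0] fun z => ‖z - 0‖ ^ 1 := by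
    have hfd := (hf.differentiableAt (isOpen_ball.mem_nhds h0)).hasDerivAt.isLittleO.norm_right
    refine hfd.congr (fun z => ?_) fun z => (pow_one _).symm
    simp only [hφ, sub_zero, mul_zero, smul_eq_mul]
    ring
  have hdiff : DifferentiableOn ℂ φ (ball 0 R) := by fun_prop
  have hschwarz := Complex.dist_le_mul_div_pow_of_mapsTo_ball_of_isLittleO hdiff hmaps hlittle hw
  rwa [dist_eq_norm, hφ0, dist_zero_right, hφ, sub_right_comm] at hschwarz

lemma norm_mul_exp_neg_le_half {z w : ℂ} (hz : ‖z‖ ≤ 1 / 4) (hw : ‖w‖ ≤ 1 / 2) :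
    ‖z * Complex.exp (-w)‖ ≤ 1 / 2 := by
  have hexp : ‖Complex.exp (-w)‖ ≤ 2 := by
    rw [Complex.norm_exp]
    have hre : (-w).re ≤ 1 / 2 := (Complex.re_le_norm _).trans (by rwa [norm_neg])
    have hlog : (1 / 2 : ℝ) ≤ Real.log 2 := by linarith [Real.log_two_gt_d9]
    exact (Real.exp_le_exp.2 (hre.trans hlog)).trans_eq (Real.exp_log two_pos)
  calc ‖z * Complex.exp (-w)‖ ≤ 1 / 4 * 2 := by rw [norm_mul]; gcongr
    _ = 1 / 2 := by norm_num

lemma norm_sq_le_of_norm_sub_add_le {a b d : ℂ} {A C D h : ℝ} (ha : ‖a‖ ≤ A) (hd : ‖d‖ ≤ D * h)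
    (hC : 0 ≤ C) (hb : ‖b - (a + d)‖ ≤ C * h ^ 2) (hh0 : 0 ≤ h) (hh1 : h ≤ 1) :
    ‖b‖ ^ 2 ≤ ‖a‖ ^ 2 + 2 * ((starRingEnd ℂ) a * d).re + (2 * A * C + (D + C) ^ 2) * h ^ 2 := by
  set δ := b - (a + d) with hδ
  have hexpand : ‖b‖ ^ 2 = ‖a‖ ^ 2 + 2 * ((starRingEnd ℂ) a * d).re +
      2 * ((starRingEnd ℂ) a * δ).re + ‖d + δ‖ ^ 2 := by
    have hb' : b = a + (d + δ) := by rw [hδ]; ring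
    rw [hb']
    simp only [← Complex.normSq_eq_norm_sq, Complex.normSq_apply, Complex.mul_re, Complex.conj_re,
      Complex.conj_im, Complex.add_re, Complex.add_im]
    ring
  have hcross : ((starRingEnd ℂ) a * δ).re ≤ A * (C * h ^ 2) := by
    refine (Complex.re_le_norm _).trans ?_
    rw [norm_mul, RCLike.norm_conj]
    exact mul_le_mul ha hb (norm_nonneg _) ((norm_nonneg a).trans ha)
  have hsum : ‖d + δ‖ ≤ (D + C) * h := by
    have hle : C * h ^ 2 ≤ C * h := by gcongr; exact pow_le_of_le_one hh0 hh1 two_ne_zero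
    linarith [norm_add_le d δ]
  have hsq := pow_le_pow_left₀ (norm_nonneg _) hsum 2
  rw [hexpand]
  linarith [mul_pow (D + C) h 2]

namespace IsHerglotz

variable {q s : ℂ → ℂ} {T h : ℝ}

lemma logComp (hq : IsHerglotz q T) (hs : IsHerglotz s h) :
    IsHerglotz (logComp q s) (T + h) where
  differentiableOn := by
    have hs' := hs.differentiableOn
    exact hs'.add (hq.differentiableOn.comp (by fun_prop)
      fun z hz => mul_exp_neg_mem_ball hz (hs.re_nonneg z hz))
  re_nonneg z hz :=
    add_nonneg (hs.re_nonneg z hz) (hq.re_nonneg _ (mul_exp_neg_mem_ball hz (hs.re_nonneg z hz)))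
  apply_zero := by simp [BohrRogosinski.logComp, hq.apply_zero, hs.apply_zero, add_comm]

lemma norm_le_of_norm_le_half (hq : IsHerglotz q T) {z : ℂ} (hz : ‖z‖ ≤ 1 / 2) :
    ‖q z‖ ≤ 4 * T := by
  have hball : z ∈ ball (0 : ℂ) 1 := mem_ball_zero_iff.2 (by linarith)
  have hgeom : HasSum (fun k : ℕ => 2 * T * (1 / 2) ^ k) (2 * T * 2) :=
    hasSum_geometric_two.mul_left (2 * T)
  refine ((hasSum_taylorCoeff_mul_pow hq.differentiableOn hball).norm_le_of_bounded hgeom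
    fun k => ?_).trans_eq (by ring)
  have hT := hq.nonneg
  rw [norm_mul, norm_pow]
  gcongr
  exact hq.norm_taylorCoeff_le k

lemma norm_comp_mul_exp_neg_sub_le (hq : IsHerglotz q T) {z w : ℂ} (hz : ‖z‖ ≤ 1 / 4)
    (hw : ‖w‖ < 1 / 2) :
    ‖q (z * Complex.exp (-w)) - (q z - z * deriv q z * w)‖ ≤ 64 * T * ‖w‖ ^ 2 := by
  have hmaps : MapsTo (fun w => z * Complex.exp (-w)) (ball 0 (1 / 2)) (ball 0 1) := fun w hw =>
    mem_ball_zero_iff.2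
      ((norm_mul_exp_neg_le_half hz (mem_ball_zero_iff.1 hw).le).trans_lt one_half_lt_one)
  have hdiff : DifferentiableOn ℂ (fun w => q (z * Complex.exp (-w))) (ball 0 (1 / 2)) :=
    hq.differentiableOn.comp (by fun_prop) hmaps
  have hderiv : HasDerivAt (fun w => q (z * Complex.exp (-w))) (-(z * deriv q z)) 0 := by
    have hqz : HasDerivAt q (deriv q z) (z * Complex.exp (-0)) := by
      have hz1 : z ∈ ball (0 : ℂ) 1 := mem_ball_zero_iff.2 (by linarith)
      simpa using (hq.differentiableOn.differentiableAt (isOpen_ball.mem_nhds hz1)).hasDerivAt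
    have hexp : HasDerivAt (fun w => z * Complex.exp (-w)) (-z) 0 := by
      simpa using ((hasDerivAt_id (0 : ℂ)).fun_neg.cexp).const_mul z
    exact (hqz.comp 0 hexp).congr_deriv (by ring)
  have hbound := norm_sub_sub_deriv_mul_le hdiff (M := 4 * T) (fun w hw =>
    hq.norm_le_of_norm_le_half (norm_mul_exp_neg_le_half hz (mem_ball_zero_iff.1 hw).le))
    (mem_ball_zero_iff.2 hw)
  rw [hderiv.deriv, neg_zero, Complex.exp_zero, mul_one, neg_mul, sub_neg_eq_add] at hbound
  calc _ = ‖q (z * Complex.exp (-w)) - q z + z * deriv q z * w‖ := by rw [sub_sub_eq_add_sub,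
        add_sub_right_comm]
    _ ≤ 4 * (4 * T) * (‖w‖ / (1 / 2)) ^ 2 := hbound
    _ = 64 * T * ‖w‖ ^ 2 := by ring

lemma differentiableOn_loewnerFactor (hq : IsHerglotz q T) :
    DifferentiableOn ℂ (loewnerFactor q) (ball 0 1) :=
  (differentiableOn_const 1).sub (differentiableOn_id.mul (hq.differentiableOn.deriv isOpen_ball))

lemma analyticAt_loewnerFactor (hq : IsHerglotz q T) : AnalyticAt ℂ (loewnerFactor q) 0 :=
  hq.differentiableOn_loewnerFactor.analyticAt (ball_mem_nhds _ one_pos)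

lemma taylorCoeff_loewnerFactor (hq : IsHerglotz q T) {k : ℕ} (hk : 0 < k) :
    taylorCoeff k (loewnerFactor q) = -(k * taylorCoeff k q) := by
  have hderiv : AnalyticAt ℂ (fun z => z * deriv q z) 0 := analyticAt_id.mul hq.analyticAt.deriv
  refine (taylorCoeff_sub analyticAt_const hderiv k).trans ?_
  rw [taylorCoeff_const_of_pos hk, taylorCoeff_id_mul_deriv hq.analyticAt, zero_sub]

lemma norm_taylorCoeff_loewnerFactor_le (hq : IsHerglotz q T) (k : ℕ) :
    ‖taylorCoeff k (loewnerFactor q)‖ ≤ 1 + 2 * T * k := by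
  rcases k.eq_zero_or_pos with rfl | hk
  · simp [loewnerFactor]
  · rw [hq.taylorCoeff_loewnerFactor hk, norm_neg, norm_mul, Complex.norm_natCast]
    nlinarith [hq.norm_taylorCoeff_le k, Nat.cast_nonneg (α := ℝ) k]

lemma norm_taylorCoeff_mul_loewnerFactor_le (hq : IsHerglotz q T) (hs : IsHerglotz s h) (k : ℕ) :
    ‖taylorCoeff k (fun z => s z * loewnerFactor q z)‖ ≤
      (k + 1) * (2 * (1 + 2 * T * k)) * h := by
  have hT := hq.nonneg
  have hh := hs.nonneg
  rw [taylorCoeff_mul hs.analyticAt hq.analyticAt_loewnerFactor]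
  calc _ ≤ ∑ _i ∈ Finset.range (k + 1), 2 * h * (1 + 2 * T * k) := by
        refine norm_sum_le_of_le _ fun i _ => ?_
        rw [norm_mul]
        gcongr
        · exact hs.norm_taylorCoeff_le i
        · refine (hq.norm_taylorCoeff_loewnerFactor_le (k - i)).trans ?_
          gcongr
          exact k.sub_le i
    _ = _ := by
        rw [Finset.sum_const, Finset.card_range, nsmul_eq_mul]
        push_cast
        ring

lemma norm_taylorCoeff_logComp_sub_le (hq : IsHerglotz q T) (hs : IsHerglotz s h) (hh : h ≤ 1 / 16)
    (k : ℕ) :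
    ‖taylorCoeff k (BohrRogosinski.logComp q s) -
        (taylorCoeff k q + taylorCoeff k (fun z => s z * loewnerFactor q z))‖ ≤
      1024 * T * 4 ^ k * h ^ 2 := by
  have hT := hq.nonneg
  have hq' := hq.differentiableOn
  have hs' := hs.differentiableOn
  have hu := hq.differentiableOn_loewnerFactor
  have hc := (hq.logComp hs).differentiableOn
  have han : AnalyticAt ℂ (fun z => s z * loewnerFactor q z) 0 :=
    hs.analyticAt.mul hq.analyticAt_loewnerFactor
  rw [← taylorCoeff_add hq.analyticAt han, ← taylorCoeff_sub (hq.logComp hs).analyticAt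
    (hq.analyticAt.fun_add han)]
  have hbound : ∀ z ∈ sphere (0 : ℂ) (1 / 4),
      ‖BohrRogosinski.logComp q s z - (q z + s z * loewnerFactor q z)‖ ≤ 1024 * T * h ^ 2 := by
    intro z hz
    have hz' : ‖z‖ = 1 / 4 := mem_sphere_zero_iff_norm.1 hz
    have hsz : ‖s z‖ ≤ 4 * h := hs.norm_le_of_norm_le_half (by linarith)
    have hsplit : BohrRogosinski.logComp q s z - (q z + s z * loewnerFactor q z) =
        q (z * Complex.exp (-s z)) - (q z - z * deriv q z * s z) := by
      simp only [BohrRogosinski.logComp, loewnerFactor]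
      ring
    rw [hsplit]
    calc _ ≤ 64 * T * ‖s z‖ ^ 2 := hq.norm_comp_mul_exp_neg_sub_le hz'.le (by linarith)
      _ ≤ 64 * T * (4 * h) ^ 2 := by gcongr
      _ = _ := by ring
  have hdiff : DiffContOnCl ℂ
      (fun z => BohrRogosinski.logComp q s z - (q z + s z * loewnerFactor q z)) (ball 0 (1 / 4)) :=
    diffContOnCl_of_lt (R := 1) (by fun_prop) (by norm_num)
  refine (BohrRogosinski.norm_taylorCoeff_le (by norm_num) hdiff hbound k).trans_eq ?_
  rw [one_div, inv_pow, div_inv_eq_mul]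
  ring

end IsHerglotz

lemma exists_mul_norm_taylorCoeff_logComp_sq_le {k : ℕ} (hk : 0 < k) (Tm : ℝ) :
    ∃ K : ℝ, ∀ {q s : ℂ → ℂ} {T h : ℝ}, IsHerglotz q T → IsHerglotz s h → T ≤ Tm → h ≤ 1 / 16 →
      k * ‖taylorCoeff k (logComp q s)‖ ^ 2 ≤ k * ‖taylorCoeff k q‖ ^ 2 -
        2 * ((starRingEnd ℂ) (taylorCoeff k (loewnerFactor q)) *
          taylorCoeff k (fun z => s z * loewnerFactor q z)).re + K * h ^ 2 := by
  set C : ℝ := 1024 * Tm * 4 ^ k with hC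
  set D : ℝ := (k + 1) * (2 * (1 + 2 * Tm * k)) with hD
  refine ⟨k * (2 * (2 * Tm) * C + (D + C) ^ 2), fun {q s T h} hq hs hT hh => ?_⟩
  have hh0 := hs.nonneg
  have hTm : 0 ≤ Tm := hq.nonneg.trans hT
  have ha : ‖taylorCoeff k q‖ ≤ 2 * Tm := (hq.norm_taylorCoeff_le k).trans (by linarith)
  have hd : ‖taylorCoeff k (fun z => s z * loewnerFactor q z)‖ ≤ D * h :=
    (hq.norm_taylorCoeff_mul_loewnerFactor_le hs k).trans (by rw [hD]; gcongr)
  have hb := (hq.norm_taylorCoeff_logComp_sub_le hs hh k).trans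
    (show _ ≤ C * h ^ 2 by rw [hC]; gcongr)
  have hsq := norm_sq_le_of_norm_sub_add_le ha hd (by positivity) hb hh0 (by linarith)
  rw [hq.taylorCoeff_loewnerFactor hk, map_neg, map_mul, map_natCast, neg_mul, Complex.neg_re,
    mul_assoc, ← Complex.ofReal_natCast, Complex.re_ofReal_mul]
  calc _ ≤ (k : ℝ) * _ := mul_le_mul_of_nonneg_left hsq k.cast_nonneg
    _ = _ := by ring

lemma exists_deBrangesWeight_mul_logComp_le (n : ℕ) {k : ℕ} (hk : 0 < k) (Tm : ℝ) :
    ∃ K : ℝ, ∀ {q s : ℂ → ℂ} {T h t : ℝ}, IsHerglotz q T → IsHerglotz s h → T ≤ Tm → h ≤ 1 / 16 →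
      0 ≤ t →
      deBrangesWeight n k (Real.exp (-t)) * (k * ‖taylorCoeff k (logComp q s)‖ ^ 2 - 4 / k) ≤
        deBrangesWeight n k (Real.exp (-(t + h))) * (k * ‖taylorCoeff k q‖ ^ 2 - 4 / k) -
          (h * (weinsteinWeight n k (Real.exp (-t)) * (4 - ‖taylorCoeff k (loewnerFactor q)‖ ^ 2)) +
            2 * deBrangesWeight n k (Real.exp (-t)) *
              ((starRingEnd ℂ) (taylorCoeff k (loewnerFactor q)) *
                taylorCoeff k (fun z => s z * loewnerFactor q z)).re) + K * h ^ 2 := by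
  obtain ⟨K₁, hK₁⟩ := exists_mul_norm_taylorCoeff_logComp_sq_le hk Tm
  obtain ⟨K₂, hK₂⟩ := exists_abs_deBrangesWeight_exp_add_le n hk
  obtain ⟨W, hW⟩ := exists_abs_deBrangesWeight_le n k
  refine ⟨W * |K₁| + K₂ * (k * (2 * Tm) ^ 2 + 4), fun {q s T h t} hq hs hT hh ht => ?_⟩
  have hy : Real.exp (-t) ∈ Icc (0 : ℝ) 1 := ⟨by positivity, Real.exp_le_one_iff.2 (by linarith)⟩
  have hk1 : (1 : ℝ) ≤ k := Nat.one_le_cast.2 hk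
  have hsq := hK₁ hq hs hT hh
  set τ := deBrangesWeight n k (Real.exp (-t))
  set τ' := deBrangesWeight n k (Real.exp (-(t + h)))
  set l := weinsteinWeight n k (Real.exp (-t))
  set Q := (k : ℝ) * ‖taylorCoeff k q‖ ^ 2 - 4 / k with hQ
  have hτ : 0 ≤ τ := deBrangesWeight_nonneg n hk hy
  have hτK : τ * K₁ ≤ W * |K₁| :=
    (mul_le_mul_of_nonneg_left (le_abs_self K₁) hτ).trans
      (mul_le_mul_of_nonneg_right ((le_abs_self τ).trans (hW _ hy)) (abs_nonneg K₁))
  have hlQ : k * l * Q = l * (‖taylorCoeff k (loewnerFactor q)‖ ^ 2 - 4) := by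
    rw [hq.taylorCoeff_loewnerFactor hk, norm_neg, norm_mul, Complex.norm_natCast, hQ]
    field_simp
  have hQle : |Q| ≤ k * (2 * Tm) ^ 2 + 4 := by
    have hcoeff : ‖taylorCoeff k q‖ ≤ 2 * Tm := (hq.norm_taylorCoeff_le k).trans (by linarith)
    have hdiv : 4 / (k : ℝ) ≤ 4 := div_le_self (by norm_num) hk1
    have hsq_le : (k : ℝ) * ‖taylorCoeff k q‖ ^ 2 ≤ k * (2 * Tm) ^ 2 := by gcongr
    rw [abs_le]
    constructor <;> linarith [show 0 ≤ (k : ℝ) * ‖taylorCoeff k q‖ ^ 2 by positivity,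
      show 0 ≤ 4 / (k : ℝ) by positivity, show 0 ≤ (k : ℝ) * (2 * Tm) ^ 2 by positivity]
  have hrem : -(K₂ * h ^ 2 * (k * (2 * Tm) ^ 2 + 4)) ≤ (τ' - τ + h * (k * l)) * Q := by
    have hK₂h := hK₂ t h ht hs.nonneg
    refine (abs_le.1 ?_).1
    rw [abs_mul]
    exact mul_le_mul hK₂h hQle (abs_nonneg Q) ((abs_nonneg _).trans hK₂h)
  have hmul := mul_le_mul_of_nonneg_left hsq hτ
  have hKh := mul_le_mul_of_nonneg_right hτK (sq_nonneg h)
  linear_combination hmul + hKh + hrem + h * hlQ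

lemma exists_milinFunctional_logComp_le (n : ℕ) (Tm : ℝ) :
    ∃ K : ℝ, ∀ {q s : ℂ → ℂ} {T h t : ℝ}, IsHerglotz q T → IsHerglotz s h → T ≤ Tm → h ≤ 1 / 16 →
      0 ≤ t → milinFunctional n (logComp q s) t ≤ milinFunctional n q (t + h) + K * h ^ 2 := by
  choose! K hK using fun (k : ℕ) (hk : 0 < k) => exists_deBrangesWeight_mul_logComp_le n hk Tm
  refine ⟨∑ k ∈ Finset.Icc 1 n, K k, fun {q s T h t} hq hs hT hh ht => ?_⟩
  have hy : Real.exp (-t) ∈ Icc (0 : ℝ) 1 := ⟨by positivity, Real.exp_le_one_iff.2 (by linarith)⟩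
  have hsum := Finset.sum_le_sum (s := Finset.Icc 1 n) fun k hk =>
    hK k (Finset.mem_Icc.1 hk).1 hq hs hT hh ht
  have hpos := hs.sum_weinsteinWeight_add_re_taylorCoeff_nonneg n hy
    (u := fun k => taylorCoeff k (loewnerFactor q)) (by simp [loewnerFactor])
  simp only [← taylorCoeff_mul hs.analyticAt hq.analyticAt_loewnerFactor] at hpos
  rw [Finset.sum_add_distrib, Finset.sum_sub_distrib, ← Finset.sum_mul] at hsum
  simp only [milinFunctional]
  linarith

lemma exists_forall_milinFunctional_logComp_le (n : ℕ) (Tm : ℝ) {η : ℝ} (hη : 0 < η) :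
    ∃ ε > 0, ∀ {q s : ℂ → ℂ} {T h : ℝ}, IsHerglotz q T → IsHerglotz s h → T ≤ Tm → h ≤ ε →
      (∀ t, 0 ≤ t → milinFunctional n q t ≤ η * T) →
      ∀ t, 0 ≤ t → milinFunctional n (logComp q s) t ≤ η * (T + h) := by
  obtain ⟨K, hK⟩ := exists_milinFunctional_logComp_le n Tm
  refine ⟨min (1 / 16) (η / (|K| + 1)), by positivity, fun {q s T h} hq hs hT hh hle t ht => ?_⟩
  have hh0 := hs.nonneg
  have hstep := hK hq hs hT (hh.trans (min_le_left _ _)) ht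
  have hprev := hle (t + h) (by linarith)
  have hsmall : h * (|K| + 1) ≤ η :=
    (le_div_iff₀ (by positivity)).1 (hh.trans (min_le_right _ _))
  have hKh : K * h ≤ η := by nlinarith [mul_le_mul_of_nonneg_right (le_abs_self K) hh0]
  nlinarith [mul_le_mul_of_nonneg_right hKh hh0]

lemma milinFunctional_zero_nonpos (n : ℕ) {t : ℝ} (ht : 0 ≤ t) :
    milinFunctional n (fun _ => 0) t ≤ 0 := by
  refine Finset.sum_nonpos fun k hk => ?_
  have hk1 := (Finset.mem_Icc.1 hk).1
  have hτ := deBrangesWeight_nonneg n hk1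
    (y := Real.exp (-t)) ⟨by positivity, Real.exp_le_one_iff.2 (by linarith)⟩
  rw [taylorCoeff_const_of_pos hk1, norm_zero, zero_pow two_ne_zero, mul_zero, zero_sub]
  exact mul_nonpos_of_nonneg_of_nonpos hτ (neg_nonpos.2 (by positivity))

end LoewnerStep

/-! ### Koebe's square-root construction -/

section Logarithm

variable {x c : ℂ} {R : ℝ}

lemma exists_differentiableOn_exp_eq {p : ℂ → ℂ} (hp : DifferentiableOn ℂ p (ball x R))
    (hne : ∀ z ∈ ball x R, p z ≠ 0) (hc : Complex.exp c = p x) :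
    ∃ l : ℂ → ℂ, DifferentiableOn ℂ l (ball x R) ∧ l x = c ∧
      ∀ z ∈ ball x R, Complex.exp (l z) = p z := by
  have hquot : DifferentiableOn ℂ (fun z => deriv p z / p z) (ball x R) :=
    (hp.deriv isOpen_ball).div hp hne
  obtain ⟨l, hlx, hl⟩ := hquot.isExactOn_ball.with_val_at x c
  refine ⟨l, fun z hz => (hl z hz).differentiableAt.differentiableWithinAt, hlx, fun z hz => ?_⟩
  have hconst : ∀ w ∈ ball x R, HasDerivAt (fun z => p z * Complex.exp (-l z)) 0 w := by
    intro w hw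
    have hpw := (hp.differentiableAt (isOpen_ball.mem_nhds hw)).hasDerivAt
    refine (hpw.mul (hl w hw).neg.cexp).congr_deriv ?_
    have := hne w hw
    field_simp
    ring
  have hx : x ∈ ball x R := mem_ball_self (pos_of_mem_ball hz)
  have hone := isOpen_ball.is_const_of_deriv_eq_zero (convex_ball x R).isPreconnected
    (fun w hw => (hconst w hw).differentiableAt.differentiableWithinAt)
    (fun w hw => (hconst w hw).deriv) hz hx
  rw [hlx, ← hc, ← Complex.exp_add, add_neg_cancel, Complex.exp_zero, Complex.exp_neg] at hone
  exact (eq_of_mul_inv_eq_one hone).symm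

lemma eqOn_of_exp_eqOn {l₁ l₂ : ℂ → ℂ} (h₁ : DifferentiableOn ℂ l₁ (ball x R))
    (h₂ : DifferentiableOn ℂ l₂ (ball x R)) (hx : l₁ x = l₂ x)
    (hexp : ∀ z ∈ ball x R, Complex.exp (l₁ z) = Complex.exp (l₂ z)) : EqOn l₁ l₂ (ball x R) := by
  intro z hz
  have hd : DifferentiableOn ℂ (fun z => l₁ z - l₂ z) (ball x R) := h₁.sub h₂
  have hderiv : ∀ w ∈ ball x R, deriv (fun z => l₁ z - l₂ z) w = 0 := by
    intro w hw
    have hone : (fun z => Complex.exp (l₁ z - l₂ z)) =ᶠ[nhds w] fun _ => 1 := by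
      filter_upwards [isOpen_ball.mem_nhds hw] with z hz
      rw [Complex.exp_sub, hexp z hz, div_self (Complex.exp_ne_zero _)]
    have hchain := (hd.differentiableAt (isOpen_ball.mem_nhds hw)).hasDerivAt.cexp
    have hzero := hchain.unique ((hasDerivAt_const w (1 : ℂ)).congr_of_eventuallyEq hone)
    exact (mul_eq_zero.1 hzero).resolve_left (Complex.exp_ne_zero _)
  have hconst := isOpen_ball.is_const_of_deriv_eq_zero (convex_ball x R).isPreconnected hd hderiv hz
    (mem_ball_self (pos_of_mem_ball hz))
  rwa [hx, sub_self, sub_eq_zero] at hconst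

end Logarithm

section Univalent

/-- `φ` is a conformal map of the unit disc onto its image that fixes the origin. -/
structure IsUnivalentDisc (φ : ℂ → ℂ) : Prop where
  isBiholoOn : IsBiholoOn φ (ball 0 1)
  apply_zero : φ 0 = 0

namespace IsUnivalentDisc

variable {φ : ℂ → ℂ} {α : ℝ}

lemma differentiableOn (hφ : IsUnivalentDisc φ) : DifferentiableOn ℂ φ (ball 0 1) :=
  hφ.isBiholoOn.1

lemma injOn (hφ : IsUnivalentDisc φ) : InjOn φ (ball 0 1) :=
  hφ.isBiholoOn.2.1

lemma isOpen_image (hφ : IsUnivalentDisc φ) : IsOpen (φ '' ball 0 1) := by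
  have hhalf : (1 / 2 : ℂ) ∈ ball (0 : ℂ) 1 := by rw [mem_ball_zero_iff]; norm_num
  rcases (hφ.differentiableOn.analyticOnNhd isOpen_ball).is_constant_or_isOpen
    (convex_ball _ _).isPreconnected with ⟨w, hw⟩ | hopen
  · have := hφ.injOn (mem_ball_self one_pos) hhalf
      ((hw 0 (mem_ball_self one_pos)).trans (hw _ hhalf).symm)
    norm_num at this
  · exact hopen _ subset_rfl isOpen_ball

lemma exists_inverse (hφ : IsUnivalentDisc φ) :
    ∃ v : ℂ → ℂ, DifferentiableOn ℂ v (φ '' ball 0 1) ∧ (∀ z ∈ ball (0 : ℂ) 1, v (φ z) = z) ∧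
      deriv v 0 * deriv φ 0 = 1 := by
  obtain ⟨v, hv, hinv⟩ := hφ.isBiholoOn.2.2
  have h0 : (0 : ℂ) ∈ ball (0 : ℂ) 1 := mem_ball_self one_pos
  refine ⟨v, hv, hinv, ?_⟩
  have hφ' : HasDerivAt φ (deriv φ 0) 0 :=
    (hφ.differentiableOn.differentiableAt (isOpen_ball.mem_nhds h0)).hasDerivAt
  have hv' : HasDerivAt v (deriv v 0) (φ 0) := by
    rw [hφ.apply_zero]
    exact (hv.differentiableAt (hφ.isOpen_image.mem_nhds ⟨0, h0, hφ.apply_zero⟩)).hasDerivAt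
  have hid : v ∘ φ =ᶠ[nhds 0] id := Filter.eventually_of_mem (isOpen_ball.mem_nhds h0) hinv
  exact (hv'.comp 0 hφ').unique ((hasDerivAt_id _).congr_of_eventuallyEq hid)

lemma deriv_ne_zero (hφ : IsUnivalentDisc φ) : deriv φ 0 ≠ 0 := by
  obtain ⟨v, -, -, hv⟩ := hφ.exists_inverse
  exact right_ne_zero_of_mul_eq_one hv

lemma differentiableOn_dslope (hφ : IsUnivalentDisc φ) :
    DifferentiableOn ℂ (dslope φ 0) (ball 0 1) :=
  (Complex.differentiableOn_dslope (ball_mem_nhds _ one_pos)).2 hφ.differentiableOn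

lemma mul_dslope (hφ : IsUnivalentDisc φ) (z : ℂ) : z * dslope φ 0 z = φ z := by
  simpa [hφ.apply_zero] using sub_smul_dslope φ 0 z

lemma dslope_ne_zero (hφ : IsUnivalentDisc φ) {z : ℂ} (hz : z ∈ ball (0 : ℂ) 1) :
    dslope φ 0 z ≠ 0 := by
  rcases eq_or_ne z 0 with rfl | hz0
  · rw [dslope_same]
    exact hφ.deriv_ne_zero
  · intro hzero
    refine hz0 (hφ.injOn hz (mem_ball_self one_pos) ?_)
    rw [← hφ.mul_dslope, hzero, mul_zero, hφ.apply_zero]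

lemma exists_isHerglotz (hφ : IsUnivalentDisc φ) (hmaps : MapsTo φ (ball 0 1) (ball 0 1)) {T : ℝ}
    (hT : deriv φ 0 = Complex.exp (-T)) :
    ∃ q, IsHerglotz q T ∧ ∀ z ∈ ball (0 : ℂ) 1, φ z = z * Complex.exp (-q z) := by
  obtain ⟨l, hl, hl0, hexp⟩ := exists_differentiableOn_exp_eq hφ.differentiableOn_dslope
    (fun z hz => hφ.dslope_ne_zero hz) (hT.symm.trans (dslope_same φ 0).symm)
  refine ⟨fun z => -l z, ⟨hl.neg, fun z hz => ?_, by rw [hl0, neg_neg]⟩, fun z hz => ?_⟩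
  · have hmaps' : MapsTo φ (ball 0 1) (closedBall (φ 0) 1) := by
      rw [hφ.apply_zero]
      exact hmaps.mono_right ball_subset_closedBall
    have hle := Complex.norm_dslope_le_div_of_mapsTo_ball hφ.differentiableOn hmaps' hz
    rw [← hexp z hz, Complex.norm_exp, div_one, Real.exp_le_one_iff] at hle
    rwa [Complex.neg_re, neg_nonneg]
  · rw [neg_neg, hexp z hz, hφ.mul_dslope]

/-- A point of the disc omitted by `φ` would make `log (· - a)` single-valued on the circle. -/
lemma ball_subset_image (hφ : IsUnivalentDisc φ) (hsphere : sphere 0 α ⊆ φ '' ball 0 1) :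
    ball 0 α ⊆ φ '' ball 0 1 := by
  intro a ha
  by_contra hna
  obtain ⟨v, hv, hinv, -⟩ := hφ.exists_inverse
  have hne : ∀ z ∈ ball (0 : ℂ) 1, φ z - a ≠ 0 := fun z hz h => hna ⟨z, hz, sub_eq_zero.1 h⟩
  obtain ⟨l, hl, -, hexp⟩ := exists_differentiableOn_exp_eq (hφ.differentiableOn.sub_const a) hne
    (Complex.exp_log (hne 0 (mem_ball_self one_pos)))
  have hlog : ∀ y ∈ sphere (0 : ℂ) α, HasDerivWithinAt (l ∘ v) (y - a)⁻¹ (sphere 0 α) y := by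
    intro y hy
    have hU : φ '' ball 0 1 ∈ nhds y := hφ.isOpen_image.mem_nhds (hsphere hy)
    have hvmaps : MapsTo v (φ '' ball 0 1) (ball 0 1) := by
      rintro _ ⟨z, hz, rfl⟩
      rwa [hinv z hz]
    have hdiff : DifferentiableAt ℂ (l ∘ v) y := (hl.comp hv hvmaps).differentiableAt hU
    have hexp_comp : (fun y => Complex.exp ((l ∘ v) y)) =ᶠ[nhds y] fun y => y - a := by
      filter_upwards [hU]
      rintro _ ⟨z, hz, rfl⟩
      rw [Function.comp_apply, hinv z hz, hexp z hz]
    have hone := hdiff.hasDerivAt.cexp.unique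
      (((hasDerivAt_id y).sub_const a).congr_of_eventuallyEq hexp_comp)
    rw [hexp_comp.eq_of_nhds] at hone
    rw [← eq_inv_of_mul_eq_one_right hone]
    exact hdiff.hasDerivAt.hasDerivWithinAt
  have hzero := circleIntegral.integral_eq_zero_of_hasDerivWithinAt
    (pos_of_mem_ball ha).le hlog
  rw [circleIntegral.integral_sub_inv_of_mem_ball ha] at hzero
  exact Complex.two_pi_I_ne_zero hzero

lemma le_norm_deriv_of_ball_subset_image (hφ : IsUnivalentDisc φ) (hα : 0 < α)
    (hball : ball 0 α ⊆ φ '' ball 0 1) : α ≤ ‖deriv φ 0‖ := by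
  obtain ⟨v, hv, hinv, hderiv⟩ := hφ.exists_inverse
  have hv0 : v 0 = 0 := by simpa [hφ.apply_zero] using hinv 0 (mem_ball_self one_pos)
  have hmaps : MapsTo v (ball 0 α) (closedBall (v 0) 1) := by
    intro y hy
    obtain ⟨z, hz, rfl⟩ := hball hy
    rw [hinv z hz, hv0]
    exact ball_subset_closedBall hz
  have hle := Complex.norm_deriv_le_div_of_mapsTo_ball (hv.mono hball) hmaps hα
  have hprod : ‖deriv v 0‖ * ‖deriv φ 0‖ = 1 := by rw [← norm_mul, hderiv, norm_one]
  rw [le_div_iff₀ hα, ← hprod] at hle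
  exact le_of_mul_le_mul_left hle (norm_pos_iff.2 (left_ne_zero_of_mul_eq_one hderiv))

lemma exists_norm_eq_forall_ne (hφ : IsUnivalentDisc φ) (hα : 0 < α) (hlt : ‖deriv φ 0‖ < α) :
    ∃ a : ℂ, ‖a‖ = α ∧ ∀ z ∈ ball (0 : ℂ) 1, φ z ≠ a := by
  by_contra! hcon
  refine hlt.not_ge (hφ.le_norm_deriv_of_ball_subset_image hα (hφ.ball_subset_image ?_))
  intro a ha
  exact hcon a (mem_sphere_zero_iff_norm.1 ha)

end IsUnivalentDisc

end Univalent

section KoebeMap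

lemma mul_mem_ball {κ z : ℂ} (hκ : ‖κ‖ ≤ 1) (hz : z ∈ ball (0 : ℂ) 1) :
    κ * z ∈ ball (0 : ℂ) 1 := by
  rw [mem_ball_zero_iff] at hz ⊢
  rw [norm_mul]
  exact mul_lt_one_of_nonneg_of_lt_one_right hκ (norm_nonneg z) hz

lemma ofReal_mul_mem_ball {r : ℝ} (hr0 : 0 ≤ r) (hr1 : r ≤ 1) {z : ℂ} (hz : z ∈ ball (0 : ℂ) 1) :
    (r : ℂ) * z ∈ ball (0 : ℂ) 1 :=
  mul_mem_ball (by rwa [Complex.norm_real, Real.norm_of_nonneg hr0]) hz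

/-- The involutive automorphism of the unit disc exchanging `0` and the real number `c`. -/
def discInvolution (c : ℝ) (z : ℂ) : ℂ := (c - z) / (1 - c * z)

/-- The self-map `z ↦ z (ρ - κ z) / (1 - ρ κ z)` of the unit disc through which a univalent
self-map omitting a value factors in Koebe's square-root construction. -/
def koebeMap (ρ : ℝ) (κ z : ℂ) : ℂ := z * discInvolution ρ (κ * z)

section

variable {c : ℝ} (hc0 : 0 ≤ c) (hc1 : c < 1) {z : ℂ}
include hc0 hc1

lemma one_sub_ofReal_mul_ne_zero (hz : z ∈ ball (0 : ℂ) 1) : (1 : ℂ) - c * z ≠ 0 := by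
  intro h
  have hball := ofReal_mul_mem_ball hc0 hc1.le hz
  rw [← sub_eq_zero.1 h, mem_ball_zero_iff, norm_one] at hball
  exact lt_irrefl _ hball

lemma discInvolution_mem_ball (hz : z ∈ ball (0 : ℂ) 1) :
    discInvolution c z ∈ ball (0 : ℂ) 1 := by
  have hden := one_sub_ofReal_mul_ne_zero hc0 hc1 hz
  rw [mem_ball_zero_iff] at hz ⊢
  rw [discInvolution, norm_div, div_lt_one (norm_pos_iff.2 hden)]
  refine lt_of_pow_lt_pow_left₀ 2 (norm_nonneg _) ?_
  have hz2 : ‖z‖ ^ 2 < 1 := pow_lt_one₀ (norm_nonneg z) hz two_ne_zero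
  have hc2 : c ^ 2 < 1 := pow_lt_one₀ hc0 hc1 two_ne_zero
  rw [← Complex.normSq_eq_norm_sq, Complex.normSq_apply] at hz2 ⊢
  rw [← Complex.normSq_eq_norm_sq, Complex.normSq_apply]
  simp only [Complex.sub_re, Complex.sub_im, Complex.mul_re, Complex.mul_im, Complex.ofReal_re,
    Complex.ofReal_im, Complex.one_re, Complex.one_im]
  nlinarith [mul_pos (sub_pos.2 hc2) (sub_pos.2 hz2)]

lemma discInvolution_discInvolution (hz : z ∈ ball (0 : ℂ) 1) :
    discInvolution c (discInvolution c z) = z := by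
  have hden := one_sub_ofReal_mul_ne_zero hc0 hc1 hz
  have hden' := one_sub_ofReal_mul_ne_zero hc0 hc1 (discInvolution_mem_ball hc0 hc1 hz)
  rw [discInvolution, div_eq_iff hden', discInvolution]
  field_simp
  ring

lemma differentiableOn_discInvolution_comp {f : ℂ → ℂ} {s : Set ℂ} (hf : DifferentiableOn ℂ f s)
    (hmaps : MapsTo f s (ball 0 1)) : DifferentiableOn ℂ (fun z => discInvolution c (f z)) s :=
  (hf.const_sub _).fun_div ((hf.const_mul _).const_sub _)
    fun _ hz => one_sub_ofReal_mul_ne_zero hc0 hc1 (hmaps hz)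

lemma differentiableOn_koebeMap {κ : ℂ} (hκ : ‖κ‖ ≤ 1) :
    DifferentiableOn ℂ (koebeMap c κ) (ball 0 1) :=
  differentiableOn_id.mul (differentiableOn_discInvolution_comp hc0 hc1 (by fun_prop)
    fun _ hz => mul_mem_ball hκ hz)

end

lemma hasDerivAt_koebeMap_zero (ρ : ℝ) (κ : ℂ) : HasDerivAt (koebeMap ρ κ) ρ 0 := by
  have hlin : HasDerivAt (fun z : ℂ => κ * z) (κ * 1) 0 := (hasDerivAt_id (0 : ℂ)).const_mul κ
  have hprod := (hasDerivAt_id (0 : ℂ)).mul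
    ((hlin.const_sub (ρ : ℂ)).div ((hlin.const_mul (ρ : ℂ)).const_sub 1) (by simp))
  exact hprod.congr_deriv (by simp)

lemma exists_isHerglotz_koebeMap {ρ : ℝ} (hρ0 : 0 < ρ) (hρ1 : ρ < 1) {κ : ℂ} (hκ : ‖κ‖ ≤ 1) :
    ∃ s, IsHerglotz s (-Real.log ρ) ∧
      ∀ z ∈ ball (0 : ℂ) 1, koebeMap ρ κ (ρ * z) = ρ * z * Complex.exp (-s z) := by
  have hmaps : MapsTo (fun z : ℂ => κ * (ρ * z)) (ball 0 1) (ball 0 1) := fun z hz =>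
    mul_mem_ball hκ (ofReal_mul_mem_ball hρ0.le hρ1.le hz)
  have hdiff : DifferentiableOn ℂ (fun z => discInvolution ρ (κ * (ρ * z))) (ball 0 1) :=
    differentiableOn_discInvolution_comp hρ0.le hρ1 (by fun_prop) hmaps
  have hne : ∀ z ∈ ball (0 : ℂ) 1, discInvolution ρ (κ * (ρ * z)) ≠ 0 := by
    intro z hz
    refine div_ne_zero ?_ (one_sub_ofReal_mul_ne_zero hρ0.le hρ1 (hmaps hz))
    have hnum : (ρ : ℂ) - κ * (ρ * z) = ρ * (1 - κ * z) := by ring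
    have hκz := mem_ball_zero_iff.1 (mul_mem_ball hκ hz)
    rw [hnum]
    refine mul_ne_zero (by exact_mod_cast hρ0.ne') fun h => ?_
    rw [← sub_eq_zero.1 h, norm_one] at hκz
    exact lt_irrefl _ hκz
  have hlog : Complex.exp (Real.log ρ) = discInvolution ρ (κ * (ρ * 0)) := by
    rw [← Complex.ofReal_exp, Real.exp_log hρ0]
    simp [discInvolution]
  obtain ⟨l, hl, hl0, hlexp⟩ := exists_differentiableOn_exp_eq hdiff hne hlog
  refine ⟨fun z => -l z, ⟨hl.neg, fun z hz => ?_, by simp [hl0]⟩, fun z hz => ?_⟩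
  · have hlt := mem_ball_zero_iff.1 (discInvolution_mem_ball hρ0.le hρ1 (hmaps hz))
    rw [← hlexp z hz, Complex.norm_exp, Real.exp_lt_one_iff] at hlt
    rw [Complex.neg_re]
    exact neg_nonneg.2 hlt.le
  · rw [neg_neg, hlexp z hz, koebeMap]

section

variable {b : ℝ} (hb0 : 0 < b) (hb1 : b < 1)
include hb0 hb1

lemma two_mul_div_one_add_sq_lt_one : 2 * b / (1 + b ^ 2) < 1 := by
  rw [div_lt_one (by positivity)]
  nlinarith [sq_pos_of_pos (sub_pos.2 hb1)]

lemma discInvolution_sq_discInvolution {v : ℂ} (hv : v ∈ ball (0 : ℂ) 1) :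
    discInvolution (b ^ 2) (discInvolution b v ^ 2) =
      v * discInvolution (2 * b / (1 + b ^ 2)) v := by
  have hb2 : b ^ 2 < 1 := pow_lt_one₀ hb0.le hb1 two_ne_zero
  have hMv : discInvolution b v ^ 2 ∈ ball (0 : ℂ) 1 := by
    rw [sq]
    have hM := discInvolution_mem_ball hb0.le hb1 hv
    exact mul_mem_ball (mem_ball_zero_iff.1 hM).le hM
  have hden := one_sub_ofReal_mul_ne_zero hb0.le hb1 hv
  have hden₂ := one_sub_ofReal_mul_ne_zero (by positivity) hb2 hMv
  have hdenρ := one_sub_ofReal_mul_ne_zero (by positivity)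
    (two_mul_div_one_add_sq_lt_one hb0 hb1) hv
  have hb3 : (1 : ℂ) + b ^ 2 ≠ 0 := by exact_mod_cast (by positivity : (1 + b ^ 2 : ℝ) ≠ 0)
  rw [discInvolution, discInvolution.eq_1 (2 * b / (1 + b ^ 2)), ← mul_div_assoc,
    div_eq_div_iff hden₂ hdenρ, discInvolution]
  push_cast
  field_simp
  ring

end

end KoebeMap

section SquareRootStep

lemma exists_differentiableOn_sq_eq {p : ℂ → ℂ} {x b : ℂ} {R : ℝ} (hR : 0 < R)
    (hp : DifferentiableOn ℂ p (ball x R)) (hne : ∀ z ∈ ball x R, p z ≠ 0) (hb : b ^ 2 = p x) :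
    ∃ g : ℂ → ℂ, DifferentiableOn ℂ g (ball x R) ∧ g x = b ∧ ∀ z ∈ ball x R, g z ^ 2 = p z := by
  have hb0 : b ≠ 0 := by
    rintro rfl
    exact hne x (mem_ball_self hR) (by simpa using hb.symm)
  have hlog : Complex.exp (2 * Complex.log b) = p x := by
    rw [← hb, two_mul, Complex.exp_add, Complex.exp_log hb0, sq]
  obtain ⟨l, hl, hlx, hlexp⟩ := exists_differentiableOn_exp_eq hp hne hlog
  refine ⟨fun z => Complex.exp (l z / 2), (hl.div_const 2).cexp, ?_, fun z hz => ?_⟩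
  · beta_reduce
    rw [hlx, mul_div_cancel_left₀ _ two_ne_zero, Complex.exp_log hb0]
  · rw [← Complex.exp_nat_mul, ← hlexp z hz]
    congr 1
    push_cast
    ring

variable {w : ℂ → ℂ}

lemma IsUnivalentDisc.of_comp_eqOn (hw : IsUnivalentDisc w) {k u : ℂ → ℂ}
    (hk : DifferentiableOn ℂ k (ball 0 1)) (hu : DifferentiableOn ℂ u (ball 0 1))
    (humaps : MapsTo u (ball 0 1) (ball 0 1)) (hu0 : u 0 = 0) (hkw : EqOn w (k ∘ u) (ball 0 1)) :
    IsUnivalentDisc u := by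
  obtain ⟨-, hinj, v, hv, hvw⟩ := hw.isBiholoOn
  refine ⟨⟨hu, fun z hz z' hz' h => hinj hz hz' ?_, v ∘ k, hv.comp (hk.mono ?_) ?_, ?_⟩, hu0⟩
  · rw [hkw hz, hkw hz', Function.comp_apply, Function.comp_apply, h]
  · exact humaps.image_subset
  · rintro _ ⟨z, hz, rfl⟩
    exact ⟨z, hz, hkw hz⟩
  · intro z hz
    rw [Function.comp_apply, ← Function.comp_apply (f := k), ← hkw hz, hvw z hz]

lemma IsUnivalentDisc.exists_eqOn_koebeMap_comp (hw : IsUnivalentDisc w)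
    (hmaps : MapsTo w (ball 0 1) (ball 0 1)) {b : ℝ} (hb0 : 0 < b) (hb1 : b < 1) {a : ℂ}
    (ha : ‖a‖ = b ^ 2) (hne : ∀ z ∈ ball (0 : ℂ) 1, w z ≠ a) :
    ∃ (κ : ℂ) (u : ℂ → ℂ), ‖κ‖ = 1 ∧ IsUnivalentDisc u ∧ MapsTo u (ball 0 1) (ball 0 1) ∧
      EqOn w (koebeMap (2 * b / (1 + b ^ 2)) κ ∘ u) (ball 0 1) := by
  have hb2 : b ^ 2 < 1 := pow_lt_one₀ hb0.le hb1 two_ne_zero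
  obtain ⟨κ, hκ, hκa⟩ : ∃ κ : ℂ, ‖κ‖ = 1 ∧ κ * a = (b ^ 2 : ℝ) := by
    obtain ⟨κ, hκ, hκa⟩ := RCLike.exists_norm_eq_mul_self a
    exact ⟨κ, hκ, by rw [← hκa, ha]; rfl⟩
  have hκ0 : κ ≠ 0 := norm_ne_zero_iff.1 (by rw [hκ]; exact one_ne_zero)
  have hκw : MapsTo (fun z => κ * w z) (ball 0 1) (ball 0 1) := fun z hz =>
    mul_mem_ball hκ.le (hmaps hz)
  have hp : DifferentiableOn ℂ (fun z => discInvolution (b ^ 2) (κ * w z)) (ball 0 1) :=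
    differentiableOn_discInvolution_comp (by positivity) hb2 (hw.differentiableOn.const_mul κ) hκw
  have hp0 : ∀ z ∈ ball (0 : ℂ) 1, discInvolution (b ^ 2) (κ * w z) ≠ 0 := by
    intro z hz
    refine div_ne_zero ?_ (one_sub_ofReal_mul_ne_zero (by positivity) hb2 (hκw hz))
    rw [← hκa, ← mul_sub]
    exact mul_ne_zero hκ0 (sub_ne_zero.2 (hne z hz).symm)
  obtain ⟨g, hg, hg0, hgsq⟩ := exists_differentiableOn_sq_eq (b := b) one_pos hp hp0
    (by simp [discInvolution, hw.apply_zero])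
  have hgmaps : MapsTo g (ball 0 1) (ball 0 1) := by
    intro z hz
    have hlt := mem_ball_zero_iff.1 (discInvolution_mem_ball (by positivity) hb2 (hκw hz))
    rw [← hgsq z hz, norm_pow] at hlt
    exact mem_ball_zero_iff.2 ((pow_lt_one_iff_of_nonneg (norm_nonneg _) two_ne_zero).1 hlt)
  have humaps : MapsTo (fun z => κ⁻¹ * discInvolution b (g z)) (ball 0 1) (ball 0 1) := fun z hz =>
    mul_mem_ball (by rw [norm_inv, hκ, inv_one]) (discInvolution_mem_ball hb0.le hb1 (hgmaps hz))
  have hfactor : EqOn w (koebeMap (2 * b / (1 + b ^ 2)) κ ∘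
      fun z => κ⁻¹ * discInvolution b (g z)) (ball 0 1) := by
    intro z hz
    have hv := discInvolution_mem_ball hb0.le hb1 (hgmaps hz)
    rw [Function.comp_apply, koebeMap, mul_inv_cancel_left₀ hκ0, mul_assoc,
      ← discInvolution_sq_discInvolution hb0 hb1 hv,
      discInvolution_discInvolution hb0.le hb1 (hgmaps hz), hgsq z hz,
      discInvolution_discInvolution (by positivity) hb2 (hκw hz), inv_mul_cancel_left₀ hκ0]
  refine ⟨κ, _, hκ, hw.of_comp_eqOn (differentiableOn_koebeMap (by positivity)
    (two_mul_div_one_add_sq_lt_one hb0 hb1) hκ.le) ?_ humaps ?_ hfactor, humaps, hfactor⟩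
  · exact (differentiableOn_discInvolution_comp hb0.le hb1 hg hgmaps).const_mul _
  · simp [hg0, discInvolution]

lemma IsUnivalentDisc.deriv_of_eqOn_koebeMap_comp {u : ℂ → ℂ} (hu : IsUnivalentDisc u) {κ : ℂ}
    {ρ T : ℝ} (hρ : 0 < ρ) (hfactor : EqOn w (koebeMap ρ κ ∘ u) (ball 0 1))
    (hT : deriv w 0 = Complex.exp (-T)) : deriv u 0 = Complex.exp (-(T + Real.log ρ : ℝ)) := by
  have hball : ball (0 : ℂ) 1 ∈ nhds 0 := ball_mem_nhds _ one_pos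
  have hu' := (hu.differentiableOn.differentiableAt hball).hasDerivAt
  have hcomp : HasDerivAt (koebeMap ρ κ ∘ u) (ρ * deriv u 0) 0 :=
    HasDerivAt.comp (0 : ℂ) (by rw [hu.apply_zero]; exact hasDerivAt_koebeMap_zero ρ κ) hu'
  have hderiv := (hcomp.congr_of_eventuallyEq (hfactor.eventuallyEq_of_mem hball)).deriv
  have hlog : Complex.exp (Real.log ρ) = ρ := by rw [← Complex.ofReal_exp, Real.exp_log hρ]
  have hρ0 : (ρ : ℂ) ≠ 0 := by exact_mod_cast hρ.ne'
  push_cast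
  rw [neg_add, Complex.exp_add, ← hT, hderiv, Complex.exp_neg, hlog, mul_comm (ρ : ℂ),
    mul_inv_cancel_right₀ hρ0]

end SquareRootStep

section LoewnerChain

lemma logComp_zero_left (s : ℂ → ℂ) : logComp (fun _ => 0) s = s := by
  funext z
  rw [logComp, add_zero]

lemma logComp_assoc (q s u : ℂ → ℂ) :
    logComp q (logComp s u) = logComp (logComp q s) u := by
  funext z
  simp only [logComp]
  rw [neg_add, Complex.exp_add, ← mul_assoc]
  ring

lemma IsHerglotz.comp_ofReal_mul {q : ℂ → ℂ} {T r : ℝ} (hq : IsHerglotz q T) (hr0 : 0 ≤ r)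
    (hr1 : r ≤ 1) : IsHerglotz (fun z => q (r * z)) T where
  differentiableOn := hq.differentiableOn.comp (by fun_prop) fun _ hz =>
    ofReal_mul_mem_ball hr0 hr1 hz
  re_nonneg z hz := hq.re_nonneg _ (ofReal_mul_mem_ball hr0 hr1 hz)
  apply_zero := by rw [mul_zero, hq.apply_zero]

section Step

variable {P : (ℂ → ℂ) → ℝ → Prop} {Tm ε : ℝ}
  (hstep : ∀ {q s : ℂ → ℂ} {T h : ℝ}, IsHerglotz q T → IsHerglotz s h → T + h ≤ Tm → h ≤ ε →
    P q T → P (logComp q s) (T + h))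
include hstep

lemma IsUnivalentDisc.exists_logComp_of_le {ρ : ℝ} (hρ0 : 0 ≤ ρ) (hρ1 : ρ ≤ 1) {w : ℂ → ℂ} {T : ℝ}
    (hw : IsUnivalentDisc w) (hmaps : MapsTo w (ball 0 1) (ball 0 1))
    (hT : deriv w 0 = Complex.exp (-T)) (hTε : T ≤ ε) {Q₀ : ℂ → ℂ} {T₀ : ℝ}
    (hQ₀ : IsHerglotz Q₀ T₀) (hP : P Q₀ T₀) (hTm : T₀ + T ≤ Tm) :
    ∃ Q, IsHerglotz Q T ∧ (∀ z ∈ ball (0 : ℂ) 1, w (ρ * z) = ρ * z * Complex.exp (-Q z)) ∧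
      P (logComp Q₀ Q) (T₀ + T) := by
  obtain ⟨q, hq, hwq⟩ := hw.exists_isHerglotz hmaps hT
  have hQ := hq.comp_ofReal_mul hρ0 hρ1
  exact ⟨_, hQ, fun z hz => hwq _ (ofReal_mul_mem_ball hρ0 hρ1 hz), hstep hQ₀ hQ hTm hTε hP⟩

/-- Each square-root step splits off a factor `koebeMap ρ κ` and lowers the total time `T` by
`-log ρ`, until `T ≤ ε`. A step is available as long as `exp (-T) < b ^ 2`, because then `w` omits
a point of modulus `b ^ 2`. -/
lemma IsUnivalentDisc.exists_logComp {b : ℝ} (hb0 : 0 < b) (hb1 : b < 1)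
    (hbε : -Real.log (b ^ 2) ≤ ε) (N : ℕ) {w : ℂ → ℂ} {T : ℝ} (hw : IsUnivalentDisc w)
    (hmaps : MapsTo w (ball 0 1) (ball 0 1)) (hT : deriv w 0 = Complex.exp (-T))
    (hTN : T ≤ N * (-Real.log (2 * b / (1 + b ^ 2)))) {Q₀ : ℂ → ℂ} {T₀ : ℝ}
    (hQ₀ : IsHerglotz Q₀ T₀) (hP : P Q₀ T₀) (hTm : T₀ + T ≤ Tm) :
    ∃ Q, IsHerglotz Q T ∧
      (∀ z ∈ ball (0 : ℂ) 1, w ((2 * b / (1 + b ^ 2) : ℝ) * z) =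
        (2 * b / (1 + b ^ 2) : ℝ) * z * Complex.exp (-Q z)) ∧
      P (logComp Q₀ Q) (T₀ + T) := by
  set ρ := 2 * b / (1 + b ^ 2)
  have hρ0 : 0 < ρ := by positivity
  have hρ1 : ρ < 1 := two_mul_div_one_add_sq_lt_one hb0 hb1
  have hbρ : b ^ 2 ≤ ρ := by
    have hb2 : b ^ 2 ≤ b := by nlinarith
    rw [le_div_iff₀ (by positivity)]
    nlinarith [mul_nonneg (sq_nonneg b) (sub_nonneg.2 hb2)]
  have hρε : -Real.log ρ ≤ ε := by linarith [Real.log_le_log (by positivity) hbρ]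
  induction N generalizing w T Q₀ T₀ with
  | zero =>
    rw [Nat.cast_zero, zero_mul] at hTN
    have hρpos := neg_pos.2 (Real.log_neg hρ0 hρ1)
    exact hw.exists_logComp_of_le hstep hρ0.le hρ1.le hmaps hT (by linarith) hQ₀ hP hTm
  | succ N ih =>
    obtain hTε | hTε := le_or_gt T ε
    · exact hw.exists_logComp_of_le hstep hρ0.le hρ1.le hmaps hT hTε hQ₀ hP hTm
    have hsmall : ‖deriv w 0‖ < b ^ 2 := by
      rw [hT, Complex.norm_exp, Complex.neg_re, Complex.ofReal_re,
        ← Real.lt_log_iff_exp_lt (by positivity)]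
      linarith
    obtain ⟨a, ha, hne⟩ := hw.exists_norm_eq_forall_ne (by positivity) hsmall
    obtain ⟨κ, u, hκ, hu, humaps, hfactor⟩ := hw.exists_eqOn_koebeMap_comp hmaps hb0 hb1 ha hne
    obtain ⟨s, hs, hks⟩ := exists_isHerglotz_koebeMap hρ0 hρ1 hκ.le
    have hsum : -Real.log ρ + (T + Real.log ρ) = T := by ring
    obtain ⟨Q, hQ, huQ, hPQ⟩ := ih hu humaps (hu.deriv_of_eqOn_koebeMap_comp hρ0 hfactor hT)
      (hQ₀.logComp hs) (hstep hQ₀ hs (by linarith) hρε hP) (by linarith)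
      (by push_cast at hTN; linarith)
    refine ⟨logComp s Q, hsum ▸ hs.logComp hQ, fun z hz => ?_, ?_⟩
    · rw [hfactor (ofReal_mul_mem_ball hρ0.le hρ1.le hz), Function.comp_apply, huQ z hz, mul_assoc,
        hks _ (mul_exp_neg_mem_ball hz (hQ.re_nonneg z hz)), logComp, neg_add, Complex.exp_add]
      ring
    · rwa [logComp_assoc, ← hsum, ← add_assoc]

end Step

end LoewnerChain

/-! ### The Milin and Lebedev–Milin inequalities -/

section BoundedMilin

lemma milinFunctional_congr {q₁ q₂ : ℂ → ℂ} (h : EqOn q₁ q₂ (ball 0 1)) (n : ℕ) (t : ℝ) :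
    milinFunctional n q₁ t = milinFunctional n q₂ t := by
  simp only [milinFunctional, taylorCoeff_congr one_pos h]

lemma continuous_milinFunctional_comp_mul (n : ℕ) (q : ℂ → ℂ) (t : ℝ) :
    Continuous fun c : ℂ => milinFunctional n (fun z => q (c * z)) t := by
  simp only [milinFunctional, taylorCoeff_comp_const_mul]
  fun_prop

variable {w q : ℂ → ℂ} {T : ℝ}

lemma IsHerglotz.deriv_of_eqOn_mul_exp_neg (hq : IsHerglotz q T)
    (hwq : EqOn w (fun z => z * Complex.exp (-q z)) (ball 0 1)) :
    deriv w 0 = Complex.exp (-T) := by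
  have hball : ball (0 : ℂ) 1 ∈ nhds 0 := ball_mem_nhds _ one_pos
  have hq' := (hq.differentiableOn.differentiableAt hball).hasDerivAt
  have hderiv := (hasDerivAt_id (0 : ℂ)).fun_mul hq'.fun_neg.cexp
  rw [(hderiv.congr_of_eventuallyEq (hwq.eventuallyEq_of_mem hball)).deriv]
  simp [hq.apply_zero]

lemma IsHerglotz.eqOn_of_mul_exp_neg_eq {Q : ℂ → ℂ} {r : ℝ} (hq : IsHerglotz q T)
    (hQ : IsHerglotz Q T) (hr0 : 0 < r) (hr1 : r ≤ 1)
    (hexp : ∀ z ∈ ball (0 : ℂ) 1,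
      r * z * Complex.exp (-Q z) = r * z * Complex.exp (-q (r * z))) :
    EqOn Q (fun z => q (r * z)) (ball 0 1) := by
  have hqr := hq.comp_ofReal_mul hr0.le hr1
  have hneg := eqOn_of_exp_eqOn hQ.differentiableOn.neg hqr.differentiableOn.neg
    (by simp [hQ.apply_zero, hq.apply_zero]) fun z hz => ?_
  · exact fun z hz => neg_injective (hneg hz)
  · obtain rfl | hz0 := eq_or_ne z 0
    · simp [hQ.apply_zero, hq.apply_zero]
    · exact mul_left_cancel₀ (mul_ne_zero (by exact_mod_cast hr0.ne') hz0) (hexp z hz)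

lemma IsUnivalentDisc.milinFunctional_le_mul (n : ℕ) (hw : IsUnivalentDisc w)
    (hmaps : MapsTo w (ball 0 1) (ball 0 1)) (hq : IsHerglotz q T)
    (hwq : EqOn w (fun z => z * Complex.exp (-q z)) (ball 0 1)) {η : ℝ} (hη : 0 < η) :
    milinFunctional n q 0 ≤ η * T := by
  obtain ⟨ε, hε, hstep⟩ := exists_forall_milinFunctional_logComp_le n T hη
  have hcont : Continuous fun b : ℝ =>
      milinFunctional n (fun z => q ((2 * b / (1 + b ^ 2) : ℝ) * z)) 0 :=
    (continuous_milinFunctional_comp_mul n q 0).comp (Complex.continuous_ofReal.comp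
      (Continuous.div (by fun_prop) (by fun_prop) fun b => by positivity))
  have hlim := (hcont.tendsto 1).mono_left (nhdsWithin_le_nhds (s := Iio 1))
  norm_num only [Complex.ofReal_one, one_mul] at hlim
  have hε_lt : Real.exp (-ε) < (1 : ℝ) ^ 2 := by
    rw [one_pow]
    exact Real.exp_lt_one_iff.2 (neg_lt_zero.2 hε)
  refine le_of_tendsto hlim ?_
  filter_upwards [nhdsWithin_le_nhds (((continuous_pow 2).tendsto (1 : ℝ)).eventually_const_lt
    hε_lt), nhdsWithin_le_nhds (eventually_gt_nhds one_pos), self_mem_nhdsWithin] with b hbε hb0 hb1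
  have hρ0 : 0 < 2 * b / (1 + b ^ 2) := by positivity
  have hρ1 := two_mul_div_one_add_sq_lt_one hb0 hb1
  have hlog : -Real.log (b ^ 2) ≤ ε :=
    neg_le.1 ((Real.lt_log_iff_exp_lt (by positivity)).2 hbε).le
  obtain ⟨N, hN⟩ := exists_nat_ge (T / -Real.log (2 * b / (1 + b ^ 2)))
  rw [div_le_iff₀ (neg_pos.2 (Real.log_neg hρ0 hρ1))] at hN
  obtain ⟨Q, hQ, hwQ, hmilin⟩ := hw.exists_logComp (Q₀ := fun _ => 0) (T₀ := 0) (Tm := T)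
    (P := fun q T => ∀ t, 0 ≤ t → milinFunctional n q t ≤ η * T)
    (fun hq hs hTm hh hle => hstep hq hs (by linarith [hs.nonneg]) hh hle) hb0 hb1 hlog N hmaps
    (hq.deriv_of_eqOn_mul_exp_neg hwq) hN ⟨by fun_prop, by simp, by simp⟩
    (fun t ht => by simpa using milinFunctional_zero_nonpos n ht) (zero_add T).le
  have hQq := hq.eqOn_of_mul_exp_neg_eq hQ hρ0 hρ1.le fun z hz =>
    (hwQ z hz).symm.trans (hwq (ofReal_mul_mem_ball hρ0.le hρ1.le hz))
  rw [← milinFunctional_congr hQq]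
  simpa only [logComp_zero_left, zero_add] using hmilin 0 le_rfl

lemma IsUnivalentDisc.milinFunctional_zero_nonpos (n : ℕ) (hw : IsUnivalentDisc w)
    (hmaps : MapsTo w (ball 0 1) (ball 0 1)) (hq : IsHerglotz q T)
    (hwq : EqOn w (fun z => z * Complex.exp (-q z)) (ball 0 1)) : milinFunctional n q 0 ≤ 0 := by
  have hT := hq.nonneg
  refine le_of_forall_pos_le_add fun δ hδ => ?_
  calc milinFunctional n q 0 ≤ δ / (T + 1) * T :=
        hw.milinFunctional_le_mul n hmaps hq hwq (by positivity)
    _ ≤ 0 + δ := by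
        rw [div_mul_eq_mul_div, div_le_iff₀ (by positivity)]
        nlinarith

end BoundedMilin

section Milin

variable {φ l : ℂ → ℂ} {r : ℝ}

lemma milinFunctional_const_sub {q : ℂ → ℂ} (hq : AnalyticAt ℂ q 0) (n : ℕ) (c : ℂ) (t : ℝ) :
    milinFunctional n (fun z => c - q z) t = milinFunctional n q t := by
  refine Finset.sum_congr rfl fun k hk => ?_
  rw [taylorCoeff_sub analyticAt_const hq, taylorCoeff_const_of_pos (Finset.mem_Icc.1 hk).1,
    zero_sub, norm_neg]

namespace IsUnivalentDisc

lemma const_mul_comp_mul (hφ : IsUnivalentDisc φ) {μ : ℂ} (hμ : μ ≠ 0) (hr0 : 0 < r)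
    (hr1 : r ≤ 1) : IsUnivalentDisc (fun z => μ * φ (r * z)) := by
  have hr : (r : ℂ) ≠ 0 := by exact_mod_cast hr0.ne'
  have hmem : ∀ z ∈ ball (0 : ℂ) 1, (r : ℂ) * z ∈ ball (0 : ℂ) 1 := fun z hz =>
    ofReal_mul_mem_ball hr0.le hr1 hz
  obtain ⟨v, hv, hinv, -⟩ := hφ.exists_inverse
  refine ⟨⟨(hφ.differentiableOn.comp (by fun_prop) hmem).const_mul μ, ?_,
    fun y => v (μ⁻¹ * y) / r, (hv.comp (by fun_prop) ?_).div_const _, fun z hz => ?_⟩, ?_⟩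
  · intro z hz z' hz' h
    exact mul_left_cancel₀ hr (hφ.injOn (hmem z hz) (hmem z' hz') (mul_left_cancel₀ hμ h))
  · rintro _ ⟨z, hz, rfl⟩
    exact ⟨r * z, hmem z hz, (inv_mul_cancel_left₀ hμ _).symm⟩
  · beta_reduce
    rw [inv_mul_cancel_left₀ hμ, hinv _ (hmem z hz), mul_div_cancel_left₀ _ hr]
  · rw [mul_zero, hφ.apply_zero, mul_zero]

lemma exists_const_mul_comp_mul_mapsTo (hφ : IsUnivalentDisc φ) (hr0 : 0 < r) (hr1 : r < 1) :
    ∃ (μ : ℂ) (T : ℝ), μ ≠ 0 ∧ μ * (r * deriv φ 0) = Complex.exp (-T) ∧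
      MapsTo (fun z => μ * φ (r * z)) (ball 0 1) (ball 0 1) := by
  obtain ⟨M, hM⟩ := (isCompact_closedBall (0 : ℂ) r).exists_bound_of_continuousOn
    (hφ.differentiableOn.continuousOn.mono (closedBall_subset_ball hr1))
  have hMpos : 0 < |M| + 1 := by positivity
  obtain ⟨c, hc, hcφ⟩ := RCLike.exists_norm_eq_mul_self (deriv φ 0)
  have hderiv : 0 < ‖deriv φ 0‖ := norm_pos_iff.2 hφ.deriv_ne_zero
  refine ⟨c / (|M| + 1 : ℝ), -Real.log (r * ‖deriv φ 0‖ / (|M| + 1)), ?_, ?_, fun z hz => ?_⟩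
  · exact div_ne_zero (norm_ne_zero_iff.1 (by rw [hc]; exact one_ne_zero))
      (by exact_mod_cast hMpos.ne')
  · rw [Complex.ofReal_neg, neg_neg, ← Complex.ofReal_exp, Real.exp_log (by positivity),
      Complex.ofReal_div, Complex.ofReal_mul,
      show ((‖deriv φ 0‖ : ℝ) : ℂ) = c * deriv φ 0 from hcφ]
    ring
  · have hbound : ‖φ (r * z)‖ ≤ M := hM _ <| by
      rw [mem_closedBall_zero_iff, norm_mul, Complex.norm_of_nonneg hr0.le]
      exact mul_le_of_le_one_right hr0.le (mem_ball_zero_iff.1 hz).le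
    rw [mem_ball_zero_iff, norm_mul, norm_div, hc, Complex.norm_of_nonneg hMpos.le,
      one_div_mul_eq_div, div_lt_one hMpos]
    linarith [le_abs_self M]

lemma exists_log (hφ : IsUnivalentDisc φ) :
    ∃ l : ℂ → ℂ, DifferentiableOn ℂ l (ball 0 1) ∧ l 0 = 0 ∧
      EqOn φ (fun z => z * (deriv φ 0 * Complex.exp (l z))) (ball 0 1) := by
  obtain ⟨l, hl, hl0, hexp⟩ := exists_differentiableOn_exp_eq (c := 0)
    (hφ.differentiableOn_dslope.div_const (deriv φ 0))
    (fun z hz => div_ne_zero (hφ.dslope_ne_zero hz) hφ.deriv_ne_zero)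
    (by rw [Complex.exp_zero, dslope_same, div_self hφ.deriv_ne_zero])
  refine ⟨l, hl, hl0, fun z hz => ?_⟩
  beta_reduce
  rw [hexp z hz, mul_div_cancel₀ _ hφ.deriv_ne_zero, hφ.mul_dslope]

variable (hφ : IsUnivalentDisc φ) (hl : DifferentiableOn ℂ l (ball 0 1)) (hl0 : l 0 = 0)
  (hφl : EqOn φ (fun z => z * (deriv φ 0 * Complex.exp (l z))) (ball 0 1))
include hφ hl hl0 hφl

lemma milinFunctional_comp_mul_nonpos (n : ℕ) (hr0 : 0 < r) (hr1 : r < 1) :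
    milinFunctional n (fun z => l (r * z)) 0 ≤ 0 := by
  have hmem : ∀ z ∈ ball (0 : ℂ) 1, (r : ℂ) * z ∈ ball (0 : ℂ) 1 := fun z hz =>
    ofReal_mul_mem_ball hr0.le hr1.le hz
  have hlr : DifferentiableOn ℂ (fun z => l (r * z)) (ball 0 1) := hl.comp (by fun_prop) hmem
  obtain ⟨μ, T, hμ, hμT, hmaps⟩ := hφ.exists_const_mul_comp_mul_mapsTo hr0 hr1
  have hw := hφ.const_mul_comp_mul hμ hr0 hr1.le
  have hderiv : deriv (fun z => μ * φ (r * z)) 0 = Complex.exp (-T) := by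
    rw [deriv_const_mul_field, deriv_comp_mul_left, mul_zero, smul_eq_mul, hμT]
  obtain ⟨q, hq, hwq⟩ := hw.exists_isHerglotz hmaps hderiv
  have hql : EqOn (fun z => -q z) (fun z => l (r * z) + -T) (ball 0 1) := by
    refine eqOn_of_exp_eqOn hq.differentiableOn.neg (hlr.add_const _)
      (by simp [hq.apply_zero, hl0]) fun z hz => ?_
    obtain rfl | hz0 := eq_or_ne z 0
    · simp [hq.apply_zero, hl0]
    · refine mul_left_cancel₀ hz0 ((hwq z hz).symm.trans ?_)
      rw [hφl (hmem z hz), Complex.exp_add, ← hμT]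
      ring
  have hq_eq : EqOn q (fun z => T - l (r * z)) (ball 0 1) := fun z hz => by
    linear_combination -hql hz
  rw [← milinFunctional_const_sub (hlr.analyticAt (ball_mem_nhds _ one_pos)) n T 0,
    ← milinFunctional_congr hq_eq]
  exact hw.milinFunctional_zero_nonpos n hmaps hq hwq

lemma milinFunctional_log_nonpos (n : ℕ) : milinFunctional n l 0 ≤ 0 := by
  have hlim := (((continuous_milinFunctional_comp_mul n l 0).comp
    Complex.continuous_ofReal).tendsto 1).mono_left (nhdsWithin_le_nhds (s := Iio 1))
  simp only [Function.comp_apply, Complex.ofReal_one, one_mul] at hlim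
  refine le_of_tendsto hlim ?_
  filter_upwards [nhdsWithin_le_nhds (eventually_gt_nhds one_pos), self_mem_nhdsWithin]
    with r hr0 hr1 using hφ.milinFunctional_comp_mul_nonpos hl hl0 hφl n hr0 hr1

end IsUnivalentDisc

end Milin

section LebedevMilin

lemma taylorCoeff_succ_cexp {f : ℂ → ℂ} (hf : AnalyticAt ℂ f 0) (k : ℕ) :
    (k + 1) * taylorCoeff (k + 1) (fun z => Complex.exp (f z)) =
      ∑ j ∈ Finset.range (k + 1), (j + 1) * taylorCoeff (j + 1) f *
        taylorCoeff (k - j) (fun z => Complex.exp (f z)) := by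
  have hderiv : deriv (fun z => Complex.exp (f z)) =ᶠ[nhds 0]
      fun z => deriv f z * Complex.exp (f z) := by
    filter_upwards [hf.eventually_analyticAt] with z hz
    rw [hz.differentiableAt.hasDerivAt.cexp.deriv, mul_comm]
  rw [← taylorCoeff_deriv, taylorCoeff, hderiv.iteratedDeriv_eq, ← taylorCoeff,
    taylorCoeff_mul (g := fun z => Complex.exp (f z)) hf.deriv hf.cexp]
  simp only [taylorCoeff_deriv]

lemma sq_mul_normSq_taylorCoeff_succ_cexp_le {f : ℂ → ℂ} (hf : AnalyticAt ℂ f 0) (k : ℕ) :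
    ((k : ℝ) + 1) ^ 2 * ‖taylorCoeff (k + 1) (fun z => Complex.exp (f z))‖ ^ 2 ≤
      (∑ j ∈ Finset.range (k + 1), ((j + 1) * ‖taylorCoeff (j + 1) f‖) ^ 2) *
        ∑ j ∈ Finset.range (k + 1), ‖taylorCoeff j (fun z => Complex.exp (f z))‖ ^ 2 := by
  have hnorm (j : ℕ) : ‖(j : ℂ) + 1‖ = j + 1 := by
    exact_mod_cast Complex.norm_natCast (j + 1)
  calc ((k : ℝ) + 1) ^ 2 * ‖taylorCoeff (k + 1) (fun z => Complex.exp (f z))‖ ^ 2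
      = ‖∑ j ∈ Finset.range (k + 1), (j + 1) * taylorCoeff (j + 1) f *
          taylorCoeff (k - j) (fun z => Complex.exp (f z))‖ ^ 2 := by
        rw [← taylorCoeff_succ_cexp hf, norm_mul, mul_pow, hnorm]
    _ ≤ (∑ j ∈ Finset.range (k + 1), (j + 1) * ‖taylorCoeff (j + 1) f‖ *
          ‖taylorCoeff (k - j) (fun z => Complex.exp (f z))‖) ^ 2 := by
        refine pow_le_pow_left₀ (norm_nonneg _) (norm_sum_le_of_le _ fun j _ => ?_) 2
        rw [norm_mul, norm_mul, hnorm]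
    _ ≤ _ := by
        refine (Finset.sum_mul_sq_le_sq_mul_sq _ _ _).trans_eq (congrArg _ ?_)
        exact Finset.sum_range_reflect
          (fun j => ‖taylorCoeff j (fun z => Complex.exp (f z))‖ ^ 2) (k + 1)

/-- The exponent in the second Lebedev–Milin inequality. -/
def lebedevMilinExponent (n : ℕ) (f : ℂ → ℂ) : ℝ :=
  (∑ k ∈ Finset.Icc 1 n, ((n : ℝ) + 1 - k) * (k * ‖taylorCoeff k f‖ ^ 2 - 1 / k)) / (n + 1)

lemma lebedevMilinExponent_succ (n : ℕ) (f : ℂ → ℂ) :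
    lebedevMilinExponent (n + 1) f = lebedevMilinExponent n f +
      (∑ j ∈ Finset.range (n + 1), ((j + 1) * ‖taylorCoeff (j + 1) f‖) ^ 2 - (n + 1)) /
        ((n + 1) * (n + 2)) := by
  set x : ℕ → ℝ := fun k => k * ‖taylorCoeff k f‖ ^ 2 - 1 / k
  have hlast : ∑ k ∈ Finset.Icc 1 n, ((n : ℝ) + 1 - k) * x k =
      ∑ k ∈ Finset.Icc 1 (n + 1), ((n : ℝ) + 1 - k) * x k := by
    rw [Finset.sum_Icc_succ_top (by omega)]
    push_cast
    ring
  have hsum : ∑ j ∈ Finset.range (n + 1), ((j + 1) * ‖taylorCoeff (j + 1) f‖) ^ 2 - (n + 1) =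
      ∑ k ∈ Finset.Icc 1 (n + 1), x k * k := by
    rw [← Nat.cast_add_one, ← nsmul_one (n + 1), ← Finset.card_range (n + 1),
      ← Finset.sum_const, Finset.card_range, ← Finset.sum_sub_distrib, Finset.range_eq_Ico,
      ← Finset.Ico_add_one_right_eq_Icc, ← Finset.sum_Ico_add' (fun k => x k * k) 0 (n + 1) 1]
    refine Finset.sum_congr rfl fun j _ => ?_
    simp only [x]
    push_cast
    field_simp
  rw [lebedevMilinExponent, lebedevMilinExponent, hlast, hsum, Finset.sum_div, Finset.sum_div,
    Finset.sum_div, ← Finset.sum_add_distrib]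
  refine Finset.sum_congr rfl fun k _ => ?_
  simp only [x]
  push_cast
  field_simp
  ring

lemma sum_normSq_taylorCoeff_cexp_le {f : ℂ → ℂ} (hf : AnalyticAt ℂ f 0) (hf0 : f 0 = 0) (n : ℕ) :
    ∑ k ∈ Finset.range (n + 1), ‖taylorCoeff k (fun z => Complex.exp (f z))‖ ^ 2 ≤
      (n + 1) * Real.exp (lebedevMilinExponent n f) := by
  induction n with
  | zero => simp [lebedevMilinExponent, hf0]
  | succ n ih =>
    set S := ∑ k ∈ Finset.range (n + 1), ‖taylorCoeff k (fun z => Complex.exp (f z))‖ ^ 2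
    set A := ∑ j ∈ Finset.range (n + 1), ((j + 1) * ‖taylorCoeff (j + 1) f‖) ^ 2
    set β := ‖taylorCoeff (n + 1) (fun z => Complex.exp (f z))‖
    obtain ⟨δ, hδ⟩ : ∃ δ, δ = (A - (n + 1)) / (((n : ℝ) + 1) * (n + 2)) := ⟨_, rfl⟩
    have _ : 0 ≤ S := by positivity
    have hβ : β ^ 2 ≤ A * S / ((n : ℝ) + 1) ^ 2 := by
      rw [le_div_iff₀' (by positivity)]
      exact sq_mul_normSq_taylorCoeff_succ_cexp_le hf n
    rw [Finset.sum_range_succ, lebedevMilinExponent_succ, ← hδ]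
    calc S + β ^ 2 ≤ S + A * S / ((n : ℝ) + 1) ^ 2 := by gcongr
      _ = (n + 2) / (n + 1) * (δ + 1) * S := by
          rw [hδ]
          field_simp
          ring
      _ ≤ (n + 2) / (n + 1) * Real.exp δ *
            ((n + 1) * Real.exp (lebedevMilinExponent n f)) := by
          gcongr
          exact Real.add_one_le_exp δ
      _ = _ := by
          rw [Real.exp_add]
          push_cast
          field_simp
          ring

lemma lebedevMilinExponent_half (n : ℕ) {l : ℂ → ℂ} :
    lebedevMilinExponent n (fun z => 1 / 2 * l z) = milinFunctional n l 0 / (4 * (n + 1)) := by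
  rw [lebedevMilinExponent, milinFunctional, Finset.sum_div, Finset.sum_div]
  refine Finset.sum_congr rfl fun k hk => ?_
  obtain ⟨hk, hkn⟩ := Finset.mem_Icc.1 hk
  rw [taylorCoeff_const_mul, norm_mul, neg_zero, Real.exp_zero, deBrangesWeight_one hk hkn]
  norm_num
  field_simp
  ring

/-- Robertson's inequality for the odd square-root transform of `φ`, by the Lebedev–Milin and
Milin inequalities. -/
lemma IsUnivalentDisc.sum_normSq_taylorCoeff_sqrt_le {φ l : ℂ → ℂ} (hφ : IsUnivalentDisc φ)
    (hl : DifferentiableOn ℂ l (ball 0 1)) (hl0 : l 0 = 0)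
    (hφl : EqOn φ (fun z => z * (deriv φ 0 * Complex.exp (l z))) (ball 0 1)) (n : ℕ) :
    ∑ k ∈ Finset.range (n + 1), ‖taylorCoeff k (fun z => Complex.exp (1 / 2 * l z))‖ ^ 2 ≤
      n + 1 := by
  have han : AnalyticAt ℂ l 0 := hl.analyticAt (ball_mem_nhds _ one_pos)
  calc ∑ k ∈ Finset.range (n + 1), ‖taylorCoeff k (fun z => Complex.exp (1 / 2 * l z))‖ ^ 2
      ≤ (n + 1) * Real.exp (lebedevMilinExponent n (fun z => 1 / 2 * l z)) :=
        sum_normSq_taylorCoeff_cexp_le (f := fun z => 1 / 2 * l z) (analyticAt_const.mul han)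
          (by rw [hl0, mul_zero]) n
    _ ≤ n + 1 := by
        rw [lebedevMilinExponent_half]
        refine mul_le_of_le_one_right (by positivity) (Real.exp_le_one_iff.2 ?_)
        exact div_nonpos_of_nonpos_of_nonneg (hφ.milinFunctional_log_nonpos hl hl0 hφl n)
          (by positivity)

end LebedevMilin

/-! ### Functions subordinate to a univalent function -/

section Bessel

variable {f g w : ℂ → ℂ} {r : ℝ}

lemma taylorCoeff_pow (n k : ℕ) : taylorCoeff k (fun z => z ^ n) = if k = n then 1 else 0 := by
  rw [taylorCoeff, iteratedDeriv_fun_pow_zero]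
  split_ifs with h
  · rw [h, div_self (Nat.cast_ne_zero.2 n.factorial_ne_zero)]
  · rw [Nat.cast_zero, zero_div]

/-- The `N`-th partial sum of the Taylor series of `f` at `0`, a polynomial of degree `< N`. -/
def taylorPartialSum (N : ℕ) (f : ℂ → ℂ) (z : ℂ) : ℂ :=
  ∑ j ∈ Finset.range N, taylorCoeff j f * z ^ j

lemma taylorPartialSum_succ (N : ℕ) (f : ℂ → ℂ) (z : ℂ) :
    taylorPartialSum (N + 1) f z = taylorPartialSum N f z + taylorCoeff N f * z ^ N :=
  Finset.sum_range_succ _ N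

lemma differentiable_taylorPartialSum (N : ℕ) (f : ℂ → ℂ) :
    Differentiable ℂ (taylorPartialSum N f) := by
  unfold taylorPartialSum
  fun_prop

lemma taylorCoeff_taylorPartialSum (N : ℕ) (f : ℂ → ℂ) (k : ℕ) :
    taylorCoeff k (taylorPartialSum N f) = if k < N then taylorCoeff k f else 0 := by
  induction N with
  | zero =>
    have hzero : taylorPartialSum 0 f = fun _ => 0 * 0 := funext fun _ => by simp [taylorPartialSum]
    rw [hzero, taylorCoeff_const_mul, zero_mul, if_neg k.not_lt_zero]
  | succ N ih =>
    have hsucc : taylorPartialSum (N + 1) f =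
        fun z => taylorPartialSum N f z + taylorCoeff N f * z ^ N :=
      funext (taylorPartialSum_succ N f)
    have han := (differentiable_taylorPartialSum N f).analyticAt 0
    rw [hsucc, taylorCoeff_add han (by fun_prop), taylorCoeff_const_mul, taylorCoeff_pow, ih]
    obtain h | rfl | h := lt_trichotomy k N
    · simp [h, h.ne, h.trans N.lt_succ_self]
    · simp
    · simp [h.ne', h.not_gt, Nat.not_lt.2 (Nat.succ_le_of_lt h)]

lemma taylorPartialSum_taylorPartialSum (N : ℕ) (f : ℂ → ℂ) :
    taylorPartialSum N (taylorPartialSum N f) = taylorPartialSum N f := by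
  funext z
  refine Finset.sum_congr rfl fun j hj => ?_
  rw [taylorCoeff_taylorPartialSum, if_pos (Finset.mem_range.1 hj)]

lemma normSq_sub_const_mul_pow (u c : ℂ) {z : ℂ} (hz : z ≠ 0) (n : ℕ) :
    ‖u - c * z ^ n‖ ^ 2 = ‖u‖ ^ 2 + ((‖z‖ ^ n) ^ 2 * ‖c‖ ^ 2 -
      2 * (‖z‖ ^ n) ^ 2 * (starRingEnd ℂ c * (u * z⁻¹ ^ n)).re) := by
  have hconj : starRingEnd ℂ z = ‖z‖ ^ 2 * z⁻¹ := by
    rw [eq_mul_inv_iff_mul_eq₀ hz, mul_comm, Complex.mul_conj, Complex.normSq_eq_norm_sq,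
      Complex.ofReal_pow]
  have hcross : u * starRingEnd ℂ (c * z ^ n) =
      ((‖z‖ ^ n) ^ 2 : ℝ) * (starRingEnd ℂ c * (u * z⁻¹ ^ n)) := by
    rw [map_mul, map_pow, hconj]
    push_cast
    ring
  rw [← Complex.normSq_eq_norm_sq, Complex.normSq_sub, hcross, Complex.re_ofReal_mul,
    Complex.normSq_eq_norm_sq, Complex.normSq_eq_norm_sq, norm_mul, norm_pow]
  ring

lemma continuousOn_mul_inv_pow (hf : DifferentiableOn ℂ f (ball 0 1)) (hr0 : 0 < r) (hr : r < 1)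
    (n : ℕ) : ContinuousOn (fun z => f z * z⁻¹ ^ n) (sphere 0 r) :=
  (hf.continuousOn.mono (sphere_subset_closedBall.trans (closedBall_subset_ball hr))).mul
    ((continuousOn_inv₀.mono fun z hz => ne_zero_of_mem_sphere hr0.ne' ⟨z, hz⟩).pow n)

lemma circleAverage_re_const_mul_mul_inv_pow (hf : DifferentiableOn ℂ f (ball 0 1)) (hr0 : 0 < r)
    (hr : r < 1) (n : ℕ) (a : ℂ) :
    Real.circleAverage (fun z => (a * (f z * z⁻¹ ^ n)).re) 0 r = (a * taylorCoeff n f).re := by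
  have hint : CircleIntegrable (fun z => a • (f z * z⁻¹ ^ n)) 0 r :=
    ((continuousOn_mul_inv_pow hf hr0 hr n).const_smul a).circleIntegrable hr0.le
  refine (Complex.reCLM.circleAverage_comp_comm hint).trans ?_
  rw [Real.circleAverage_fun_smul, circleAverage_mul_inv_pow hf hr0 hr, smul_eq_mul,
    Complex.reCLM_apply]

lemma circleAverage_normSq_sub_const_mul_pow (hf : DifferentiableOn ℂ f (ball 0 1)) (hr0 : 0 < r)
    (hr : r < 1) (n : ℕ) (c : ℂ) :
    Real.circleAverage (fun z => ‖f z - c * z ^ n‖ ^ 2) 0 r =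
      Real.circleAverage (fun z => ‖f z‖ ^ 2) 0 r + ((r ^ n) ^ 2 * ‖c‖ ^ 2 -
        2 * (r ^ n) ^ 2 * (starRingEnd ℂ c * taylorCoeff n f).re) := by
  have hexpand : EqOn (fun z => ‖f z - c * z ^ n‖ ^ 2) (fun z => ‖f z‖ ^ 2 +
      ((r ^ n) ^ 2 * ‖c‖ ^ 2 - 2 * (r ^ n) ^ 2 * (starRingEnd ℂ c * (f z * z⁻¹ ^ n)).re))
      (sphere 0 |r|) := by
    rw [abs_of_pos hr0]
    intro z hz
    rw [← mem_sphere_zero_iff_norm.1 hz]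
    exact normSq_sub_const_mul_pow _ _ (ne_zero_of_mem_sphere hr0.ne' ⟨z, hz⟩) n
  have hnormSq : ContinuousOn (fun z => ‖f z‖ ^ 2) (sphere 0 r) :=
    (hf.continuousOn.mono
      (sphere_subset_closedBall.trans (closedBall_subset_ball hr))).norm.fun_pow 2
  have hcross : ContinuousOn (fun z => 2 * (r ^ n) ^ 2 * (starRingEnd ℂ c * (f z * z⁻¹ ^ n)).re)
      (sphere 0 r) :=
    continuousOn_const.mul (Complex.continuous_re.comp_continuousOn
      (continuousOn_const.mul (continuousOn_mul_inv_pow hf hr0 hr n)))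
  have hconst : ContinuousOn (fun _ : ℂ => (r ^ n) ^ 2 * ‖c‖ ^ 2) (sphere 0 r) := continuousOn_const
  rw [Real.circleAverage_congr_sphere hexpand,
    Real.circleAverage_fun_add (hnormSq.circleIntegrable hr0.le)
      ((hconst.fun_sub hcross).circleIntegrable hr0.le),
    Real.circleAverage_fun_sub (hconst.circleIntegrable hr0.le) (hcross.circleIntegrable hr0.le),
    Real.circleAverage_const, ← circleAverage_re_const_mul_mul_inv_pow hf hr0 hr]
  simp only [← smul_eq_mul (2 * (r ^ n) ^ 2), Real.circleAverage_fun_smul]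

lemma circleAverage_normSq_sub_taylorPartialSum (hf : DifferentiableOn ℂ f (ball 0 1))
    (hr0 : 0 < r) (hr : r < 1) (N : ℕ) :
    Real.circleAverage (fun z => ‖f z - taylorPartialSum N f z‖ ^ 2) 0 r =
      Real.circleAverage (fun z => ‖f z‖ ^ 2) 0 r -
        ∑ k ∈ Finset.range N, (r ^ k) ^ 2 * ‖taylorCoeff k f‖ ^ 2 := by
  induction N with
  | zero => simp [taylorPartialSum]
  | succ N ih =>
    have hP := differentiable_taylorPartialSum N f
    have hcoeff : taylorCoeff N (fun z => f z - taylorPartialSum N f z) = taylorCoeff N f := by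
      rw [taylorCoeff_sub (hf.analyticAt (ball_mem_nhds _ one_pos)) (hP.analyticAt 0),
        taylorCoeff_taylorPartialSum, if_neg (lt_irrefl N), sub_zero]
    simp only [taylorPartialSum_succ, ← sub_sub]
    rw [circleAverage_normSq_sub_const_mul_pow (f := fun z => f z - taylorPartialSum N f z)
      (hf.sub hP.differentiableOn) hr0 hr, ih, hcoeff, mul_comm (starRingEnd ℂ _), Complex.mul_conj,
      Complex.ofReal_re, Complex.normSq_eq_norm_sq, Finset.sum_range_succ]
    ring

lemma sum_normSq_taylorCoeff_mul_pow_le (hf : DifferentiableOn ℂ f (ball 0 1)) (hr0 : 0 < r)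
    (hr : r < 1) (N : ℕ) :
    ∑ k ∈ Finset.range N, (r ^ k) ^ 2 * ‖taylorCoeff k f‖ ^ 2 ≤
      Real.circleAverage (fun z => ‖f z‖ ^ 2) 0 r := by
  rw [← sub_nonneg, ← circleAverage_normSq_sub_taylorPartialSum hf hr0 hr]
  exact Real.circleAverage_nonneg_of_nonneg fun z _ => sq_nonneg _

lemma circleAverage_normSq_taylorPartialSum (hr0 : 0 < r) (hr : r < 1) (N : ℕ) (f : ℂ → ℂ) :
    Real.circleAverage (fun z => ‖taylorPartialSum N f z‖ ^ 2) 0 r =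
      ∑ k ∈ Finset.range N, (r ^ k) ^ 2 * ‖taylorCoeff k f‖ ^ 2 := by
  have hparseval := circleAverage_normSq_sub_taylorPartialSum
    (differentiable_taylorPartialSum N f).differentiableOn hr0 hr N
  simp only [taylorPartialSum_taylorPartialSum, sub_self, norm_zero, ne_eq, OfNat.ofNat_ne_zero,
    not_false_eq_true, zero_pow, Real.circleAverage_const] at hparseval
  rw [eq_comm, sub_eq_zero] at hparseval
  refine hparseval.trans (Finset.sum_congr rfl fun k hk => ?_)
  rw [taylorCoeff_taylorPartialSum, if_pos (Finset.mem_range.1 hk)]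

lemma taylorCoeff_mul_taylorPartialSum {k N : ℕ} (hf : AnalyticAt ℂ f 0) (hg : AnalyticAt ℂ g 0)
    (hk : k < N) :
    taylorCoeff k (fun z => f z * taylorPartialSum N g z) = taylorCoeff k (fun z => f z * g z) := by
  rw [taylorCoeff_mul hf hg,
    taylorCoeff_mul hf ((differentiable_taylorPartialSum N g).analyticAt 0)]
  refine Finset.sum_congr rfl fun i _ => ?_
  rw [taylorCoeff_taylorPartialSum, if_pos ((k.sub_le i).trans_lt hk)]

lemma sum_normSq_taylorCoeff_mul_le (hw : DifferentiableOn ℂ w (ball 0 1))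
    (hw1 : ∀ z ∈ ball (0 : ℂ) 1, ‖w z‖ ≤ 1) (hg : DifferentiableOn ℂ g (ball 0 1)) (N : ℕ) :
    ∑ k ∈ Finset.range N, ‖taylorCoeff k (fun z => w z * g z)‖ ^ 2 ≤
      ∑ k ∈ Finset.range N, ‖taylorCoeff k g‖ ^ 2 := by
  have hP := differentiable_taylorPartialSum N g
  have hcoeff : ∀ k ∈ Finset.range N, taylorCoeff k (fun z => w z * taylorPartialSum N g z) =
      taylorCoeff k (fun z => w z * g z) := fun k hk =>
    taylorCoeff_mul_taylorPartialSum (hw.analyticAt (ball_mem_nhds _ one_pos))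
      (hg.analyticAt (ball_mem_nhds _ one_pos)) (Finset.mem_range.1 hk)
  have hcircle : ∀ r ∈ Ioo (0 : ℝ) 1,
      ∑ k ∈ Finset.range N, (r ^ k) ^ 2 * ‖taylorCoeff k (fun z => w z * g z)‖ ^ 2 ≤
        ∑ k ∈ Finset.range N, (r ^ k) ^ 2 * ‖taylorCoeff k g‖ ^ 2 := by
    intro r ⟨hr0, hr1⟩
    have hwP : DifferentiableOn ℂ (fun z => w z * taylorPartialSum N g z) (ball 0 1) :=
      hw.mul hP.differentiableOn
    have hsphere := sphere_subset_closedBall.trans (closedBall_subset_ball (x := (0 : ℂ)) hr1)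
    rw [Finset.sum_congr rfl fun k hk => by rw [← hcoeff k hk],
      ← circleAverage_normSq_taylorPartialSum hr0 hr1 N g]
    refine (sum_normSq_taylorCoeff_mul_pow_le hwP hr0 hr1 N).trans (Real.circleAverage_mono
      (((hwP.continuousOn.mono hsphere).norm.fun_pow 2).circleIntegrable hr0.le)
      ((hP.continuous.norm.fun_pow 2).continuousOn.circleIntegrable hr0.le) fun z hz => ?_)
    rw [abs_of_pos hr0] at hz
    rw [norm_mul]
    exact pow_le_pow_left₀ (by positivity)
      (mul_le_of_le_one_left (norm_nonneg _) (hw1 z (hsphere hz))) 2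
  have hlim (a : ℕ → ℝ) : Filter.Tendsto (fun r : ℝ => ∑ k ∈ Finset.range N, (r ^ k) ^ 2 * a k)
      (nhdsWithin 1 (Iio 1)) (nhds (∑ k ∈ Finset.range N, a k)) := by
    have hcont : Continuous fun r : ℝ => ∑ k ∈ Finset.range N, (r ^ k) ^ 2 * a k := by fun_prop
    simpa using (hcont.tendsto 1).mono_left (nhdsWithin_le_nhds (s := Iio 1))
  exact le_of_tendsto_of_tendsto (hlim _) (hlim _)
    (Filter.eventually_of_mem (Ioo_mem_nhdsLT one_pos) hcircle)

end Bessel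

section Subordination

variable {B f g w φ : ℂ → ℂ}

/-- A Schwarz mapping: a holomorphic self-map of the unit ball fixing the origin. -/
structure IsSchwarzMap {E : Type*} [NormedAddCommGroup E] [NormedSpace ℂ E] (V : E → E) :
    Prop where
  differentiableOn : DifferentiableOn ℂ V (ball 0 1)
  mapsTo : MapsTo V (ball 0 1) (ball 0 1)
  apply_zero : V 0 = 0

namespace IsSchwarzMap

lemma norm_apply_le {E : Type*} [NormedAddCommGroup E] [NormedSpace ℂ E] {V : E → E}
    (hV : IsSchwarzMap V) {x : E} (hx : ‖x‖ < 1) : ‖V x‖ ≤ ‖x‖ :=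
  Complex.norm_le_norm_of_mapsTo_ball hV.differentiableOn
    (hV.mapsTo.mono_right ball_subset_closedBall) hV.apply_zero hx

lemma differentiableOn_dslope (hw : IsSchwarzMap w) : DifferentiableOn ℂ (dslope w 0) (ball 0 1) :=
  (Complex.differentiableOn_dslope (ball_mem_nhds _ one_pos)).2 hw.differentiableOn

lemma mul_dslope (hw : IsSchwarzMap w) (z : ℂ) : z * dslope w 0 z = w z := by
  simpa [hw.apply_zero] using sub_smul_dslope w 0 z

lemma norm_dslope_le (hw : IsSchwarzMap w) {z : ℂ} (hz : z ∈ ball (0 : ℂ) 1) :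
    ‖dslope w 0 z‖ ≤ 1 := by
  have hmaps : MapsTo w (ball 0 1) (closedBall (w 0) 1) := by
    rw [hw.apply_zero]
    exact hw.mapsTo.mono_right ball_subset_closedBall
  simpa using Complex.norm_dslope_le_div_of_mapsTo_ball hw.differentiableOn hmaps hz

end IsSchwarzMap

lemma taylorCoeff_succ_of_eqOn (hg : DifferentiableOn ℂ g (ball 0 1)) (c : ℂ)
    (h : EqOn f (fun z => c + z * g z) (ball 0 1)) (k : ℕ) :
    taylorCoeff (k + 1) f = taylorCoeff k g := by
  have hgan := hg.analyticAt (ball_mem_nhds _ one_pos)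
  rw [taylorCoeff_congr one_pos h, taylorCoeff_add (g := fun z => z * g z) analyticAt_const
    (analyticAt_id.mul hgan), taylorCoeff_const_of_pos k.succ_pos, zero_add,
    taylorCoeff_succ_id_mul hgan]

lemma sum_normSq_taylorCoeff_comp_le (hw : IsSchwarzMap w) (hB : DifferentiableOn ℂ B (ball 0 1))
    (N : ℕ) :
    ∑ k ∈ Finset.range N, ‖taylorCoeff k (fun z => B (w z))‖ ^ 2 ≤
      ∑ k ∈ Finset.range N, ‖taylorCoeff k B‖ ^ 2 := by
  induction N generalizing B with
  | zero => simp
  | succ N ih =>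
    have hQ : DifferentiableOn ℂ (dslope B 0) (ball 0 1) :=
      (Complex.differentiableOn_dslope (ball_mem_nhds _ one_pos)).2 hB
    have hQw : DifferentiableOn ℂ (fun z => dslope B 0 (w z)) (ball 0 1) :=
      hQ.comp hw.differentiableOn hw.mapsTo
    have hexpand (z : ℂ) : B z = B 0 + z * dslope B 0 z := by
      have h := sub_smul_dslope B 0 z
      rw [sub_zero, smul_eq_mul] at h
      rw [h, add_sub_cancel]
    have hcomp (k : ℕ) : taylorCoeff (k + 1) (fun z => B (w z)) =
        taylorCoeff k (fun z => dslope w 0 z * dslope B 0 (w z)) :=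
      taylorCoeff_succ_of_eqOn (hw.differentiableOn_dslope.fun_mul hQw) (B 0) (fun z _ => by
        beta_reduce
        rw [← mul_assoc, hw.mul_dslope, ← hexpand]) k
    simp only [Finset.sum_range_succ', hcomp,
      taylorCoeff_succ_of_eqOn hQ (B 0) (fun z _ => hexpand z), taylorCoeff_zero, hw.apply_zero]
    exact add_le_add_left ((sum_normSq_taylorCoeff_mul_le hw.differentiableOn_dslope
      (fun z => hw.norm_dslope_le) hQw N).trans (ih hQ)) _

lemma norm_taylorCoeff_mul_le (hf : AnalyticAt ℂ f 0) (hg : AnalyticAt ℂ g 0) {n : ℕ} {C : ℝ}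
    (hfC : ∑ k ∈ Finset.range (n + 1), ‖taylorCoeff k f‖ ^ 2 ≤ C)
    (hgC : ∑ k ∈ Finset.range (n + 1), ‖taylorCoeff k g‖ ^ 2 ≤ C) :
    ‖taylorCoeff n (fun z => f z * g z)‖ ≤ C := by
  have hreflect : ∑ i ∈ Finset.range (n + 1), ‖taylorCoeff (n - i) g‖ ^ 2 ≤ C := by
    simpa using (Finset.sum_range_reflect (fun k => ‖taylorCoeff k g‖ ^ 2) (n + 1)).trans_le hgC
  rw [taylorCoeff_mul hf hg]
  calc ‖∑ i ∈ Finset.range (n + 1), taylorCoeff i f * taylorCoeff (n - i) g‖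
      ≤ ∑ i ∈ Finset.range (n + 1),
          (‖taylorCoeff i f‖ ^ 2 + ‖taylorCoeff (n - i) g‖ ^ 2) / 2 := by
        refine norm_sum_le_of_le _ fun i _ => ?_
        rw [norm_mul]
        linarith [two_mul_le_add_sq ‖taylorCoeff i f‖ ‖taylorCoeff (n - i) g‖]
    _ ≤ C := by
        rw [← Finset.sum_div, Finset.sum_add_distrib]
        linarith

namespace IsUnivalentDisc

/-- Writing `φ(z) = φ'(0) z B(z)²`, the `s`-th coefficient of `φ ∘ w` is a Cauchy product of
coefficients of `(w(z)/z) B(w(z))` and `B(w(z))`, whose partial `ℓ²`-norms do not exceed those of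
`B`. -/
lemma norm_taylorCoeff_comp_le (hφ : IsUnivalentDisc φ) (hw : IsSchwarzMap w) (s : ℕ) :
    ‖taylorCoeff s (fun z => φ (w z))‖ ≤ s * ‖deriv φ 0‖ := by
  obtain _ | n := s
  · simp [hw.apply_zero, hφ.apply_zero]
  obtain ⟨l, hl, hl0, hφl⟩ := hφ.exists_log
  obtain ⟨B, hBdef⟩ : ∃ B : ℂ → ℂ, B = fun z => Complex.exp (1 / 2 * l z) := ⟨_, rfl⟩
  have hB : DifferentiableOn ℂ B (ball 0 1) := hBdef ▸ (hl.const_mul _).cexp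
  have hsq (z : ℂ) : B z * B z = Complex.exp (l z) := by
    rw [hBdef, ← Complex.exp_add]
    ring_nf
  have hBsum : ∑ k ∈ Finset.range (n + 1), ‖taylorCoeff k B‖ ^ 2 ≤ n + 1 :=
    hBdef ▸ hφ.sum_normSq_taylorCoeff_sqrt_le hl hl0 hφl n
  have hBw : DifferentiableOn ℂ (fun z => B (w z)) (ball 0 1) :=
    hB.comp hw.differentiableOn hw.mapsTo
  have hpBw := hw.differentiableOn_dslope.fun_mul hBw
  have hfactor : EqOn (fun z => φ (w z))
      (fun z => 0 + z * (deriv φ 0 * (dslope w 0 z * B (w z) * B (w z)))) (ball 0 1) := by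
    intro z hz
    beta_reduce
    rw [hφl (hw.mapsTo hz), mul_assoc (dslope w 0 z), hsq]
    linear_combination -(deriv φ 0 * Complex.exp (l (w z))) * hw.mul_dslope z
  have hBwsum := (sum_normSq_taylorCoeff_comp_le hw hB (n + 1)).trans hBsum
  have hpBwsum := (sum_normSq_taylorCoeff_mul_le hw.differentiableOn_dslope
    (fun z => hw.norm_dslope_le) hBw (n + 1)).trans hBwsum
  have hprod := norm_taylorCoeff_mul_le (hpBw.analyticAt (ball_mem_nhds _ one_pos))
    (hBw.analyticAt (ball_mem_nhds _ one_pos)) hpBwsum hBwsum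
  rw [taylorCoeff_succ_of_eqOn ((hpBw.fun_mul hBw).const_mul _) 0 hfactor, taylorCoeff_const_mul,
    norm_mul, mul_comm, Nat.cast_succ]
  gcongr

lemma norm_taylorCoeff_le (hφ : IsUnivalentDisc φ) (s : ℕ) :
    ‖taylorCoeff s φ‖ ≤ s * ‖deriv φ 0‖ :=
  hφ.norm_taylorCoeff_comp_le ⟨differentiableOn_id, mapsTo_id _, rfl⟩ s

lemma norm_apply_le (hφ : IsUnivalentDisc φ) {z : ℂ} (hz : z ∈ ball (0 : ℂ) 1) :
    ‖φ z‖ ≤ ‖deriv φ 0‖ * (‖z‖ / (1 - ‖z‖) ^ 2) := by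
  have hz1 : ‖‖z‖‖ < 1 := by rwa [norm_norm, ← mem_ball_zero_iff]
  refine (hasSum_taylorCoeff_mul_pow hφ.differentiableOn hz).norm_le_of_bounded
    ((hasSum_coe_mul_geometric_of_norm_lt_one hz1).mul_left _) fun s => ?_
  rw [norm_mul, norm_pow, ← mul_assoc, mul_comm ‖deriv φ 0‖]
  gcongr
  exact hφ.norm_taylorCoeff_le s

/-- The Koebe transform of `φ` with respect to an omitted value `η`. -/
lemma mul_div_sub (hφ : IsUnivalentDisc φ) {η : ℂ} (hη0 : η ≠ 0) (hη : η ∉ φ '' ball 0 1) :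
    IsUnivalentDisc (fun z => η * φ z / (η - φ z)) := by
  have hne : ∀ z ∈ ball (0 : ℂ) 1, η - φ z ≠ 0 := fun z hz h => hη ⟨z, hz, (sub_eq_zero.1 h).symm⟩
  have hadd : ∀ z ∈ ball (0 : ℂ) 1, η + η * φ z / (η - φ z) = η ^ 2 / (η - φ z) := by
    intro z hz
    have := hne z hz
    field_simp
    ring
  have hadd_ne : ∀ z ∈ ball (0 : ℂ) 1, η + η * φ z / (η - φ z) ≠ 0 := fun z hz =>
    hadd z hz ▸ div_ne_zero (pow_ne_zero 2 hη0) (hne z hz)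
  have hback : ∀ z ∈ ball (0 : ℂ) 1,
      η * (η * φ z / (η - φ z)) / (η + η * φ z / (η - φ z)) = φ z := by
    intro z hz
    have := hne z hz
    rw [hadd z hz]
    field_simp
  obtain ⟨v, hv, hinv, -⟩ := hφ.exists_inverse
  have hleft : ∀ z ∈ ball (0 : ℂ) 1, v (η * (η * φ z / (η - φ z)) /
      (η + η * φ z / (η - φ z))) = z := fun z hz => by rw [hback z hz, hinv z hz]
  refine ⟨⟨(hφ.differentiableOn.const_mul η).fun_div (hφ.differentiableOn.const_sub η) hne,
    fun z hz y hy h => ?_, fun b => v (η * b / (η + b)), ?_, hleft⟩, by simp [hφ.apply_zero]⟩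
  · rw [← hleft z hz, ← hleft y hy]
    beta_reduce at h
    rw [h]
  · refine hv.comp ((differentiableOn_id.const_mul η).fun_div (differentiableOn_id.const_add η) ?_)
      ?_
    · rintro _ ⟨z, hz, rfl⟩
      exact hadd_ne z hz
    · rintro _ ⟨z, hz, rfl⟩
      exact ⟨z, hz, (hback z hz).symm⟩

lemma norm_deriv_div_four_le_of_notMem_image (hφ : IsUnivalentDisc φ) {η : ℂ} (hη0 : η ≠ 0)
    (hη : η ∉ φ '' ball 0 1) : ‖deriv φ 0‖ / 4 ≤ ‖η‖ := by
  have hψ := hφ.mul_div_sub hη0 hη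
  obtain ⟨ψ, hψdef⟩ : ∃ ψ : ℂ → ℂ, ψ = fun z => η * φ z / (η - φ z) := ⟨_, rfl⟩
  rw [← hψdef] at hψ
  have hφan := hφ.differentiableOn.analyticAt (ball_mem_nhds _ one_pos)
  have hψan := hψ.differentiableOn.analyticAt (ball_mem_nhds _ one_pos)
  have heq : EqOn (fun z => η * ψ z) (fun z => η * φ z + ψ z * φ z) (ball 0 1) := by
    intro z hz
    have : η - φ z ≠ 0 := fun h => hη ⟨z, hz, (sub_eq_zero.1 h).symm⟩
    simp only [hψdef]
    field_simp
    ring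
  have hcoeff (k : ℕ) : η * taylorCoeff k ψ = η * taylorCoeff k φ +
      ∑ i ∈ Finset.range (k + 1), taylorCoeff i ψ * taylorCoeff (k - i) φ := by
    rw [← taylorCoeff_const_mul, taylorCoeff_congr one_pos heq,
      taylorCoeff_add (f := fun z => η * φ z) (g := fun z => ψ z * φ z)
        (analyticAt_const.mul hφan) (hψan.mul hφan), taylorCoeff_const_mul,
      taylorCoeff_mul hψan hφan]
  have hderiv : deriv ψ 0 = deriv φ 0 := by
    have h := hcoeff 1
    simpa [Finset.sum_range_succ, hφ.apply_zero, hψ.apply_zero, taylorCoeff_one, hη0] using h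
  have hsecond : deriv φ 0 ^ 2 = η * (taylorCoeff 2 ψ - taylorCoeff 2 φ) := by
    have h := hcoeff 2
    simp only [Finset.sum_range_succ, Finset.sum_range_zero, Nat.reduceSub, taylorCoeff_zero,
      taylorCoeff_one, hφ.apply_zero, hψ.apply_zero, hderiv] at h
    linear_combination -h
  have hbound : ‖taylorCoeff 2 ψ - taylorCoeff 2 φ‖ ≤ 4 * ‖deriv φ 0‖ := by
    refine (norm_sub_le_of_le (hψ.norm_taylorCoeff_le 2) (hφ.norm_taylorCoeff_le 2)).trans_eq ?_
    rw [hderiv]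
    push_cast
    ring
  have hpos : 0 < ‖deriv φ 0‖ := norm_pos_iff.2 hφ.deriv_ne_zero
  have hle : ‖deriv φ 0‖ ^ 2 ≤ ‖η‖ * (4 * ‖deriv φ 0‖) := by
    rw [← norm_pow, hsecond, norm_mul]
    gcongr
  rw [div_le_iff₀ four_pos]
  nlinarith

lemma ball_norm_deriv_div_four_subset_image (hφ : IsUnivalentDisc φ) :
    ball (0 : ℂ) (‖deriv φ 0‖ / 4) ⊆ φ '' ball 0 1 := by
  intro η hη
  by_contra hηφ
  have hη0 : η ≠ 0 := by
    rintro rfl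
    exact hηφ ⟨0, mem_ball_self one_pos, hφ.apply_zero⟩
  exact (mem_ball_zero_iff.1 hη).not_ge (hφ.norm_deriv_div_four_le_of_notMem_image hη0 hηφ)

lemma image_ne_univ (hφ : IsUnivalentDisc φ) : φ '' ball 0 1 ≠ univ := by
  intro huniv
  obtain ⟨v, hv, hinv, hv'⟩ := hφ.exists_inverse
  rw [huniv, differentiableOn_univ] at hv
  have hbdd : Bornology.IsBounded (range v) := by
    refine isBounded_ball.subset (range_subset_iff.2 fun b => ?_ : range v ⊆ ball 0 1)
    obtain ⟨z, hz, rfl⟩ : b ∈ φ '' ball 0 1 := huniv ▸ mem_univ b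
    rwa [hinv z hz]
  obtain ⟨c, rfl⟩ := hv.exists_eq_const_of_bounded hbdd
  have hconst : deriv (Function.const ℂ c) 0 = 0 := deriv_const 0 c
  exact zero_ne_one ((zero_mul _).symm.trans (hconst ▸ hv'))

end IsUnivalentDisc

end Subordination

/-! ### Holomorphic maps between Banach spaces -/

section HolomorphicMap

open Filter Topology

lemma exists_forall_ball_subset_norm_le {α G : Type*} [PseudoMetricSpace α]
    [SeminormedAddCommGroup G] {f : α → G} {U : Set α} {c : α} (hU : IsOpen U)
    (hf : ContinuousOn f U) (hc : c ∈ U) :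
    ∃ R > 0, ∃ M, ∀ y ∈ ball c R, ball y R ⊆ U ∧ ∀ z ∈ ball y R, ‖f z‖ ≤ M := by
  have hev : ∀ᶠ y in 𝓝 c, y ∈ U ∧ ‖f y‖ < ‖f c‖ + 1 :=
    Filter.Eventually.and (hU.mem_nhds hc)
    ((hf.continuousAt (hU.mem_nhds hc)).norm.eventually_lt_const (lt_add_one _))
  obtain ⟨ρ, hρ, hball⟩ := Metric.eventually_nhds_iff_ball.1 hev
  refine ⟨ρ / 2, half_pos hρ, ‖f c‖ + 1, fun y hy => ?_⟩
  have hsub : ball y (ρ / 2) ⊆ ball c ρ :=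
    ball_subset_ball' (by linarith [mem_ball.1 hy])
  exact ⟨fun z hz => (hball z (hsub hz)).1, fun z hz => (hball z (hsub hz)).2.le⟩

variable {E F : Type*} [NormedAddCommGroup E] [NormedSpace ℂ E] [NormedAddCommGroup F]
  [NormedSpace ℂ F] {f : E → F} {U : Set E} {c h : E} {R M C : ℝ}

lemma hasFDerivAt_of_norm_sub_sub_le {A : E →L[ℂ] F} (hR : 0 < R)
    (hle : ∀ k : E, ‖k‖ < R → ‖f (c + k) - f c - A k‖ ≤ C * ‖k‖ ^ 2) : HasFDerivAt f A c := by
  rw [hasFDerivAt_iff_isLittleO_nhds_zero]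
  refine (Asymptotics.IsBigO.of_bound C ?_).trans_isLittleO
    (Asymptotics.isLittleO_norm_pow_id one_lt_two)
  filter_upwards [ball_mem_nhds (0 : E) hR] with k hk
  rw [norm_pow, norm_norm]
  exact hle k (mem_ball_zero_iff.1 hk)

lemma norm_fderiv_le_of_norm_le (hR : 0 < R) (hf : DifferentiableOn ℂ f (ball c R))
    (hM : ∀ y ∈ ball c R, ‖f y‖ ≤ M) : ‖fderiv ℂ f c‖ ≤ 2 * M / R := by
  refine Complex.norm_fderiv_le_div_of_mapsTo_ball hf (fun y hy => ?_) hR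
  rw [mem_closedBall, dist_eq_norm, two_mul]
  exact norm_sub_le_of_le (hM y hy) (hM c (mem_ball_self hR))

lemma norm_sub_sub_fderiv_le (hf : DifferentiableOn ℂ f (ball c R))
    (hM : ∀ y ∈ ball c R, ‖f y‖ ≤ M) {k : E} (hk : ‖k‖ < R) :
    ‖f (c + k) - f c - fderiv ℂ f c k‖ ≤ 4 * M / R ^ 2 * ‖k‖ ^ 2 := by
  have hR : 0 < R := (norm_nonneg k).trans_lt hk
  have hfderiv := norm_fderiv_le_of_norm_le hR hf hM
  have hfc := (hf.differentiableAt (ball_mem_nhds c hR)).hasFDerivAt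
  have hmaps : MapsTo (fun w => f w - fderiv ℂ f c (w - c)) (ball c R)
      (closedBall (f c - fderiv ℂ f c (c - c)) (4 * M)) := by
    intro w hw
    have hlinear : ‖fderiv ℂ f c (w - c)‖ ≤ 2 * M := by
      refine ((fderiv ℂ f c).le_opNorm_of_le (mem_ball_iff_norm.1 hw).le).trans ?_
      rwa [← le_div_iff₀ hR]
    rw [mem_closedBall, dist_eq_norm, sub_self, map_zero, sub_zero]
    linarith [norm_sub_le_of_le (norm_sub_le_of_le (hM w hw) hlinear) (hM c (mem_ball_self hR))]
  have hschwarz := Complex.dist_le_mul_div_pow_of_mapsTo_ball_of_isLittleO (n := 1) (z := c + k)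
    (hf.fun_sub (by fun_prop)) hmaps ?_ (by simpa using hk)
  · simp only [dist_eq_norm, add_sub_cancel_left, sub_self, map_zero, sub_zero] at hschwarz
    rw [sub_right_comm]
    exact hschwarz.trans_eq (by ring)
  · simp only [pow_one, sub_self, map_zero, sub_zero]
    exact (hfc.isLittleO.congr_left fun w => sub_right_comm _ _ _).norm_right

lemma uniformCauchySeqOn_fderiv {ι : Type*} {l : Filter ι} {q : ι → E → F} {s : Set E}
    (hR : 0 < R) (hsub : ∀ y ∈ s, ball y R ⊆ U) (hq : ∀ᶠ n in l, DifferentiableOn ℂ (q n) U)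
    (hcauchy : UniformCauchySeqOn q l U) :
    UniformCauchySeqOn (fun n => fderiv ℂ (q n)) l s := by
  intro u hu
  obtain ⟨ε, hε, hεu⟩ := mem_uniformity_dist.1 hu
  have hδ : 0 < ε * R / 4 := by positivity
  filter_upwards [hcauchy _ (dist_mem_uniformity hδ), hq.prod_mk hq] with n hdist hdiff y hy
  have hbound : ∀ z ∈ ball y R, ‖q n.1 z - q n.2 z‖ ≤ ε * R / 4 := fun z hz =>
    (dist_eq_norm _ _).symm.trans_le (hdist z (hsub y hy hz)).le
  have hdiff₁ := hdiff.1.mono (hsub y hy)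
  have hdiff₂ := hdiff.2.mono (hsub y hy)
  have hfderiv := norm_fderiv_le_of_norm_le hR (hdiff₁.fun_sub hdiff₂) hbound
  rw [fderiv_fun_sub (hdiff₁.differentiableAt (ball_mem_nhds y hR))
    (hdiff₂.differentiableAt (ball_mem_nhds y hR))] at hfderiv
  refine hεu ((dist_eq_norm _ _).trans_lt (hfderiv.trans_lt ?_))
  rw [div_lt_iff₀ hR]
  linarith [mul_pos hε hR]

lemma differentiableOn_of_tendstoUniformlyOn [CompleteSpace F] {ι : Type*} {l : Filter ι}
    [l.NeBot] {q : ι → E → F} (hU : IsOpen U) (hq : ∀ᶠ n in l, DifferentiableOn ℂ (q n) U)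
    (hlim : TendstoUniformlyOn q f l U) : DifferentiableOn ℂ f U := by
  intro c hc
  obtain ⟨ρ, hρ, hball⟩ := Metric.isOpen_iff.1 hU c hc
  have hcauchy : UniformCauchySeqOn (fun n => fderiv ℂ (q n)) l (ball c (ρ / 2)) :=
    uniformCauchySeqOn_fderiv (half_pos hρ) (fun y hy => Subset.trans
      (ball_subset_ball' (by linarith [mem_ball.1 hy])) hball) hq hlim.uniformCauchySeqOn
  choose! f' hf' using fun y hy => cauchy_map_iff_exists_tendsto.1 (hcauchy.cauchy_map (x := y) hy)
  have hunif := (hcauchy.tendstoUniformlyOn_of_tendsto hf').tendstoUniformlyOnFilter.mono_right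
    (le_principal_iff.2 (ball_mem_nhds c (half_pos hρ)))
  refine (hasFDerivAt_of_tendstoUniformlyOnFilter (f := q) hunif ?_ ?_).differentiableAt
    |>.differentiableWithinAt
  · filter_upwards [hq.prod_mk (hU.mem_nhds hc)] with p hp
    exact (hp.1.differentiableAt (hU.mem_nhds hp.2)).hasFDerivAt
  · filter_upwards [hU.mem_nhds hc] with y hy using hlim.tendsto_at hy

lemma tendstoUniformlyOn_slope_fderiv {s : Set E} (hR : 0 < R)
    (hf : ∀ y ∈ s, DifferentiableOn ℂ f (ball y R)) (hM : ∀ y ∈ s, ∀ z ∈ ball y R, ‖f z‖ ≤ M) :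
    TendstoUniformlyOn (fun (t : ℂ) y => t⁻¹ • (f (y + t • h) - f y)) (fun y => fderiv ℂ f y h)
      (𝓝[≠] 0) s := by
  rw [tendstoUniformlyOn_iff]
  intro ε hε
  have hsmall : ∀ᶠ t : ℂ in 𝓝 0, ‖t • h‖ < R :=
    (by fun_prop : Continuous fun t : ℂ => ‖t • h‖).tendsto' 0 0 (by simp) |>.eventually_lt_const hR
  have herror : ∀ᶠ t : ℂ in 𝓝 0, ‖t‖ * (4 * M / R ^ 2 * ‖h‖ ^ 2) < ε :=
    (by fun_prop : Continuous fun t : ℂ => ‖t‖ * (4 * M / R ^ 2 * ‖h‖ ^ 2)).tendsto' 0 0 (by simp)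
      |>.eventually_lt_const hε
  filter_upwards [self_mem_nhdsWithin, hsmall.filter_mono nhdsWithin_le_nhds,
    herror.filter_mono nhdsWithin_le_nhds] with t (ht : t ≠ 0) htR htε y hy
  have htaylor := norm_sub_sub_fderiv_le (hf y hy) (hM y hy) htR
  have hfactor : t⁻¹ • (f (y + t • h) - f y) - fderiv ℂ f y h
      = t⁻¹ • (f (y + t • h) - f y - fderiv ℂ f y (t • h)) := by
    rw [map_smul, smul_sub t⁻¹ _ (t • _), inv_smul_smul₀ ht]
  rw [dist_comm, dist_eq_norm, hfactor, norm_smul, norm_inv]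
  refine lt_of_le_of_lt ?_ htε
  rw [inv_mul_le_iff₀ (norm_pos_iff.2 ht)]
  refine htaylor.trans_eq ?_
  rw [norm_smul]
  ring

lemma differentiableOn_fderiv_apply [CompleteSpace F] (hU : IsOpen U)
    (hf : DifferentiableOn ℂ f U) (h : E) : DifferentiableOn ℂ (fun y => fderiv ℂ f y h) U := by
  intro c hc
  obtain ⟨R, hR, M, hball⟩ := exists_forall_ball_subset_norm_le hU hf.continuousOn hc
  have hsmall : ∀ᶠ t : ℂ in 𝓝[≠] 0, ‖t • h‖ < R :=
    ((by fun_prop : Continuous fun t : ℂ => ‖t • h‖).tendsto' 0 0 (by simp)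
      |>.eventually_lt_const hR).filter_mono nhdsWithin_le_nhds
  have hlim := tendstoUniformlyOn_slope_fderiv (h := h) hR
    (fun y hy => hf.mono (hball y hy).1) (fun y hy => (hball y hy).2)
  refine ((differentiableOn_of_tendstoUniformlyOn isOpen_ball ?_ hlim).differentiableAt
    (ball_mem_nhds c hR)).differentiableWithinAt
  filter_upwards [hsmall] with t ht
  refine DifferentiableOn.const_smul (.fun_sub (hf.fun_comp (by fun_prop) fun y hy => ?_)
    (hf.mono fun y hy => (hball y hy).1 (mem_ball_self hR))) _
  exact (hball y hy).1 (by simpa using ht)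

lemma differentiableOn_fderiv [CompleteSpace F] (hU : IsOpen U) (hf : DifferentiableOn ℂ f U) :
    DifferentiableOn ℂ (fderiv ℂ f) U := by
  intro c hc
  obtain ⟨R, hR, M, hball⟩ := exists_forall_ball_subset_norm_le hU hf.continuousOn hc
  have hM : 0 ≤ M :=
    (norm_nonneg _).trans ((hball c (mem_ball_self hR)).2 c (mem_ball_self hR))
  have hdiff (h : E) : DifferentiableOn ℂ (fun y => fderiv ℂ f y h) (ball c R) :=
    (differentiableOn_fderiv_apply hU hf h).mono fun y hy => (hball y hy).1 (mem_ball_self hR)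
  have hdiffAt (h : E) := (hdiff h).differentiableAt (ball_mem_nhds c hR)
  have hbound (h : E) : ∀ y ∈ ball c R, ‖fderiv ℂ f y h‖ ≤ 2 * M / R * ‖h‖ := fun y hy =>
    (fderiv ℂ f y).le_of_opNorm_le
      (norm_fderiv_le_of_norm_le hR (hf.mono (hball y hy).1) (hball y hy).2) h
  let D : E →L[ℂ] E →L[ℂ] F := LinearMap.mkContinuous
    { toFun := fun h => fderiv ℂ (fun y => fderiv ℂ f y h) c
      map_add' := fun h₁ h₂ => by
        simp only [map_add, fderiv_fun_add (hdiffAt h₁) (hdiffAt h₂)]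
      map_smul' := fun t h => by
        simp only [map_smul, fderiv_fun_const_smul (hdiffAt h), RingHom.id_apply] }
    (2 * (2 * M / R) / R) fun h =>
      (norm_fderiv_le_of_norm_le hR (hdiff h) (hbound h)).trans_eq (by ring)
  refine (hasFDerivAt_of_norm_sub_sub_le (A := D.flip) (C := 4 * (2 * M / R) / R ^ 2) hR
    fun k hk => ?_).differentiableAt.differentiableWithinAt
  refine ContinuousLinearMap.opNorm_le_bound _ (by positivity) fun h => ?_
  exact (norm_sub_sub_fderiv_le (hdiff h) (hbound h) hk).trans_eq (by ring)

lemma contDiffOn_of_differentiableOn_of_isOpen [CompleteSpace F] (hU : IsOpen U)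
    (hf : DifferentiableOn ℂ f U) (n : ℕ) : ContDiffOn ℂ n f U := by
  refine contDiffOn_of_differentiableOn fun k _ => ?_
  induction k with
  | zero =>
    rw [iteratedFDerivWithin_zero_eq_comp]
    exact (continuousMultilinearCurryFin0 ℂ E F).symm.comp_differentiableOn_iff.2 hf
  | succ k ih =>
    rw [iteratedFDerivWithin_succ_eq_comp_left]
    have hstep : DifferentiableOn ℂ (fderivWithin ℂ (iteratedFDerivWithin ℂ k f U) U) U :=
      (differentiableOn_fderiv hU (ih ((Nat.cast_le.2 k.le_succ).trans ‹_›))).congr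
        fun y hy => fderivWithin_of_isOpen hU hy
    fun_prop

lemma iteratedFDeriv_const_eq_iteratedDeriv_comp_smul [CompleteSpace F] (hU : IsOpen U)
    (h0 : (0 : E) ∈ U) (hf : DifferentiableOn ℂ f U) (n : ℕ) (x : E) :
    iteratedFDeriv ℂ n f 0 (fun _ => x) = iteratedDeriv n (fun ζ : ℂ => f (ζ • x)) 0 := by
  let line : ℂ →L[ℂ] E := (ContinuousLinearMap.id ℂ ℂ).smulRight x
  have hline : line 0 ∈ U := by rwa [map_zero]
  have hopen : IsOpen (line ⁻¹' U) := hU.preimage line.continuous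
  have hcomp := line.iteratedFDerivWithin_comp_right
    (contDiffOn_of_differentiableOn_of_isOpen hU hf n) hU.uniqueDiffOn hopen.uniqueDiffOn hline
    (i := n) le_rfl
  rw [iteratedFDerivWithin_of_isOpen n hopen hline, iteratedFDerivWithin_of_isOpen n hU hline,
    map_zero] at hcomp
  calc iteratedFDeriv ℂ n f 0 (fun _ => x)
      = (iteratedFDeriv ℂ n f 0).compContinuousLinearMap (fun _ => line) (fun _ => 1) := by
        simp [line]
    _ = iteratedFDeriv ℂ n (f ∘ line) 0 (fun _ => 1) := by rw [hcomp]
    _ = iteratedDeriv n (fun ζ : ℂ => f (ζ • x)) 0 := iteratedDeriv_eq_iteratedFDeriv.symm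

end HolomorphicMap

section UnitBall

variable {E F : Type*} [NormedAddCommGroup E] [NormedSpace ℂ E] [NormedAddCommGroup F]
  [NormedSpace ℂ F] {f : E → F} {u x : E} {m : ℕ}

lemma exists_norm_eq_one_eq_smul (hx : x ≠ 0) : ∃ u : E, ‖u‖ = 1 ∧ x = (‖x‖ : ℂ) • u := by
  have hnorm : (‖x‖ : ℂ) ≠ 0 := Complex.ofReal_ne_zero.2 (norm_ne_zero_iff.2 hx)
  exact ⟨(‖x‖ : ℂ)⁻¹ • x, norm_smul_inv_norm hx, (smul_inv_smul₀ hnorm x).symm⟩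

lemma smul_mem_ball_iff (hu : ‖u‖ = 1) {ζ : ℂ} {R : ℝ} : ζ • u ∈ ball (0 : E) R ↔ ζ ∈ ball 0 R := by
  simp only [mem_ball_zero_iff, norm_smul, hu, mul_one]

lemma differentiableOn_comp_smul (hf : DifferentiableOn ℂ f (ball 0 1)) (hu : ‖u‖ = 1) :
    DifferentiableOn ℂ (fun ζ : ℂ => f (ζ • u)) (ball 0 1) :=
  hf.fun_comp (by fun_prop) fun _ hζ => (smul_mem_ball_iff hu).2 hζ

lemma norm_le_norm_pow_of_iteratedDeriv_eq_zero [CompleteSpace F] {φ : ℂ → F}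
    (hφ : DifferentiableOn ℂ φ (ball 0 1)) (hmaps : MapsTo φ (ball 0 1) (closedBall 0 1))
    (hzero : ∀ j < m, iteratedDeriv j φ 0 = 0) {z : ℂ} (hz : z ∈ ball (0 : ℂ) 1) :
    ‖φ z‖ ≤ ‖z‖ ^ m := by
  obtain _ | n := m
  · simpa using hmaps hz
  have hφ0 : φ 0 = 0 := by simpa using hzero 0 n.succ_pos
  have hanalytic : AnalyticAt ℂ φ 0 := hφ.analyticAt (ball_mem_nhds _ one_pos)
  obtain ⟨ψ, hψ, hφψ⟩ := (natCast_le_analyticOrderAt hanalytic).1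
    ((natCast_le_analyticOrderAt_iff_iteratedDeriv_eq_zero hanalytic).2 hzero)
  simp only [sub_zero] at hφψ
  have hlittleO : φ =o[nhds 0] fun w => ‖w‖ ^ n := by
    have hpow : (fun w : ℂ => w ^ (n + 1) • ψ w) =o[nhds 0] fun w => w ^ n • (1 : ℂ) :=
      (Asymptotics.isLittleO_pow_pow n.lt_succ_self).smul_isBigO
        (hψ.continuousAt.isBigO_one ℂ)
    simpa only [smul_eq_mul, mul_one, norm_pow] using
      (hpow.congr' (hφψ.mono fun _ h => h.symm) .rfl).norm_right
  have hschwarz := Complex.dist_le_mul_div_pow_of_mapsTo_ball_of_isLittleO hφ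
    (by rwa [hφ0]) (by simpa [hφ0] using hlittleO) hz
  simpa [hφ0] using hschwarz

lemma norm_le_norm_pow_of_iteratedFDeriv_eq_zero [CompleteSpace F]
    (hf : DifferentiableOn ℂ f (ball 0 1)) (hmaps : MapsTo f (ball 0 1) (closedBall 0 1))
    (hzero : ∀ j < m, iteratedFDeriv ℂ j f 0 = 0) (hx : x ∈ ball (0 : E) 1) :
    ‖f x‖ ≤ ‖x‖ ^ m := by
  obtain rfl | hx0 := eq_or_ne x 0
  · obtain _ | n := m
    · simpa using hmaps hx
    · simpa using congrArg (fun T => ‖T 0‖) (hzero 0 n.succ_pos)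
  obtain ⟨u, hu, hxu⟩ := exists_norm_eq_one_eq_smul hx0
  have hslice := norm_le_norm_pow_of_iteratedDeriv_eq_zero (m := m) (z := ‖x‖)
    (differentiableOn_comp_smul hf hu)
    (fun ζ hζ => hmaps ((smul_mem_ball_iff hu).2 hζ)) (fun j hj => ?_) (by simpa using hx)
  · simpa only [← hxu, Complex.norm_real, norm_norm] using hslice
  · rw [← iteratedFDeriv_const_eq_iteratedDeriv_comp_smul isOpen_ball (mem_ball_self one_pos) hf,
      hzero j hj, zero_apply]

end UnitBall

/-! ### Mappings of one-dimensional type -/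

section OneDimensionalType

lemma hasSum_coe_add_mul_pow_add {r : ℝ} (hr : ‖r‖ < 1) (N : ℕ) :
    HasSum (fun s : ℕ => ((N + s : ℕ) : ℝ) * r ^ (N + s))
      (r ^ N * (N * (1 - r) + r) / (1 - r) ^ 2) := by
  have hne : 1 - r ≠ 0 := sub_ne_zero.2 fun h => by simp [← h] at hr
  have hsum := ((hasSum_coe_mul_geometric_of_norm_lt_one hr).add
    ((hasSum_geometric_of_norm_lt_one hr).mul_left (N : ℝ))).mul_left (r ^ N)
  have hvalue : r ^ N * (N * (1 - r) + r) / (1 - r) ^ 2 =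
      r ^ N * (r / (1 - r) ^ 2 + N * (1 - r)⁻¹) := by
    field_simp
    ring
  rw [hvalue]
  refine hsum.congr_fun fun s => ?_
  push_cast
  ring

variable {X : Type*} [NormedAddCommGroup X] [NormedSpace ℂ X] {a : X} {f g : X → ℂ}
  {F G W : X → X} {u x y : X} {s N : ℕ} {t : ℝ}

/-- `F` is a biholomorphic mapping of one-dimensional type on the unit ball: it maps every complex
line through the origin into a parallel line through `a`. -/
structure IsOneDimBiholo (a : X) (f : X → ℂ) (F : X → X) : Prop where
  differentiableOn_factor : DifferentiableOn ℂ f (ball 0 1)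
  apply_eq : ∀ x ∈ ball (0 : X) 1, F x = a + f x • x
  isBiholoOn : IsBiholoOn F (ball 0 1)

namespace IsOneDimBiholo

lemma apply_zero (hF : IsOneDimBiholo a f F) : F 0 = a := by
  rw [hF.apply_eq 0 (mem_ball_self one_pos), smul_zero, add_zero]

lemma apply_smul (hF : IsOneDimBiholo a f F) (hu : ‖u‖ = 1) {ζ : ℂ} (hζ : ζ ∈ ball (0 : ℂ) 1) :
    F (ζ • u) = a + (f (ζ • u) * ζ) • u := by
  rw [hF.apply_eq _ ((smul_mem_ball_iff hu).2 hζ), smul_smul]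

lemma isUnivalentDisc_slice (hF : IsOneDimBiholo a f F) (hu : ‖u‖ = 1) :
    IsUnivalentDisc fun ζ : ℂ => f (ζ • u) * ζ := by
  have hdiff : DifferentiableOn ℂ (fun ζ : ℂ => f (ζ • u) * ζ) (ball 0 1) :=
    (differentiableOn_comp_smul hF.differentiableOn_factor hu).fun_mul differentiableOn_id
  obtain ⟨ℓ, -, hℓ⟩ := exists_dual_vector ℂ u (by simp [hu])
  obtain ⟨-, -, k, hk, hkF⟩ := hF.isBiholoOn
  have hinv : ∀ ζ ∈ ball (0 : ℂ) 1, ℓ (k (a + (f (ζ • u) * ζ) • u)) = ζ := fun ζ hζ => by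
    rw [← hF.apply_smul hu hζ, hkF _ ((smul_mem_ball_iff hu).2 hζ), map_smul, hℓ, hu]
    simp
  refine ⟨⟨hdiff, LeftInvOn.injOn (f₁' := fun η => ℓ (k (a + η • u))) hinv,
    fun η => ℓ (k (a + η • u)), ?_, hinv⟩, mul_zero _⟩
  refine ℓ.differentiable.comp_differentiableOn (hk.fun_comp (by fun_prop) ?_)
  rintro _ ⟨ζ, hζ, rfl⟩
  exact ⟨ζ • u, (smul_mem_ball_iff hu).2 hζ, hF.apply_smul hu hζ⟩

lemma deriv_slice (hF : IsOneDimBiholo a f F) (hu : ‖u‖ = 1) :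
    deriv (fun ζ : ℂ => f (ζ • u) * ζ) 0 = f 0 := by
  have hslice : DifferentiableAt ℂ (fun ζ : ℂ => f (ζ • u)) 0 :=
    (differentiableOn_comp_smul hF.differentiableOn_factor hu).differentiableAt
      (ball_mem_nhds _ one_pos)
  simpa using (hslice.hasDerivAt.fun_mul (hasDerivAt_id' (0 : ℂ))).deriv

lemma norm_apply_le (hF : IsOneDimBiholo a f F) (hy : ‖y‖ ≤ t) (ht : t < 1) :
    ‖F y‖ ≤ ‖a‖ + ‖f 0‖ * (t / (1 - t) ^ 2) := by
  have ht0 : 0 ≤ t := (norm_nonneg _).trans hy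
  have hy1 : ‖y‖ < 1 := hy.trans_lt ht
  rw [hF.apply_eq y (mem_ball_zero_iff.2 hy1)]
  refine norm_add_le_of_le le_rfl ?_
  obtain rfl | hy0 := eq_or_ne y 0
  · rw [smul_zero, norm_zero]
    positivity
  obtain ⟨u, hu, hyu⟩ := exists_norm_eq_one_eq_smul hy0
  have hgrowth := (hF.isUnivalentDisc_slice hu).norm_apply_le (z := ‖y‖) (by simpa using hy1)
  rw [hF.deriv_slice hu, ← hyu, norm_mul, Complex.norm_real, norm_norm, ← norm_smul] at hgrowth
  refine hgrowth.trans ?_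
  gcongr

lemma exists_eq_smul_of_apply_eq (hF : IsOneDimBiholo a f F) (hy : y ∈ ball (0 : X) 1) {c : ℂ}
    (hFy : F y = a + c • u) : ∃ b : ℂ, y = b • u := by
  obtain rfl | hy0 := eq_or_ne y 0
  · exact ⟨0, (zero_smul ℂ u).symm⟩
  rw [hF.apply_eq y hy, add_right_inj] at hFy
  have hfy : f y ≠ 0 := by
    intro hfy
    refine hy0 (hF.isBiholoOn.2.1 hy (mem_ball_self one_pos) ?_)
    rw [hF.apply_zero, hF.apply_eq y hy, hfy, zero_smul, add_zero]
  exact ⟨(f y)⁻¹ * c, by rw [mul_smul, ← hFy, inv_smul_smul₀ hfy]⟩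

lemma image_ne_univ [Nontrivial X] (hF : IsOneDimBiholo a f F) : F '' ball 0 1 ≠ univ := by
  intro huniv
  obtain ⟨x, hx⟩ := exists_ne (0 : X)
  obtain ⟨u, hu, -⟩ := exists_norm_eq_one_eq_smul hx
  refine (hF.isUnivalentDisc_slice hu).image_ne_univ (eq_univ_of_forall fun η => ?_)
  obtain ⟨y, hy, hFy⟩ : a + η • u ∈ F '' ball 0 1 := huniv ▸ mem_univ _
  obtain ⟨ζ, rfl⟩ := hF.exists_eq_smul_of_apply_eq hy hFy
  have hζ := (smul_mem_ball_iff hu).1 hy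
  rw [hF.apply_smul hu hζ, add_right_inj] at hFy
  exact ⟨ζ, hζ, smul_left_injective ℂ (norm_ne_zero_iff.1 (by simp [hu])) hFy⟩

lemma ball_subset_image (hF : IsOneDimBiholo a f F) :
    ball a (‖f 0‖ / 4) ⊆ F '' ball 0 1 := by
  intro y hy
  obtain hya | hya := eq_or_ne (y - a) 0
  · exact ⟨0, mem_ball_self one_pos, hF.apply_zero.trans (sub_eq_zero.1 hya).symm⟩
  obtain ⟨u, hu, hyu⟩ := exists_norm_eq_one_eq_smul hya
  have hmem : (‖y - a‖ : ℂ) ∈ ball 0 (‖deriv (fun ζ : ℂ => f (ζ • u) * ζ) 0‖ / 4) := by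
    simpa [hF.deriv_slice hu, dist_eq_norm] using hy
  obtain ⟨ζ, hζ, hηζ⟩ := (hF.isUnivalentDisc_slice hu).ball_norm_deriv_div_four_subset_image hmem
  refine ⟨ζ • u, (smul_mem_ball_iff hu).2 hζ, ?_⟩
  beta_reduce at hηζ
  rw [hF.apply_smul hu hζ, hηζ, ← hyu, add_sub_cancel]

lemma norm_div_four_le_infDist_frontier [Nontrivial X] (hF : IsOneDimBiholo a f F) :
    ‖f 0‖ / 4 ≤ infDist a (frontier (F '' ball 0 1)) := by
  let : NormedSpace ℝ X := NormedSpace.restrictScalars ℝ ℂ X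
  have hne : (frontier (F '' ball 0 1)).Nonempty :=
    nonempty_frontier_iff.2 ⟨(nonempty_ball.2 one_pos).image F, hF.image_ne_univ⟩
  refine (le_infDist hne).2 fun y hy => ?_
  by_contra! hlt
  exact hy.2 (interior_maximal hF.ball_subset_image isOpen_ball (mem_ball'.2 hlt))

lemma exists_isSchwarzMap_slice (hF : IsOneDimBiholo a f F)
    (hG : ∀ x ∈ ball (0 : X) 1, G x = a + g x • x) (hW : IsSchwarzMap W)
    (hGW : ∀ x ∈ ball (0 : X) 1, G x = F (W x)) (hu : ‖u‖ = 1) :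
    ∃ w : ℂ → ℂ, IsSchwarzMap w ∧ ∀ ζ ∈ ball (0 : ℂ) 1, W (ζ • u) = w ζ • u := by
  obtain ⟨ℓ, -, hℓ⟩ := exists_dual_vector ℂ u (by simp [hu])
  have hmem : ∀ ζ ∈ ball (0 : ℂ) 1, ζ • u ∈ ball (0 : X) 1 := fun ζ => (smul_mem_ball_iff hu).2
  have hWu : ∀ ζ ∈ ball (0 : ℂ) 1, W (ζ • u) = ℓ (W (ζ • u)) • u := by
    intro ζ hζ
    obtain ⟨b, hb⟩ := hF.exists_eq_smul_of_apply_eq (hW.mapsTo (hmem ζ hζ))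
      (c := g (ζ • u) * ζ) (u := u)
      (by rw [← hGW _ (hmem ζ hζ), hG _ (hmem ζ hζ), smul_smul])
    simp [hb, hℓ, hu]
  refine ⟨fun ζ => ℓ (W (ζ • u)), ⟨?_, fun ζ hζ => ?_, by simp [hW.apply_zero]⟩, hWu⟩
  · exact ℓ.differentiable.comp_differentiableOn (differentiableOn_comp_smul hW.differentiableOn hu)
  · rw [← smul_mem_ball_iff hu, ← hWu ζ hζ]
    exact hW.mapsTo (hmem ζ hζ)

lemma norm_iteratedFDeriv_le_of_norm_eq_one [CompleteSpace X] (hF : IsOneDimBiholo a f F)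
    (hg : DifferentiableOn ℂ g (ball 0 1)) (hG : ∀ x ∈ ball (0 : X) 1, G x = a + g x • x)
    (hGF : Subordinate G F) (hs : 0 < s) (hu : ‖u‖ = 1) :
    ‖(s.factorial : ℂ)⁻¹ • iteratedFDeriv ℂ s G 0 (fun _ => u)‖ ≤ s * ‖f 0‖ := by
  obtain ⟨W, hW, hWmaps, hW0, hGW⟩ := hGF
  obtain ⟨w, hw, hWw⟩ := hF.exists_isSchwarzMap_slice hG ⟨hW, hWmaps, hW0⟩ hGW hu
  have hφ := hF.isUnivalentDisc_slice hu
  have hGdiff : DifferentiableOn ℂ G (ball 0 1) :=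
    ((hg.fun_smul differentiableOn_id).const_add a).congr hG
  obtain ⟨h, hh⟩ : ∃ h : ℂ → ℂ, h = fun ζ => f (w ζ • u) * w ζ := ⟨_, rfl⟩
  have hhdiff : ContDiffAt ℂ s h 0 :=
    (hh ▸ hφ.differentiableOn.fun_comp hw.differentiableOn hw.mapsTo
      |>.analyticAt (ball_mem_nhds _ one_pos)).contDiffAt
  have hslice : (fun ζ : ℂ => G (ζ • u)) =ᶠ[nhds 0] fun ζ => a + h ζ • u := by
    filter_upwards [ball_mem_nhds (0 : ℂ) one_pos] with ζ hζ
    rw [hGW _ ((smul_mem_ball_iff hu).2 hζ), hWw ζ hζ, hF.apply_smul hu (hw.mapsTo hζ), hh]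
  have hderiv : iteratedFDeriv ℂ s G 0 (fun _ => u) = iteratedDeriv s h 0 • u := by
    rw [iteratedFDeriv_const_eq_iteratedDeriv_comp_smul isOpen_ball (mem_ball_self one_pos) hGdiff,
      hslice.iteratedDeriv_eq, iteratedDeriv_const_add hs, iteratedDeriv_smul_const hhdiff]
  calc ‖(s.factorial : ℂ)⁻¹ • iteratedFDeriv ℂ s G 0 (fun _ => u)‖
      = ‖taylorCoeff s h‖ := by
        rw [hderiv, smul_smul, norm_smul, hu, mul_one, ← div_eq_inv_mul, taylorCoeff]
    _ ≤ s * ‖f 0‖ := by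
        rw [hh, ← hF.deriv_slice hu]
        exact hφ.norm_taylorCoeff_comp_le hw s

lemma norm_iteratedFDeriv_le [CompleteSpace X] (hF : IsOneDimBiholo a f F)
    (hg : DifferentiableOn ℂ g (ball 0 1)) (hG : ∀ x ∈ ball (0 : X) 1, G x = a + g x • x)
    (hGF : Subordinate G F) (hs : 0 < s) (x : X) :
    ‖(s.factorial : ℂ)⁻¹ • iteratedFDeriv ℂ s G 0 (fun _ => x)‖ ≤ ‖f 0‖ * (s * ‖x‖ ^ s) := by
  obtain rfl | hx := eq_or_ne x 0
  · rw [(iteratedFDeriv ℂ s G 0).map_coord_zero ⟨0, hs⟩ rfl, smul_zero, norm_zero]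
    positivity
  obtain ⟨u, hu, hxu⟩ := exists_norm_eq_one_eq_smul hx
  have hscale := (iteratedFDeriv ℂ s G 0).map_smul_univ (fun _ => (‖x‖ : ℂ)) (fun _ => u)
  simp only [← hxu, Finset.prod_const, Finset.card_univ, Fintype.card_fin] at hscale
  rw [hscale, smul_comm, norm_smul, norm_pow, Complex.norm_real, norm_norm]
  calc _ ≤ ‖x‖ ^ s * (s * ‖f 0‖) := by
        gcongr
        exact hF.norm_iteratedFDeriv_le_of_norm_eq_one hg hG hGF hs hu
    _ = ‖f 0‖ * (s * ‖x‖ ^ s) := by ring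

lemma summable_norm_iteratedFDeriv_and_tsum_le [CompleteSpace X] (hF : IsOneDimBiholo a f F)
    (hg : DifferentiableOn ℂ g (ball 0 1)) (hG : ∀ x ∈ ball (0 : X) 1, G x = a + g x • x)
    (hGF : Subordinate G F) (hN : 0 < N) (hx : ‖x‖ < 1) :
    Summable (fun s : ℕ =>
      ‖((N + s).factorial : ℂ)⁻¹ • iteratedFDeriv ℂ (N + s) G 0 (fun _ => x)‖) ∧
    ∑' s : ℕ, ‖((N + s).factorial : ℂ)⁻¹ • iteratedFDeriv ℂ (N + s) G 0 (fun _ => x)‖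
      ≤ ‖f 0‖ * (‖x‖ ^ N * (N * (1 - ‖x‖) + ‖x‖) / (1 - ‖x‖) ^ 2) := by
  have hcoeff (s : ℕ) := hF.norm_iteratedFDeriv_le hg hG hGF (Nat.add_pos_left hN s) x
  have hmajorant := (hasSum_coe_add_mul_pow_add (r := ‖x‖) (by rwa [norm_norm]) N).mul_left ‖f 0‖
  have hsummable := hmajorant.summable.of_nonneg_of_le (fun _ => norm_nonneg _) hcoeff
  exact ⟨hsummable, hasSum_le hcoeff hsummable.hasSum hmajorant⟩

lemma norm_apply_le_of_subordinate (hF : IsOneDimBiholo a f F) (hGF : Subordinate G F)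
    (hy : ‖y‖ ≤ t) (ht : t < 1) : ‖G y‖ ≤ ‖a‖ + ‖f 0‖ * (t / (1 - t) ^ 2) := by
  obtain ⟨W, hW, hWmaps, hW0, hGW⟩ := hGF
  have hy1 : ‖y‖ < 1 := hy.trans_lt ht
  rw [hGW y (mem_ball_zero_iff.2 hy1)]
  exact hF.norm_apply_le ((IsSchwarzMap.norm_apply_le ⟨hW, hWmaps, hW0⟩ hy1).trans hy) ht

end IsOneDimBiholo

end OneDimensionalType

end BohrRogosinski

/-- **Bohr–Rogosinski inequality.** Let `F(x) = a + f(x)·x` be biholomorphic on the unit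
ball `𝔹` of a complex Banach space and let `G(x) = a + g(x)·x` be subordinate to `F`. Let
`m, N ≥ 1`, let `V` be a Schwarz mapping such that `0` is a zero of order `m` of `V`, and
let `P_s(x) = (1/s!)·DˢG(0)(x,…,x)`. If `r ∈ (0,1)` satisfies
`4r^m/(1−r^m)² + 4r^N(N(1−r)+r)/(1−r)² ≤ 1`, then for every `x` with `‖x‖ = r`,
`‖G(V(x))‖ + Σ_{s≥N} ‖P_s(x)‖ ≤ ‖F(0)‖ + dist(F(0), ∂F(𝔹))`. -/
theorem stmt11 {X : Type*} [NormedAddCommGroup X] [NormedSpace ℂ X] [CompleteSpace X]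
    (a : X) (f g : X → ℂ)
    (hf : DifferentiableOn ℂ f (ball (0 : X) 1))
    (hg : DifferentiableOn ℂ g (ball (0 : X) 1))
    (F G : X → X)
    (hF : ∀ x ∈ ball (0 : X) 1, F x = a + f x • x)
    (hG : ∀ x ∈ ball (0 : X) 1, G x = a + g x • x)
    (hbi : IsBiholoOn F (ball (0 : X) 1))
    (hsub : Subordinate G F)
    (m N : ℕ) (hm : 1 ≤ m) (hN : 1 ≤ N)
    (V : X → X) (hV : DifferentiableOn ℂ V (ball (0 : X) 1))
    (hVmaps : Set.MapsTo V (ball (0 : X) 1) (ball (0 : X) 1))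
    (hVzero : ∀ j < m, iteratedFDeriv ℂ j V 0 = 0)
    (r : ℝ) (hr : r ∈ Set.Ioo (0 : ℝ) 1)
    (hineq : 4 * r ^ m / (1 - r ^ m) ^ 2
        + 4 * r ^ N * ((N : ℝ) * (1 - r) + r) / (1 - r) ^ 2 ≤ 1)
    (x : X) (hx : ‖x‖ = r) :
    Summable (fun s : ℕ =>
        ‖(((N + s).factorial : ℂ))⁻¹ • iteratedFDeriv ℂ (N + s) G 0 (fun _ => x)‖) ∧
    ‖G (V x)‖ +
        ∑' s : ℕ, ‖(((N + s).factorial : ℂ))⁻¹ • iteratedFDeriv ℂ (N + s) G 0 (fun _ => x)‖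
      ≤ ‖F 0‖ + infDist (F 0) (frontier (F '' ball (0 : X) 1)) := by
  subst hx
  have hF' : BohrRogosinski.IsOneDimBiholo a f F := ⟨hf, hF, hbi⟩
  have : Nontrivial X := ⟨x, 0, norm_pos_iff.1 hr.1⟩
  obtain ⟨hsummable, htail⟩ := hF'.summable_norm_iteratedFDeriv_and_tsum_le hg hG hsub hN hr.2
  have hVx : ‖V x‖ ≤ ‖x‖ ^ m := BohrRogosinski.norm_le_norm_pow_of_iteratedFDeriv_eq_zero hV
    (hVmaps.mono_right ball_subset_closedBall) hVzero (mem_ball_zero_iff.2 hr.2)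
  have hgrowth := hF'.norm_apply_le_of_subordinate hsub hVx
    (pow_lt_one₀ hr.1.le hr.2 (Nat.one_le_iff_ne_zero.1 hm))
  have hkoebe := hF'.norm_div_four_le_infDist_frontier
  have hradius := mul_le_mul_of_nonneg_left hineq (by positivity : 0 ≤ ‖f 0‖ / 4)
  rw [hF'.apply_zero]
  refine ⟨hsummable, ?_⟩
  calc _ ≤ ‖a‖ + ‖f 0‖ / 4 * (4 * ‖x‖ ^ m / (1 - ‖x‖ ^ m) ^ 2
          + 4 * ‖x‖ ^ N * (N * (1 - ‖x‖) + ‖x‖) / (1 - ‖x‖) ^ 2) := by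
        refine (add_le_add hgrowth htail).trans_eq ?_
        ring
    _ ≤ ‖a‖ + infDist a (frontier (F '' ball 0 1)) := by linarith
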